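/- arXiv:1902.02818 — 2 statements merged into one kernel-verified Lean document; each statement's English description precedes it below -/
import Mathlib

section
/- Let α ∈ (0,1/2). There exists a constant C_α > 0 such that for every g ∈ L²(0,1) and every v ∈ L²(0,1) with N_α(v) < ∞ one has |∫₀¹ g(x) · conj(v(x)) dx| ≤ C_α ‖I^α g‖_{L²(0,1)} N_α(v). (Writing f = I^α g, so that g = ∂^α f, this says that the Riemann–Liouville derivative ∂^α extends to a bounded linear operator from L²(0,1) to the dual space H^{−α}(0,1).) -/
/-!
The pairing `∫ g conj v` is recovered as a limit of pairings of `I^α g` with smoothed right-sided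
fractional derivatives of `v`; no Fourier transform is needed.

Extend `g` and `v` by zero to functions `G`, `U` on `ℝ`. On `(0,1]`, `Γ(α) I^α g` is
`F(x) = ∫ G(x - s) dν(s)` with `dν = s^(α-1) ds` on `(0,1]`. For `ε > 0` let
`dκ = (t + ε)^(-1-α) dt` on `(0,∞)` and `H(x) = ∫ (U(x) - U(x + t)) dκ(t)`, a smoothed multiple of
the Marchaud derivative of `U`.

* *Pairing.* By Fubini, with `φ(r) = ∫ G(x) conj U(x + r) dx`, the integral `∫ F conj H` is
  `∫∫ (φ(s) - φ(s + t)) dν(s) dκ(t)`. Since `ν * κ` can be computed in closed form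
  (`conv_sing_kap`), this is `∫_{r>0} k_ε(r) φ(r) dr` with
  `k_ε(r) = ε^(1-α) r^(α-1) / (α (r + ε))` (`integral_prod_sing_kap`). The `k_ε` are dilates of the
  positive integrable function `k_1`, and `φ` is continuous, so as `ε → 0` the limit is a positive
  multiple of `φ(0) = ∫ g conj v` (`tendsto_integral_kerK`).
* *Bound on `H`.* The identity `‖∫ a‖² = M ∫ ‖a‖² - (1/2) ∫∫ ‖a(t) - a(s)‖²` for a measure of mass
  `M` turns `∫ |H|²` into a difference of two terms, both blowing up as `ε → 0`, whose difference
  is at most a constant times `∫_{r>0} r^(-1-2α) ‖U(· + r) - U‖² dr` (`lintegral_sq_le`).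
* *Sobolev norm.* That energy of the zero extension is the Gagliardo seminorm on `(0,1)` plus the
  two boundary terms `∫ |v|² x^(-2α)` and `∫ |v|² (1-x)^(-2α)`, which for `α < 1/2` are controlled
  by a fractional Hardy inequality (`exists_hardy`).

Cauchy–Schwarz for `∫ F conj H` and `ε → 0` give the result (`duality_bound`, `pairing_sq_le`).
-/

open MeasureTheory Set Filter

/-- Riemann–Liouville fractional integral `I^γ f` on `(0,1)` (complex-valued),
with the convention `I⁰ f = f`. -/
noncomputable def fracInt (γ : ℝ) (f : ℝ → ℂ) (x : ℝ) : ℂ :=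
  if γ = 0 then f x
  else ((Real.Gamma γ)⁻¹ : ℝ) • ∫ p in (0:ℝ)..x, (((x - p) ^ (γ - 1) : ℝ) : ℂ) * f p

/-- `f` is square integrable (and a.e. strongly measurable) on `(0,1)`: `f ∈ L²(0,1)`. -/
def SqIntOn (f : ℝ → ℂ) : Prop :=
  MeasureTheory.AEStronglyMeasurable f (MeasureTheory.volume.restrict (Set.Ioc (0:ℝ) 1)) ∧
  MeasureTheory.IntegrableOn (fun x => ‖f x‖ ^ 2) (Set.Ioc (0:ℝ) 1)

/-- `(u, w)` lies in the graph of `A = (d/dx) D^α`:  `u` is absolutely continuous on `[0,1]`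
with `u' = I^α w` a.e., `u(1) = 0`, and `w ∈ L²(0,1)`; then `A u = w`. -/
def InGraphA (α : ℝ) (u w : ℝ → ℂ) : Prop :=
  u 1 = 0 ∧ SqIntOn w ∧
  IntervalIntegrable (fracInt α w) MeasureTheory.volume 0 1 ∧
  ∀ x ∈ Set.Icc (0:ℝ) 1, u x = u 0 + ∫ t in (0:ℝ)..x, fracInt α w t

/-- Square of the `L²(0,1)` norm. -/
noncomputable def L2normSq (f : ℝ → ℂ) : ℝ := ∫ x in (0:ℝ)..1, ‖f x‖ ^ 2

/-- Square of the Gagliardo seminorm of order `s` on `(0,1)`. -/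
noncomputable def sobSeminormSq (s : ℝ) (u : ℝ → ℂ) : ℝ :=
  ∫ x in (0:ℝ)..1, ∫ y in (0:ℝ)..1, ‖u x - u y‖ ^ 2 / |x - y| ^ (1 + 2 * s)

/-- Square of the fractional Sobolev `H^s(0,1)` norm `N_s(u)`. -/
noncomputable def sobNormSq (s : ℝ) (u : ℝ → ℂ) : ℝ :=
  L2normSq u + sobSeminormSq s u

open scoped ENNReal Topology

/-! ### The variance inequality -/

lemma sq_enorm_eq (z : ℂ) : ‖z‖ₑ ^ 2 = ENNReal.ofReal (‖z‖ ^ 2) := by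
  rw [← ofReal_norm, ENNReal.ofReal_pow (norm_nonneg _)]

/-- The inequality form of the variance identity
`2 ‖∫ a‖² + ∫∫ ‖a(t) - a(s)‖² = 2 μ(T) ∫ ‖a‖²`. No integrability of `a` is needed in `[0,∞]`:
either `a` is in `L²`, or the right side is `∞`, or `μ = 0`. -/
lemma variance_le {T : Type*} [MeasurableSpace T] (μ : Measure T) [IsFiniteMeasure μ]
    (a : T → ℂ) (ha : Measurable a) :
    2 * ‖∫ t, a t ∂μ‖ₑ ^ 2 + ∫⁻ t, ∫⁻ s, ‖a t - a s‖ₑ ^ 2 ∂μ ∂μ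
      ≤ 2 * μ univ * ∫⁻ t, ‖a t‖ₑ ^ 2 ∂μ := by
  by_cases hμ : μ = 0
  · simp [hμ]
  by_cases hfin : ∫⁻ t, ‖a t‖ₑ ^ 2 ∂μ = ∞
  · rw [hfin, ENNReal.mul_top]
    · exact le_top
    · simpa using hμ
  have hmem : MemLp a 2 μ := by
    refine ⟨ha.aestronglyMeasurable, ?_⟩
    rw [eLpNorm_lt_top_iff_lintegral_rpow_enorm_lt_top (by norm_num) (by norm_num)]
    simpa using lt_top_iff_ne_top.2 hfin
  have hInt : Integrable a μ := hmem.integrable (by norm_num)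
  have hsq : Integrable (fun t => ‖a t‖ ^ 2) μ := hmem.integrable_norm_pow (by norm_num)
  have hcross : Integrable (fun z : T × T => a z.1 * (starRingEnd ℂ) (a z.2)) (μ.prod μ) :=
    hInt.mul_prod (g := fun t => (starRingEnd ℂ) (a t)) (by
      exact (RCLike.conjLIE (K := ℂ)).integrable_comp_iff.2 hInt)
  have h1 : Integrable (fun z : T × T => ‖a z.1‖ ^ 2) (μ.prod μ) := hsq.comp_fst μ
  have h2 : Integrable (fun z : T × T => ‖a z.2‖ ^ 2) (μ.prod μ) := hsq.comp_snd μ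
  have hid : ∀ z : T × T, ‖a z.1 - a z.2‖ ^ 2
      = ‖a z.1‖ ^ 2 + ‖a z.2‖ ^ 2 - 2 * (a z.1 * (starRingEnd ℂ) (a z.2)).re := by
    intro z
    rw [← Complex.normSq_eq_norm_sq, ← Complex.normSq_eq_norm_sq, ← Complex.normSq_eq_norm_sq,
      Complex.normSq_sub]
  have hdiff : Integrable (fun z : T × T => ‖a z.1 - a z.2‖ ^ 2) (μ.prod μ) := by
    simp_rw [hid]
    exact (h1.add h2).sub (hcross.re.const_mul 2)
  have hval : ∫ z, ‖a z.1 - a z.2‖ ^ 2 ∂(μ.prod μ)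
      = 2 * μ.real univ * ∫ t, ‖a t‖ ^ 2 ∂μ - 2 * ‖∫ t, a t ∂μ‖ ^ 2 := by
    simp_rw [hid]
    have i1 := integral_sub (h1.add h2) (hcross.re.const_mul 2)
    simp only [Pi.add_apply, RCLike.re_to_complex] at i1
    rw [i1, integral_add h1 h2, integral_const_mul, integral_fun_fst (f := fun t => ‖a t‖ ^ 2),
      integral_fun_snd (f := fun t => ‖a t‖ ^ 2)]
    have : ∫ z : T × T, (a z.1 * (starRingEnd ℂ) (a z.2)).re ∂(μ.prod μ)
        = ‖∫ t, a t ∂μ‖ ^ 2 := by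
      have h3 := integral_re hcross
      simp only [RCLike.re_to_complex] at h3
      rw [h3, integral_prod_mul (f := a) (g := fun t => (starRingEnd ℂ) (a t)), integral_conj,
        Complex.mul_conj, Complex.ofReal_re, Complex.normSq_eq_norm_sq]
    rw [this]
    simp only [smul_eq_mul]
    ring
  have e1 : ∫⁻ t, ‖a t‖ₑ ^ 2 ∂μ = ENNReal.ofReal (∫ t, ‖a t‖ ^ 2 ∂μ) := by
    rw [ofReal_integral_eq_lintegral_ofReal hsq (ae_of_all _ fun _ => by positivity)]
    simp_rw [sq_enorm_eq]
  have e2 : ∫⁻ t, ∫⁻ s, ‖a t - a s‖ₑ ^ 2 ∂μ ∂μ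
      = ENNReal.ofReal (∫ z, ‖a z.1 - a z.2‖ ^ 2 ∂(μ.prod μ)) := by
    rw [ofReal_integral_eq_lintegral_ofReal hdiff (ae_of_all _ fun _ => by positivity),
      lintegral_prod]
    · simp_rw [sq_enorm_eq]
    · exact hdiff.aestronglyMeasurable.aemeasurable.ennreal_ofReal
  have e3 : μ univ = ENNReal.ofReal (μ.real univ) := by simp
  have i1 : 0 ≤ ∫ z, ‖a z.1 - a z.2‖ ^ 2 ∂(μ.prod μ) := integral_nonneg fun _ => by positivity
  rw [e1, e2, sq_enorm_eq, e3, show (2 : ℝ≥0∞) = ENNReal.ofReal 2 by simp,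
    ← ENNReal.ofReal_mul (by norm_num), ← ENNReal.ofReal_add (by positivity) i1,
    ← ENNReal.ofReal_mul (by norm_num), ← ENNReal.ofReal_mul (by positivity)]
  apply ENNReal.ofReal_le_ofReal
  rw [hval]
  linarith

/-- The squared `L²(ℝ)` modulus of continuity `‖U(· + r) - U‖²` at the shift `r`. -/
noncomputable def transSq (U : ℝ → ℂ) (r : ℝ) : ℝ≥0∞ := ∫⁻ x, ‖U (x + r) - U x‖ₑ ^ 2

lemma measurable_transSq {U : ℝ → ℂ} (hU : Measurable U) : Measurable (transSq U) := by
  unfold transSq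
  have : Measurable (fun z : ℝ × ℝ => ‖U (z.2 + z.1) - U z.2‖ₑ ^ 2) := by fun_prop
  exact this.lintegral_prod_right'

lemma transSq_sub (U : ℝ → ℂ) (s t : ℝ) :
    ∫⁻ x, ‖U (x + s) - U (x + t)‖ₑ ^ 2 = transSq U (s - t) := by
  unfold transSq
  rw [← lintegral_add_right_eq_self (fun x => ‖U (x + (s - t)) - U x‖ₑ ^ 2) t]
  congr 1; ext x; congr 4; ring

lemma transSq_neg (U : ℝ → ℂ) (r : ℝ) : transSq U (-r) = transSq U r := by
  rw [show -r = 0 - r by ring, ← transSq_sub]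
  unfold transSq
  congr 1; ext x; rw [add_zero, enorm_sub_rev]

lemma sq_enorm_sub_le (a b : ℂ) : ‖a - b‖ₑ ^ 2 ≤ 2 * ‖a‖ₑ ^ 2 + 2 * ‖b‖ₑ ^ 2 := by
  rw [sq_enorm_eq, sq_enorm_eq, sq_enorm_eq, show (2 : ℝ≥0∞) = ENNReal.ofReal 2 by simp,
    ← ENNReal.ofReal_mul (by norm_num), ← ENNReal.ofReal_mul (by norm_num),
    ← ENNReal.ofReal_add (by positivity) (by positivity)]
  apply ENNReal.ofReal_le_ofReal
  have := norm_sub_le a b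
  nlinarith [norm_nonneg (a - b), norm_nonneg a, norm_nonneg b, sq_nonneg (‖a‖ - ‖b‖)]

lemma transSq_le {U : ℝ → ℂ} (hU : Measurable U) (r : ℝ) :
    transSq U r ≤ 4 * ∫⁻ x, ‖U x‖ₑ ^ 2 := by
  unfold transSq
  calc _ ≤ ∫⁻ x, (2 * ‖U (x + r)‖ₑ ^ 2 + 2 * ‖U x‖ₑ ^ 2) :=
        lintegral_mono fun x => sq_enorm_sub_le _ _
    _ = _ := by
      rw [lintegral_add_left (by fun_prop), lintegral_const_mul _ (by fun_prop),
        lintegral_const_mul _ (by fun_prop),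
        lintegral_add_right_eq_self (fun x => ‖U x‖ₑ ^ 2) r]
      ring

/-- `variance_le` for `a(t) = U(x) - U(x + t)`, integrated over `x`. -/
lemma variance_trans_le (μ : Measure ℝ) [IsFiniteMeasure μ] {U : ℝ → ℂ} (hU : Measurable U) :
    2 * (∫⁻ x, ‖∫ t, (U x - U (x + t)) ∂μ‖ₑ ^ 2) + ∫⁻ t, ∫⁻ s, transSq U (s - t) ∂μ ∂μ
      ≤ 2 * μ univ * ∫⁻ t, transSq U t ∂μ := by
  have m1 : Measurable (fun x => ‖∫ t, (U x - U (x + t)) ∂μ‖ₑ ^ 2) := by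
    have : StronglyMeasurable (fun z : ℝ × ℝ => U z.1 - U (z.1 + z.2)) := by
      apply Measurable.stronglyMeasurable; fun_prop
    exact (this.integral_prod_right' (ν := μ)).measurable.enorm.pow_const 2
  have m3 : Measurable (fun z : (ℝ × ℝ) × ℝ => ‖U (z.1.1 + z.2) - U (z.1.1 + z.1.2)‖ₑ ^ 2) := by
    fun_prop
  have m2 : Measurable
      (fun z : ℝ × ℝ => ∫⁻ s, ‖U (z.1 + s) - U (z.1 + z.2)‖ₑ ^ 2 ∂μ) :=
    m3.lintegral_prod_right'
  have e1 : ∫⁻ t, ∫⁻ s, transSq U (s - t) ∂μ ∂μ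
      = ∫⁻ x, ∫⁻ t, ∫⁻ s, ‖(U x - U (x + t)) - (U x - U (x + s))‖ₑ ^ 2 ∂μ ∂μ := by
    simp_rw [sub_sub_sub_cancel_left]
    symm
    rw [lintegral_lintegral_swap m2.aemeasurable]
    congr 1; ext t
    rw [lintegral_lintegral_swap]
    · congr 1; ext s
      rw [transSq_sub]
    · apply Measurable.aemeasurable; fun_prop
  have e2 : ∫⁻ t, transSq U t ∂μ = ∫⁻ x, ∫⁻ t, ‖U x - U (x + t)‖ₑ ^ 2 ∂μ := by
    rw [lintegral_lintegral_swap]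
    · congr 1; ext t
      unfold transSq
      congr 1; ext x; rw [enorm_sub_rev]
    · apply Measurable.aemeasurable; fun_prop
  rw [e1, e2, ← lintegral_const_mul _ m1, ← lintegral_add_left (m1.const_mul 2),
    ← lintegral_const_mul]
  · refine lintegral_mono fun x => ?_
    exact variance_le μ (fun t => U x - U (x + t)) (by fun_prop)
  · apply Measurable.lintegral_prod_right' (f := fun z : ℝ × ℝ => ‖U z.1 - U (z.1 + z.2)‖ₑ ^ 2)
    fun_prop

/-! ### Translation energy and the smoothed fractional derivative -/

/-- The kernel `(t + ε)^(-1-α)` on `t > 0`, extended by zero: the singular Marchaud kernel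
`t^(-1-α)` shifted by `ε` so as to be integrable. -/
noncomputable def kap (α ε : ℝ) : ℝ → ℝ := (Ioi (0:ℝ)).indicator fun t => (t + ε) ^ (-1 - α)

/-- The finite measure with density `kap α ε`. -/
noncomputable def kapMeasure (α ε : ℝ) : Measure ℝ :=
  volume.withDensity fun t => ENNReal.ofReal (kap α ε t)

lemma kap_of_pos {α ε t : ℝ} (ht : 0 < t) : kap α ε t = (t + ε) ^ (-1 - α) :=
  indicator_of_mem (mem_Ioi.2 ht) _

lemma kap_of_nonpos {α ε t : ℝ} (ht : t ≤ 0) : kap α ε t = 0 :=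
  indicator_of_notMem (by simpa using ht) _

lemma kap_nonneg {ε : ℝ} (α : ℝ) (hε : 0 < ε) (t : ℝ) : 0 ≤ kap α ε t := by
  rcases le_or_gt t 0 with h | h
  · rw [kap_of_nonpos h]
  · rw [kap_of_pos h]; positivity

lemma measurable_kap (α ε : ℝ) : Measurable (kap α ε) := by
  refine Measurable.indicator ?_ measurableSet_Ioi
  fun_prop

lemma integrableOn_kap {α ε : ℝ} (hα : 0 < α) (hε : 0 < ε) :
    IntegrableOn (fun t : ℝ => (t + ε) ^ (-1 - α)) (Ioi 0) := by
  have := integrableOn_Ioi_rpow_of_lt (a := -1 - α) (by linarith) hε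
  have h2 := ((measurePreserving_add_right (volume : Measure ℝ) ε).integrableOn_comp_preimage
    (measurableEmbedding_addRight ε)).2 this
  simpa [Function.comp_def] using h2

lemma integral_kap {α ε : ℝ} (hα : 0 < α) (hε : 0 < ε) :
    ∫ t, kap α ε t = ε ^ (-α) / α := by
  unfold kap
  have h2 := (measurePreserving_add_right (volume : Measure ℝ) ε).setIntegral_preimage_emb
    (measurableEmbedding_addRight ε) (fun t : ℝ => t ^ (-1 - α)) (Ioi ε)
  simp only [preimage_add_const_Ioi, sub_self] at h2
  rw [integral_indicator measurableSet_Ioi, h2,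
    integral_Ioi_rpow_of_lt (by linarith) hε]
  rw [show -1 - α + 1 = -α by ring, neg_div_neg_eq]

lemma integrable_kap {α ε : ℝ} (hα : 0 < α) (hε : 0 < ε) : Integrable (kap α ε) :=
  (integrable_indicator_iff measurableSet_Ioi).2 (integrableOn_kap hα hε)

lemma isFiniteMeasure_kap {α ε : ℝ} (hα : 0 < α) (hε : 0 < ε) :
    IsFiniteMeasure (kapMeasure α ε) :=
  isFiniteMeasure_withDensity_ofReal (integrable_kap hα hε).2

lemma lintegral_kapMeasure {α ε : ℝ} {f : ℝ → ℝ≥0∞} (hf : Measurable f) :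
    ∫⁻ t, f t ∂(kapMeasure α ε) = ∫⁻ t, ENNReal.ofReal (kap α ε t) * f t :=
  lintegral_withDensity_eq_lintegral_mul _ (measurable_kap α ε).ennreal_ofReal hf

/-- The convex function `x^(-1-α)` lies above its tangent at `R`. -/
lemma bernoulli_neg {α R s : ℝ} (hα : 0 < α) (hR : 0 < R) (hs : 0 < s) :
    R ^ (-1 - α) - (s + R) ^ (-1 - α) ≤ (1 + α) * s * R ^ (-2 - α) := by
  have hx : 0 < s / R := by positivity
  have h1 : s + R = R * (1 + s / R) := by field_simp; ring
  have h2 : (1 + s / R) ^ (-1 - α) = ((1 + s / R)⁻¹) ^ (1 + α) := by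
    rw [Real.inv_rpow (by positivity), ← Real.rpow_neg (by positivity)]; ring_nf
  have h3 : (1 + s / R)⁻¹ = 1 + (-(s / R) / (1 + s / R)) := by field_simp; ring
  have h5 : s / R / (1 + s / R) ≤ s / R := div_le_self hx.le (by linarith)
  have h6 : s / R / (1 + s / R) ≤ 1 := by rw [div_le_one (by positivity)]; linarith
  have h4 := one_add_mul_self_le_rpow_one_add (s := -(s / R) / (1 + s / R)) (p := 1 + α)
    (by rw [neg_div]; linarith) (by linarith)
  rw [← h3, ← h2, neg_div] at h4
  have h7 : 1 - (1 + α) * (s / R) ≤ (1 + s / R) ^ (-1 - α) := by nlinarith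
  rw [h1, Real.mul_rpow hR.le (by positivity)]
  have h8 : R ^ (-2 - α) = R ^ (-1 - α) / R := by
    rw [← Real.rpow_sub_one hR.ne']; ring_nf
  rw [h8]
  have h9 : 0 < R ^ (-1 - α) := by positivity
  have h10 : (1 + α) * s * (R ^ (-1 - α) / R) = R ^ (-1 - α) * ((1 + α) * (s / R)) := by
    field_simp
  rw [h10]
  nlinarith

/-- An `ε`-free bound, as a function of `s > 0`, for the defect
`kap s * (kap r - kap (s + r))`: on `s ≤ r` from the Bernoulli inequality, on `s > r` by dropping
the subtracted term. It is integrable in `s`, with integral a multiple of `r^(-1-2α)`. -/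
noncomputable def maj (α r s : ℝ) : ℝ :=
  (Ioc 0 r).indicator (fun s => (1 + α) * r ^ (-2 - α) * s ^ (-α)) s
    + (Ioi r).indicator (fun s => r ^ (-1 - α) * s ^ (-1 - α)) s

/-- After integration in `s` and against `‖U(· + r) - U‖²`, the two `kap`-terms are the two sides
of the variance inequality, which are individually unbounded as `ε → 0`; only the `ε`-free `maj`
survives their cancellation. -/
lemma kap_mul_le {α ε r : ℝ} (hα : 0 < α) (hε : 0 < ε) (hr : 0 < r) (s : ℝ) :
    kap α ε s * kap α ε r ≤ kap α ε s * kap α ε (s + r) + maj α r s := by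
  rcases le_or_gt s 0 with hs | hs
  · have h1 : s ∉ Ioc 0 r := fun h => absurd h.1 (not_lt.2 hs)
    have h2 : s ∉ Ioi r := fun h => absurd (hr.trans h) (not_lt.2 hs)
    simp [kap_of_nonpos hs, maj, h1, h2]
  rw [kap_of_pos hs, kap_of_pos hr, kap_of_pos (by linarith : 0 < s + r)]
  have k1 : (s + ε) ^ (-1 - α) ≤ s ^ (-1 - α) :=
    Real.rpow_le_rpow_of_nonpos hs (by linarith) (by linarith)
  have k2 : (r + ε) ^ (-1 - α) ≤ r ^ (-1 - α) :=
    Real.rpow_le_rpow_of_nonpos hr (by linarith) (by linarith)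
  have k3 : (r + ε) ^ (-2 - α) ≤ r ^ (-2 - α) :=
    Real.rpow_le_rpow_of_nonpos hr (by linarith) (by linarith)
  have p1 : 0 < (s + ε) ^ (-1 - α) := by positivity
  have p2 : 0 < (s + r + ε) ^ (-1 - α) := by positivity
  have p3 : 0 < (r + ε) ^ (-1 - α) := by positivity
  rcases le_or_gt s r with hsr | hsr
  · have h1 : s ∈ Ioc 0 r := ⟨hs, hsr⟩
    have h2 : s ∉ Ioi r := not_lt.2 hsr
    simp only [maj, h1, h2, indicator_of_mem, indicator_of_notMem, not_false_eq_true, add_zero]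
    have b := bernoulli_neg hα (by linarith : 0 < r + ε) hs
    rw [← add_assoc] at b
    have e : s ^ (-α) = s ^ (-1 - α) * s := by
      rw [← Real.rpow_add_one hs.ne']; ring_nf
    have : (s + ε) ^ (-1 - α) * ((r + ε) ^ (-1 - α) - (s + r + ε) ^ (-1 - α))
        ≤ s ^ (-1 - α) * ((1 + α) * s * r ^ (-2 - α)) := by
      calc _ ≤ (s + ε) ^ (-1 - α) * ((1 + α) * s * r ^ (-2 - α)) := by
            gcongr
            exact b.trans (by gcongr)
        _ ≤ _ := by gcongr
    rw [e]
    linarith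
  · have h1 : s ∉ Ioc 0 r := fun h => absurd h.2 (not_le.2 hsr)
    have h2 : s ∈ Ioi r := hsr
    simp only [maj, h1, h2, indicator_of_mem, indicator_of_notMem, not_false_eq_true, zero_add]
    have : (s + ε) ^ (-1 - α) * (r + ε) ^ (-1 - α) ≤ s ^ (-1 - α) * r ^ (-1 - α) := by gcongr
    nlinarith [mul_pos p1 p2]

lemma maj_nonneg {α r : ℝ} (hα : 0 < α) (hr : 0 < r) (s : ℝ) : 0 ≤ maj α r s := by
  unfold maj
  apply add_nonneg
  · apply indicator_nonneg
    intro s hs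
    have := hs.1
    positivity
  · apply indicator_nonneg
    intro s hs
    have : 0 < s := hr.trans hs
    positivity

lemma lintegral_maj {α r : ℝ} (hα : 0 < α) (hα1 : α < 1) (hr : 0 < r) :
    ∫⁻ s, ENNReal.ofReal (maj α r s)
      = ENNReal.ofReal ((1 + α) / (1 - α) + 1 / α) * ENNReal.ofReal (r ^ (-1 - 2 * α)) := by
  have i1 : IntegrableOn (fun s : ℝ => (1 + α) * r ^ (-2 - α) * s ^ (-α)) (Ioc 0 r) :=
    ((intervalIntegrable_iff_integrableOn_Ioc_of_le hr.le).1
      (intervalIntegral.intervalIntegrable_rpow' (by linarith))).const_mul _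
  have i2 : IntegrableOn (fun s : ℝ => r ^ (-1 - α) * s ^ (-1 - α)) (Ioi r) :=
    (integrableOn_Ioi_rpow_of_lt (by linarith) hr).const_mul _
  have j1 := (integrable_indicator_iff measurableSet_Ioc).2 i1
  have j2 := (integrable_indicator_iff measurableSet_Ioi).2 i2
  have j : Integrable (maj α r) := j1.add j2
  rw [← ofReal_integral_eq_lintegral_ofReal j (ae_of_all _ (maj_nonneg hα hr)),
    ← ENNReal.ofReal_mul (by have : 0 < 1 - α := by linarith
                             positivity)]
  congr 1
  unfold maj
  rw [integral_add j1 j2, integral_indicator measurableSet_Ioc, integral_indicator measurableSet_Ioi,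
    integral_const_mul, integral_const_mul, ← intervalIntegral.integral_of_le hr.le,
    integral_rpow (Or.inl (by linarith)), integral_Ioi_rpow_of_lt (by linarith) hr,
    Real.zero_rpow (by linarith : -α + 1 ≠ 0), sub_zero,
    show -1 - α + 1 = -α by ring, neg_div_neg_eq]
  have e1 : r ^ (-1 - 2 * α) = r ^ (-2 - α) * r ^ (-α + 1) := by
    rw [← Real.rpow_add hr]; ring_nf
  have e2 : r ^ (-1 - 2 * α) = r ^ (-1 - α) * r ^ (-α) := by
    rw [← Real.rpow_add hr]; ring_nf
  rw [add_mul ((1 + α) / (1 - α))]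
  nth_rewrite 1 [e1]
  rw [e2, show -α + 1 = 1 - α by ring]
  have : 1 - α ≠ 0 := by linarith
  field_simp

/-- The translation energy `∫_{r>0} ‖U(· + r) - U‖² r^(-1-2α) dr`, half of the squared Gagliardo
seminorm of `U` on the whole line. -/
noncomputable def energy (α : ℝ) (U : ℝ → ℂ) : ℝ≥0∞ :=
  ∫⁻ r in Ioi 0, transSq U r * ENNReal.ofReal (r ^ (-1 - 2 * α))

lemma two_mul_lintegral_Ioi_le {f : ℝ → ℝ≥0∞} (hf : ∀ r, f (-r) = f r) :
    2 * ∫⁻ r in Ioi 0, f r ≤ ∫⁻ r, f r := by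
  rw [← lintegral_add_compl (μ := volume) f (measurableSet_Ioi (a := (0:ℝ))), two_mul]
  refine add_le_add le_rfl ?_
  rw [compl_Ioi]
  have := (Measure.measurePreserving_neg (volume : Measure ℝ)).setLIntegral_comp_preimage_emb
    (MeasurableEquiv.neg ℝ).measurableEmbedding f (Iio (0:ℝ))
  simp only [hf] at this
  rw [show (Neg.neg ⁻¹' (Iio (0:ℝ)) : Set ℝ) = Ioi 0 by ext; simp] at this
  rw [this]
  exact lintegral_mono_set (Iio_subset_Iic_self (a := (0:ℝ)))

/-- The smoothed Marchaud derivative of `U` is bounded in `L²(ℝ)`, uniformly in `ε`, by the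
translation energy. The double integral of `variance_trans_le` is cancelled against the main part
of the right side; finiteness of `‖U‖²` makes the subtraction legitimate. -/
lemma lintegral_sq_le {α ε : ℝ} (hα : 0 < α) (hα1 : α < 1) (hε : 0 < ε) {U : ℝ → ℂ}
    (hU : Measurable U) (hU2 : ∫⁻ x, ‖U x‖ₑ ^ 2 ≠ ∞) :
    ∫⁻ x, ‖∫ t, (U x - U (x + t)) ∂(kapMeasure α ε)‖ₑ ^ 2
      ≤ ENNReal.ofReal ((1 + α) / (1 - α) + 1 / α) * energy α U := by
  have := isFiniteMeasure_kap hα hε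
  set k : ℝ → ℝ≥0∞ := fun t => ENNReal.ofReal (kap α ε t) with hk
  have mk : Measurable k := (measurable_kap α ε).ennreal_ofReal
  have mρ := measurable_transSq hU
  have main := variance_trans_le (kapMeasure α ε) hU
  set A : ℝ → ℝ≥0∞ := fun r => ∫⁻ t, k t * k (t + r) with hA
  have mA : Measurable A := by
    have : Measurable (fun z : ℝ × ℝ => k z.2 * k (z.2 + z.1)) := by fun_prop
    exact this.lintegral_prod_right'
  have hAeven : ∀ r, A (-r) = A r := by
    intro r
    simp only [hA]
    rw [← lintegral_add_right_eq_self _ r]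
    congr 1; ext t; rw [add_neg_cancel_right, mul_comm]
  have hfin : ∫⁻ t, ∫⁻ s, transSq U (s - t) ∂(kapMeasure α ε) ∂(kapMeasure α ε) ≠ ∞ := by
    refine ne_top_of_le_ne_top (b := ∫⁻ t, ∫⁻ s, 4 * (∫⁻ x, ‖U x‖ₑ ^ 2)
      ∂(kapMeasure α ε) ∂(kapMeasure α ε)) ?_ ?_
    · simp only [lintegral_const]
      finiteness
    · exact lintegral_mono fun t => lintegral_mono fun s => transSq_le hU _
  have e1 : ∫⁻ t, ∫⁻ s, transSq U (s - t) ∂(kapMeasure α ε) ∂(kapMeasure α ε)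
      = ∫⁻ r, transSq U r * A r := by
    have mρ2 : Measurable (fun z : ℝ × ℝ => transSq U (z.2 - z.1)) :=
      mρ.comp (measurable_snd.sub measurable_fst)
    have mi : Measurable (fun t => ∫⁻ s, transSq U (s - t) ∂(kapMeasure α ε)) :=
      mρ2.lintegral_prod_right'
    rw [lintegral_kapMeasure mi]
    calc _ = ∫⁻ t, ∫⁻ r, transSq U r * (k t * k (t + r)) := by
          congr 1; ext t
          rw [lintegral_kapMeasure (by fun_prop)]
          change k t * ∫⁻ s, k s * transSq U (s - t) = _
          rw [← lintegral_add_right_eq_self _ t, ← lintegral_const_mul _ (by fun_prop)]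
          congr 1; ext r
          rw [add_sub_cancel_right, add_comm r t]; ring
      _ = ∫⁻ r, ∫⁻ t, transSq U r * (k t * k (t + r)) := by
          rw [lintegral_lintegral_swap]
          apply Measurable.aemeasurable
          exact (mρ.comp measurable_snd).mul (by fun_prop)
      _ = _ := by
          congr 1; ext r
          rw [lintegral_const_mul _ (by fun_prop)]
  have e2 : 2 * ∫⁻ r in Ioi 0, transSq U r * A r
      ≤ ∫⁻ t, ∫⁻ s, transSq U (s - t) ∂(kapMeasure α ε) ∂(kapMeasure α ε) := by
    rw [e1]
    exact two_mul_lintegral_Ioi_le fun r => by rw [transSq_neg, hAeven]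
  set X := ∫⁻ r in Ioi 0, transSq U r * A r with hX
  have hXfin : X ≠ ∞ := by
    intro h
    rw [h] at e2
    exact hfin (top_le_iff.1 (by simpa using e2))
  set C := ENNReal.ofReal ((1 + α) / (1 - α) + 1 / α) with hC
  have e3 : kapMeasure α ε univ * ∫⁻ t, transSq U t ∂(kapMeasure α ε) ≤ X + C * energy α U := by
    have hM : kapMeasure α ε univ = ∫⁻ s, k s := by
      rw [kapMeasure, withDensity_apply _ MeasurableSet.univ, Measure.restrict_univ]
    rw [lintegral_kapMeasure mρ, hM]
    have e4 : ∫⁻ t, ENNReal.ofReal (kap α ε t) * transSq U t = ∫⁻ t in Ioi 0, transSq U t * k t := by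
      rw [← lintegral_indicator measurableSet_Ioi]
      congr 1; ext t
      rcases le_or_gt t 0 with h | h
      · rw [indicator_of_notMem (by simpa using h), kap_of_nonpos h, ENNReal.ofReal_zero, zero_mul]
      · rw [indicator_of_mem (mem_Ioi.2 h), mul_comm]
    rw [e4, hX, energy, ← lintegral_const_mul _ (by fun_prop),
      ← lintegral_const_mul _ (by fun_prop), ← lintegral_add_left (by fun_prop)]
    refine setLIntegral_mono (by fun_prop) fun r hr => ?_
    have hr : 0 < r := hr
    have key : (∫⁻ s, k s) * k r ≤ A r + C * ENNReal.ofReal (r ^ (-1 - 2 * α)) := by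
      rw [← lintegral_mul_const _ mk, hC, ← lintegral_maj hα hα1 hr, hA]
      rw [← lintegral_add_left (by fun_prop)]
      refine lintegral_mono fun s => ?_
      simp only [hk]
      rw [← ENNReal.ofReal_mul (kap_nonneg _ hε _), ← ENNReal.ofReal_mul (kap_nonneg _ hε _),
        ← ENNReal.ofReal_add (mul_nonneg (kap_nonneg _ hε _) (kap_nonneg _ hε _))
          (maj_nonneg hα hr _)]
      exact ENNReal.ofReal_le_ofReal (kap_mul_le hα hε hr s)
    calc (∫⁻ s, k s) * (transSq U r * k r) = transSq U r * ((∫⁻ s, k s) * k r) := by ring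
      _ ≤ transSq U r * (A r + C * ENNReal.ofReal (r ^ (-1 - 2 * α))) := by gcongr
      _ = _ := by ring
  set N := ∫⁻ x, ‖∫ t, (U x - U (x + t)) ∂(kapMeasure α ε)‖ₑ ^ 2 with hN
  have e5 : 2 * X + 2 * N ≤ 2 * X + 2 * (C * energy α U) := by
    calc 2 * X + 2 * N ≤ 2 * N + ∫⁻ t, ∫⁻ s, transSq U (s - t) ∂(kapMeasure α ε)
            ∂(kapMeasure α ε) := by rw [add_comm]; gcongr
      _ ≤ _ := main
      _ = 2 * (kapMeasure α ε univ * ∫⁻ t, transSq U t ∂(kapMeasure α ε)) := by ring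
      _ ≤ 2 * (X + C * energy α U) := by gcongr
      _ = _ := by ring
  have e6 := (ENNReal.add_le_add_iff_left (by finiteness)).1 e5
  exact (ENNReal.mul_le_mul_iff_right (by norm_num) (by norm_num)).1 e6

/-! ### Composition with the fractional integral -/

/-- The Riemann–Liouville kernel `s^(α-1)`, without its factor `1/Γ(α)`, cut off to `(0,1]`. -/
noncomputable def sing (α : ℝ) : ℝ → ℝ := (Ioc (0:ℝ) 1).indicator fun s => s ^ (α - 1)

/-- The finite measure with density `sing α`. -/
noncomputable def singMeasure (α : ℝ) : Measure ℝ :=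
  volume.withDensity fun t => ENNReal.ofReal (sing α t)

lemma sing_nonneg (α s : ℝ) : 0 ≤ sing α s := by
  refine indicator_nonneg (fun s hs => ?_) s
  have := hs.1
  positivity

lemma measurable_sing (α : ℝ) : Measurable (sing α) := by
  refine Measurable.indicator ?_ measurableSet_Ioc
  fun_prop

lemma integrable_sing {α : ℝ} (hα : 0 < α) : Integrable (sing α) := by
  refine (integrable_indicator_iff measurableSet_Ioc).2 ?_
  exact (intervalIntegrable_iff_integrableOn_Ioc_of_le zero_le_one).1
      (intervalIntegral.intervalIntegrable_rpow' (by linarith))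

lemma isFiniteMeasure_sing {α : ℝ} (hα : 0 < α) : IsFiniteMeasure (singMeasure α) :=
  isFiniteMeasure_withDensity_ofReal (integrable_sing hα).2

lemma integral_singMeasure (α : ℝ) (f : ℝ → ℂ) :
    ∫ s, f s ∂(singMeasure α) = ∫ s, sing α s • f s := by
  rw [singMeasure, integral_withDensity_eq_integral_toReal_smul
    (measurable_sing α).ennreal_ofReal (ae_of_all _ fun _ => ENNReal.ofReal_lt_top)]
  simp_rw [ENNReal.toReal_ofReal (sing_nonneg _ _)]

lemma integral_kapMeasure {α ε : ℝ} (hε : 0 < ε) (f : ℝ → ℂ) :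
    ∫ s, f s ∂(kapMeasure α ε) = ∫ s, kap α ε s • f s := by
  rw [kapMeasure, integral_withDensity_eq_integral_toReal_smul
    (measurable_kap α ε).ennreal_ofReal (ae_of_all _ fun _ => ENNReal.ofReal_lt_top)]
  simp_rw [ENNReal.toReal_ofReal (kap_nonneg _ hε _)]

lemma kapMeasure_real_univ {α ε : ℝ} (hα : 0 < α) (hε : 0 < ε) :
    (kapMeasure α ε).real univ = ε ^ (-α) / α := by
  rw [Measure.real, kapMeasure, withDensity_apply _ MeasurableSet.univ, Measure.restrict_univ,
    ← ofReal_integral_eq_lintegral_ofReal (integrable_kap hα hε)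
      (ae_of_all _ (kap_nonneg α hε)), integral_kap hα hε, ENNReal.toReal_ofReal (by positivity)]

/-- The integrand has the elementary primitive `s^α (r + ε - s)^(-α) / (α (r + ε))`. -/
lemma conv_sing_kap {α ε r : ℝ} (hα : 0 < α) (hε : 0 < ε) (hr : r ∈ Ioc (0:ℝ) 1) :
    ∫ s, sing α s * kap α ε (r - s) = r ^ α * ε ^ (-α) / (α * (r + ε)) := by
  obtain ⟨hr0, hr1⟩ := hr
  have e : ∀ s, sing α s * kap α ε (r - s)
      = (Ioo (0:ℝ) r).indicator (fun s => s ^ (α - 1) * (r + ε - s) ^ (-1 - α)) s := by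
    intro s
    by_cases hs : s ∈ Ioo 0 r
    · have h1 : s ∈ Ioc (0:ℝ) 1 := ⟨hs.1, hs.2.le.trans hr1⟩
      have h2 : 0 < r - s := by linarith [hs.2]
      rw [indicator_of_mem hs, sing, indicator_of_mem h1, kap_of_pos h2,
        show r - s + ε = r + ε - s by ring]
    · rw [indicator_of_notMem hs]
      rcases le_or_gt s 0 with h | h
      · rw [sing, indicator_of_notMem (fun h' => absurd h'.1 (not_lt.2 h)), zero_mul]
      · have : r ≤ s := by
          by_contra h'
          exact hs ⟨h, not_le.1 h'⟩
        rw [kap_of_nonpos (by linarith), mul_zero]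
  simp_rw [e]
  rw [integral_indicator measurableSet_Ioo, ← integral_Ioc_eq_integral_Ioo,
    ← intervalIntegral.integral_of_le hr0.le]
  have hpos : ∀ s ∈ Icc 0 r, 0 < r + ε - s := fun s hs => by linarith [hs.2]
  rw [intervalIntegral.integral_eq_sub_of_hasDerivAt_of_le hr0.le
    (f := fun s => s ^ α * (r + ε - s) ^ (-α) / (α * (r + ε)))]
  · simp only [add_sub_cancel_left]
    rw [Real.zero_rpow hα.ne']
    ring
  · refine ContinuousOn.div_const (ContinuousOn.mul ?_ ?_) _
    · exact continuousOn_id.rpow_const fun s _ => Or.inr hα.le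
    · exact (continuousOn_const.sub continuousOn_id).rpow_const fun s hs =>
        Or.inl (hpos s hs).ne'
  · intro s hs
    have h1 : 0 < r + ε - s := hpos s ⟨hs.1.le, hs.2.le⟩
    have hs0 : 0 < s := hs.1
    have d1 : HasDerivAt (fun s : ℝ => s ^ α) (α * s ^ (α - 1)) s :=
      Real.hasDerivAt_rpow_const (Or.inl hs0.ne')
    have d2 : HasDerivAt (fun s : ℝ => (r + ε - s) ^ (-α))
        (-1 * -α * (r + ε - s) ^ (-α - 1)) s :=
      ((hasDerivAt_id s).const_sub (r + ε)).rpow_const (Or.inl h1.ne')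
    refine ((d1.mul d2).div_const (α * (r + ε))).congr_deriv ?_
    have e1 : s ^ α = s ^ (α - 1) * s := by
      rw [← Real.rpow_add_one hs0.ne']; ring_nf
    have e2 : (r + ε - s) ^ (-α) = (r + ε - s) ^ (-1 - α) * (r + ε - s) := by
      rw [← Real.rpow_add_one h1.ne']; ring_nf
    rw [e1, e2, show -α - 1 = -1 - α by ring]
    have : r + ε ≠ 0 := by linarith
    field_simp
    ring
  · refine IntervalIntegrable.mul_continuousOn
      (intervalIntegral.intervalIntegrable_rpow' (by linarith)) ?_
    rw [uIcc_of_le hr0.le]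
    exact (continuousOn_const.sub continuousOn_id).rpow_const fun s hs => Or.inl (hpos s hs).ne'

/-- The kernel obtained for `0 < r ≤ 1` as `(∫ kap) * sing - sing ⋆ kap`. It is an approximate
identity at `0+` up to normalization: `kerK α ε r = kerK α 1 (r / ε) / ε`. -/
noncomputable def kerK (α ε r : ℝ) : ℝ := ε ^ (1 - α) * r ^ (α - 1) / (α * (r + ε))

lemma integral_prod_sing_kap {α ε B : ℝ} (hα : 0 < α) (hε : 0 < ε) {φ : ℝ → ℂ}
    (hφ : Measurable φ) (hB : ∀ r, ‖φ r‖ ≤ B) (h0 : ∀ r, 1 < r → φ r = 0) :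
    ∫ z, (φ z.1 - φ (z.1 + z.2)) ∂((singMeasure α).prod (kapMeasure α ε))
      = ∫ r in Ioi 0, kerK α ε r • φ r := by
  have := isFiniteMeasure_kap hα hε
  have := isFiniteMeasure_sing hα
  have i1 : Integrable (fun z : ℝ × ℝ => φ z.1) ((singMeasure α).prod (kapMeasure α ε)) :=
    Integrable.of_bound (by exact Measurable.aestronglyMeasurable (by fun_prop)) B (ae_of_all _ fun _ => hB _)
  have i2 : Integrable (fun z : ℝ × ℝ => φ (z.1 + z.2))
      ((singMeasure α).prod (kapMeasure α ε)) :=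
    Integrable.of_bound (by exact Measurable.aestronglyMeasurable (by fun_prop)) B (ae_of_all _ fun _ => hB _)
  have ic : Integrable (fun z : ℝ × ℝ => (sing α z.2 * kap α ε (z.1 - z.2)) • φ z.1)
      (volume.prod volume) := by
    have := (integrable_sing hα).convolution_integrand (ContinuousLinearMap.mul ℝ ℝ)
      (integrable_kap hα hε)
    simp only [ContinuousLinearMap.mul_apply'] at this
    exact this.smul_bdd B (Measurable.aestronglyMeasurable (by fun_prop)) (ae_of_all _ fun _ => hB _)
  rw [integral_sub i1 i2, integral_fun_fst, integral_prod _ i2, integral_singMeasure,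
    integral_singMeasure, kapMeasure_real_univ hα hε]
  have e1 : ∫ s, sing α s • ∫ t, φ (s + t) ∂(kapMeasure α ε)
      = ∫ r, (∫ s, sing α s * kap α ε (r - s)) • φ r := by
    calc _ = ∫ s, ∫ r, (sing α s * kap α ε (r - s)) • φ r := by
          congr 1; ext s
          rw [integral_kapMeasure hε, ← integral_smul,
            ← integral_sub_right_eq_self _ s]
          congr 1; ext r
          rw [add_sub_cancel, smul_smul]
      _ = ∫ r, ∫ s, (sing α s * kap α ε (r - s)) • φ r := by
          rw [← integral_integral_swap]
          exact ic
      _ = _ := by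
          congr 1; ext r
          rw [integral_smul_const]
  have i3 : Integrable (fun r => (∫ s, sing α s * kap α ε (r - s)) • φ r) := by
    have := ic.integral_prod_left
    simpa only [integral_smul_const] using this
  have i4 : Integrable (fun r => sing α r • φ r) :=
    (integrable_sing hα).smul_bdd B hφ.aestronglyMeasurable (ae_of_all _ fun _ => hB _)
  have i5 := integral_sub (i4.smul (ε ^ (-α) / α)) i3
  simp only [Pi.smul_apply] at i5
  rw [e1, ← integral_smul, ← i5, ← integral_indicator measurableSet_Ioi]
  congr 1; ext r
  rcases le_or_gt r 0 with h | h
  · rw [indicator_of_notMem (by simpa using h)]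
    have : ∀ s, sing α s * kap α ε (r - s) = 0 := by
      intro s
      rcases le_or_gt s 0 with h' | h'
      · rw [sing, indicator_of_notMem (fun h'' => absurd h''.1 (not_lt.2 h')), zero_mul]
      · rw [kap_of_nonpos (by linarith), mul_zero]
    simp_rw [this]
    rw [sing, indicator_of_notMem (fun h'' => absurd h''.1 (not_lt.2 h))]
    simp
  · rw [indicator_of_mem (mem_Ioi.2 h)]
    rcases le_or_gt r 1 with h1 | h1
    · rw [conv_sing_kap hα hε ⟨h, h1⟩, sing, indicator_of_mem (by exact ⟨h, h1⟩), smul_smul,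
        ← sub_smul]
      congr 1
      have e2 : ε ^ (1 - α) = ε ^ (-α) * ε := by
        rw [← Real.rpow_add_one hε.ne']; ring_nf
      have e3 : r ^ α = r ^ (α - 1) * r := by
        rw [← Real.rpow_add_one h.ne']; ring_nf
      rw [kerK, e2, e3]
      have : r + ε ≠ 0 := by linarith
      field_simp
      ring
    · simp [h0 r h1]

/-! ### The pairing identity and its limit -/

/-- The cross-correlation `∫ G(x) conj U(x + r) dx`; its value at `r = 0` is the pairing of `G`
with `U`. -/
noncomputable def corr (G U : ℝ → ℂ) (r : ℝ) : ℂ := ∫ x, G x * (starRingEnd ℂ) (U (x + r))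

lemma memLp_two {T : Type*} [MeasurableSpace T] {μ : Measure T} {f : T → ℂ} (hf : Measurable f)
    (h : ∫⁻ x, ‖f x‖ₑ ^ 2 ∂μ ≠ ∞) : MemLp f 2 μ := by
  refine ⟨hf.aestronglyMeasurable, ?_⟩
  rw [eLpNorm_lt_top_iff_lintegral_rpow_enorm_lt_top (by norm_num) (by norm_num)]
  simpa using lt_top_iff_ne_top.2 h

lemma enorm_mul_conj_le (a b : ℂ) : ‖a * (starRingEnd ℂ) b‖ₑ ≤ ‖a‖ₑ ^ 2 + ‖b‖ₑ ^ 2 := by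
  rw [enorm_mul, RCLike.enorm_conj]
  rcases le_total ‖a‖ₑ ‖b‖ₑ with h | h
  · exact le_add_left (by rw [sq]; gcongr)
  · exact le_add_right (by rw [sq]; gcongr)

lemma lintegral_corr_le {G U : ℝ → ℂ} (hG : Measurable G) (r : ℝ) :
    ∫⁻ x, ‖G x * (starRingEnd ℂ) (U (x + r))‖ₑ
      ≤ (∫⁻ x, ‖G x‖ₑ ^ 2) + ∫⁻ x, ‖U x‖ₑ ^ 2 := by
  calc _ ≤ ∫⁻ x, (‖G x‖ₑ ^ 2 + ‖U (x + r)‖ₑ ^ 2) :=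
        lintegral_mono fun x => enorm_mul_conj_le _ _
    _ = _ := by
      rw [lintegral_add_left (by fun_prop),
        lintegral_add_right_eq_self (fun x => ‖U x‖ₑ ^ 2) r]

lemma integrable_corr {G U : ℝ → ℂ} (hG : Measurable G) (hU : Measurable U)
    (hG2 : ∫⁻ x, ‖G x‖ₑ ^ 2 ≠ ∞) (hU2 : ∫⁻ x, ‖U x‖ₑ ^ 2 ≠ ∞) (r : ℝ) :
    Integrable (fun x => G x * (starRingEnd ℂ) (U (x + r))) := by
  refine ⟨?_, (lintegral_corr_le hG r).trans_lt (by finiteness)⟩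
  have : Measurable (fun x => (starRingEnd ℂ) (U (x + r))) :=
    Complex.continuous_conj.measurable.comp (by fun_prop)
  exact (hG.mul this).aestronglyMeasurable

lemma norm_corr_le {G U : ℝ → ℂ} (hG : Measurable G)
    (hG2 : ∫⁻ x, ‖G x‖ₑ ^ 2 ≠ ∞) (hU2 : ∫⁻ x, ‖U x‖ₑ ^ 2 ≠ ∞) (r : ℝ) :
    ‖corr G U r‖ ≤ ((∫⁻ x, ‖G x‖ₑ ^ 2) + ∫⁻ x, ‖U x‖ₑ ^ 2).toReal := by
  rw [← toReal_enorm]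
  refine ENNReal.toReal_mono (by finiteness) ?_
  exact (enorm_integral_le_lintegral_enorm _).trans (lintegral_corr_le hG r)

lemma measurable_corr {G U : ℝ → ℂ} (hG : Measurable G) (hU : Measurable U) :
    Measurable (corr G U) := by
  have : Measurable (fun z : ℝ × ℝ => (starRingEnd ℂ) (U (z.2 + z.1))) :=
    Complex.continuous_conj.measurable.comp (by fun_prop)
  have h2 : StronglyMeasurable (fun z : ℝ × ℝ => G z.2 * (starRingEnd ℂ) (U (z.2 + z.1))) :=
    ((hG.comp measurable_snd).mul this).stronglyMeasurable
  exact h2.integral_prod_right'.measurable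

/-- Continuity of translation in `L²`. -/
lemma continuous_corr {G U : ℝ → ℂ} (hG : Measurable G) (hU : Measurable U)
    (hG2 : ∫⁻ x, ‖G x‖ₑ ^ 2 ≠ ∞) (hU2 : ∫⁻ x, ‖U x‖ₑ ^ 2 ≠ ∞) :
    Continuous (corr G U) := by
  have mG := memLp_two hG hG2
  have mU := memLp_two hU hU2
  have mp : ∀ r : ℝ, MeasurePreserving (ContinuousMap.addRight r : C(ℝ, ℝ)) volume volume :=
    fun r => measurePreserving_add_right volume r
  have hc : Continuous fun r : ℝ => (ContinuousMap.addRight r : C(ℝ, ℝ)) :=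
    ContinuousMap.continuous_of_continuous_uncurry _ (by
      change Continuous fun p : ℝ × ℝ => p.2 + p.1
      fun_prop)
  have h1 : Continuous fun r : ℝ => Lp.compMeasurePreserving _ (mp r) (mU.toLp U) :=
    continuous_const.compMeasurePreservingLp hc mp (by norm_num)
  have h2 : ∀ r, corr G U r
      = inner ℂ (Lp.compMeasurePreserving _ (mp r) (mU.toLp U)) (mG.toLp G) := by
    intro r
    rw [L2.inner_def, corr]
    refine integral_congr_ae ?_
    have a1 := Lp.coeFn_compMeasurePreserving (mU.toLp U) (mp r)
    have a2 := (mp r).quasiMeasurePreserving.ae_eq_comp mU.coeFn_toLp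
    filter_upwards [a1, a2, mG.coeFn_toLp] with x h1 h2 h3
    rw [h1, h2, h3]
    simp
  rw [show corr G U = _ from funext h2]
  exact h1.inner continuous_const

lemma integral_pairing {G U : ℝ → ℂ} (hG : Measurable G) (hU : Measurable U)
    (hG2 : ∫⁻ x, ‖G x‖ₑ ^ 2 ≠ ∞) (hU2 : ∫⁻ x, ‖U x‖ₑ ^ 2 ≠ ∞)
    (ν μ : Measure ℝ) [IsFiniteMeasure ν] [IsFiniteMeasure μ] :
    ∫ x, (∫ s, G (x - s) ∂ν) * (starRingEnd ℂ) (∫ t, (U x - U (x + t)) ∂μ)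
      = ∫ z, (corr G U z.1 - corr G U (z.1 + z.2)) ∂(ν.prod μ) := by
  have mm : Measurable (fun q : ℝ × ℝ × ℝ =>
      G (q.1 - q.2.1) * (starRingEnd ℂ) (U q.1 - U (q.1 + q.2.2))) := by
    refine Measurable.mul (by fun_prop) ?_
    exact Complex.continuous_conj.measurable.comp (by fun_prop)
  have hInt : Integrable (fun q : ℝ × ℝ × ℝ =>
      G (q.1 - q.2.1) * (starRingEnd ℂ) (U q.1 - U (q.1 + q.2.2)))
      (volume.prod (ν.prod μ)) := by
    refine ⟨mm.aestronglyMeasurable, ?_⟩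
    rw [HasFiniteIntegral, lintegral_prod_symm' _ mm.enorm]
    have hb : ∀ z : ℝ × ℝ,
        ∫⁻ x, ‖G (x - z.1) * (starRingEnd ℂ) (U x - U (x + z.2))‖ₑ
          ≤ (∫⁻ x, ‖G x‖ₑ ^ 2) + 4 * ∫⁻ x, ‖U x‖ₑ ^ 2 := by
      intro z
      calc _ ≤ ∫⁻ x, (‖G (x - z.1)‖ₑ ^ 2 + ‖U x - U (x + z.2)‖ₑ ^ 2) :=
            lintegral_mono fun x => enorm_mul_conj_le _ _
        _ = (∫⁻ x, ‖G x‖ₑ ^ 2) + transSq U z.2 := by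
            rw [lintegral_add_left (by fun_prop),
              lintegral_sub_right_eq_self (fun x => ‖G x‖ₑ ^ 2) z.1]
            simp_rw [transSq, enorm_sub_rev (U (_ + z.2))]
        _ ≤ _ := by gcongr; exact transSq_le hU _
    refine (lintegral_mono hb).trans_lt ?_
    rw [lintegral_const]
    finiteness
  calc _ = ∫ x : ℝ, (∫ z : ℝ × ℝ,
        (G (x - z.1) * (starRingEnd ℂ) (U x - U (x + z.2))) ∂(ν.prod μ)) := by
        congr 1; ext x
        rw [← integral_conj]
        exact (integral_prod_mul (fun s => G (x - s))
          (fun t => (starRingEnd ℂ) (U x - U (x + t)))).symm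
    _ = ∫ z : ℝ × ℝ, (∫ x : ℝ, (G (x - z.1) * (starRingEnd ℂ) (U x - U (x + z.2))))
          ∂(ν.prod μ) := by
        exact integral_integral_swap hInt
    _ = _ := by
        congr 1; ext z
        rw [← integral_add_right_eq_self _ z.1]
        simp only [add_sub_cancel_right, map_sub, mul_sub]
        rw [integral_sub (integrable_corr hG hU hG2 hU2 _)]
        · simp only [corr, add_assoc]
        · simpa only [add_assoc] using integrable_corr hG hU hG2 hU2 (z.1 + z.2)

lemma integrableOn_kerK {α : ℝ} (hα : 0 < α) (hα1 : α < 1) : IntegrableOn (kerK α 1) (Ioi 0) := by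
  have mk : Measurable (kerK α 1) := by unfold kerK; fun_prop
  rw [← Ioc_union_Ioi_eq_Ioi zero_le_one]
  refine IntegrableOn.union ?_ ?_
  · have i : IntegrableOn (fun s : ℝ => α⁻¹ * s ^ (α - 1)) (Ioc 0 1) :=
      ((intervalIntegrable_iff_integrableOn_Ioc_of_le zero_le_one).1
        (intervalIntegral.intervalIntegrable_rpow' (by linarith))).const_mul _
    refine Integrable.mono' i mk.aestronglyMeasurable ?_
    refine (ae_restrict_iff' measurableSet_Ioc).2 (ae_of_all _ fun s hs => ?_)
    have h0 : 0 < s := hs.1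
    have : 0 < s ^ (α - 1) := by positivity
    rw [kerK, Real.one_rpow, one_mul, Real.norm_of_nonneg (by positivity), inv_mul_eq_div]
    gcongr
    nlinarith
  · have i : IntegrableOn (fun s : ℝ => α⁻¹ * s ^ (α - 2)) (Ioi 1) :=
      (integrableOn_Ioi_rpow_of_lt (by linarith) one_pos).const_mul _
    refine Integrable.mono' i mk.aestronglyMeasurable ?_
    refine (ae_restrict_iff' measurableSet_Ioi).2 (ae_of_all _ fun s hs => ?_)
    have h0 : 0 < s := one_pos.trans hs
    have : 0 < s ^ (α - 1) := by positivity
    have e : s ^ (α - 2) = s ^ (α - 1) / s := by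
      rw [← Real.rpow_sub_one h0.ne']; ring_nf
    rw [kerK, Real.one_rpow, one_mul, Real.norm_of_nonneg (by positivity), inv_mul_eq_div, e,
      div_div, mul_comm s α]
    gcongr
    linarith

lemma integral_kerK_pos {α : ℝ} (hα : 0 < α) (hα1 : α < 1) :
    0 < ∫ r in Ioi 0, kerK α 1 r := by
  have hp : ∀ r ∈ Ioi (0:ℝ), 0 < kerK α 1 r := by
    intro r hr
    have : 0 < r := hr
    unfold kerK
    positivity
  rw [setIntegral_pos_iff_support_of_nonneg_ae
    ((ae_restrict_iff' measurableSet_Ioi).2 (ae_of_all _ fun r hr => (hp r hr).le))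
    (integrableOn_kerK hα hα1)]
  have hs : Ioi (0:ℝ) ⊆ Function.support (kerK α 1) := fun r hr => (hp r hr).ne'
  rw [inter_eq_right.2 hs]
  simp

/-- Scaling `r = ε r'`. -/
lemma integral_kerK_eq {α ε : ℝ} (hε : 0 < ε) (φ : ℝ → ℂ) :
    ∫ r in Ioi 0, kerK α ε r • φ r = ∫ r in Ioi 0, kerK α 1 r • φ (ε * r) := by
  have h := integral_comp_mul_left_Ioi (fun r => kerK α ε r • φ r) 0 hε
  rw [mul_zero, eq_inv_smul_iff₀ hε.ne'] at h
  rw [← h, ← integral_smul]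
  refine setIntegral_congr_fun measurableSet_Ioi fun r hr => ?_
  have hr : 0 < r := hr
  simp only [smul_smul]
  congr 1
  unfold kerK
  rw [Real.mul_rpow hε.le hr.le, Real.one_rpow]
  have e : ε ^ (1 - α) * ε ^ (α - 1) = 1 := by
    rw [← Real.rpow_add hε]; simp
  have : ε * r + ε = ε * (r + 1) := by ring
  rw [this, ← mul_assoc, e]
  field_simp

lemma tendsto_integral_kerK {α B : ℝ} (hα : 0 < α) (hα1 : α < 1) {φ : ℝ → ℂ}
    (hφ : Continuous φ) (hB : ∀ r, ‖φ r‖ ≤ B) :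
    Tendsto (fun ε => ∫ r in Ioi 0, kerK α ε r • φ r) (𝓝[>] 0)
      (𝓝 ((∫ r in Ioi 0, kerK α 1 r) • φ 0)) := by
  have h : Tendsto (fun ε => ∫ r in Ioi 0, kerK α 1 r • φ (ε * r)) (𝓝[>] 0)
      (𝓝 (∫ r in Ioi 0, kerK α 1 r • φ 0)) := by
    have mk : Measurable (kerK α 1) := by unfold kerK; fun_prop
    refine tendsto_integral_filter_of_dominated_convergence (fun r => ‖kerK α 1 r‖ * B)
      ?_ ?_ ?_ ?_
    · exact Eventually.of_forall fun ε =>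
        mk.aestronglyMeasurable.smul (by fun_prop : Continuous _).aestronglyMeasurable
    · refine Eventually.of_forall fun ε => ae_of_all _ fun r => ?_
      rw [norm_smul]
      gcongr
      exact hB _
    · exact (integrableOn_kerK hα hα1).norm.mul_const _
    · refine ae_of_all _ fun r => ?_
      have : Continuous fun ε : ℝ => kerK α 1 r • φ (ε * r) := by fun_prop
      have h2 := this.tendsto 0
      rw [zero_mul] at h2
      exact h2.mono_left nhdsWithin_le_nhds
  rw [integral_smul_const] at h
  refine h.congr' ?_
  filter_upwards [self_mem_nhdsWithin] with ε hε
  exact (integral_kerK_eq hε φ).symm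

/-! ### A fractional Hardy inequality -/

/-- For `y` comparable to `x`, both `x^(-2α) / (L x / 2)` and its analogues in `y` and `|x - y|`
are comparable. The left side is `‖U x‖² x^(-2α)` divided by the length of the range of `y`. -/
lemma hardy_pointwise {α L x y : ℝ} (hα : 0 < α) (hL : 2 ≤ L) (hx : 0 < x)
    (hy : y ∈ Ioc (L / 2 * x) (L * x)) (U : ℝ → ℂ) :
    ‖U x‖ₑ ^ 2 * ENNReal.ofReal (x ^ (-2 * α) / (L / 2 * x))
      ≤ ENNReal.ofReal (4 * L ^ (2 * α)) * (‖U y‖ₑ ^ 2 * ENNReal.ofReal (y ^ (-1 - 2 * α)))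
        + ENNReal.ofReal (2 * L ^ (1 + 2 * α))
          * (‖U x - U y‖ₑ ^ 2 * ENNReal.ofReal (|x - y| ^ (-1 - 2 * α))) := by
  obtain ⟨hy1, hy2⟩ := hy
  have hL0 : 0 < L := by linarith
  have hy0 : 0 < y := lt_trans (by positivity) hy1
  have hxy : x < y := by nlinarith
  have w1 : x ^ (-2 * α) / (L / 2 * x) ≤ 2 * L ^ (2 * α) * y ^ (-1 - 2 * α) := by
    have a1 : x ^ (-2 * α) ≤ L ^ (2 * α) * y ^ (-2 * α) := by
      have : (y / L) ^ (-2 * α) = L ^ (2 * α) * y ^ (-2 * α) := by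
        rw [Real.div_rpow hy0.le hL0.le, show -2 * α = -(2 * α) by ring, Real.rpow_neg hL0.le,
          div_inv_eq_mul, mul_comm]
      rw [← this]
      refine Real.rpow_le_rpow_of_nonpos (by positivity) ?_ (by linarith)
      rw [div_le_iff₀ hL0]; linarith
    have a2 : y ^ (-1 - 2 * α) = y ^ (-2 * α) / y := by
      rw [← Real.rpow_sub_one hy0.ne']; ring_nf
    calc _ ≤ L ^ (2 * α) * y ^ (-2 * α) / (y / 2) := by
          gcongr
          linarith
      _ = _ := by rw [a2]; field_simp
  have w2 : x ^ (-2 * α) / (L / 2 * x) ≤ L ^ (1 + 2 * α) * |x - y| ^ (-1 - 2 * α) := by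
    have a1 : x ^ (-1 - 2 * α) = x ^ (-2 * α) / x := by
      rw [← Real.rpow_sub_one hx.ne']; ring_nf
    have a2 : L ^ (1 + 2 * α) * (L * x) ^ (-1 - 2 * α) = x ^ (-1 - 2 * α) := by
      rw [Real.mul_rpow hL0.le hx.le, ← mul_assoc, ← Real.rpow_add hL0]
      simp
    calc _ ≤ x ^ (-2 * α) / x := by
          gcongr
          nlinarith
      _ = L ^ (1 + 2 * α) * (L * x) ^ (-1 - 2 * α) := by rw [a2, a1]
      _ ≤ _ := by
          gcongr 1
          refine Real.rpow_le_rpow_of_nonpos (by rw [abs_pos]; linarith) ?_ (by linarith)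
          rw [abs_sub_comm, abs_of_pos (by linarith)]; linarith
  have tri : ‖U x‖ₑ ^ 2 ≤ 2 * ‖U x - U y‖ₑ ^ 2 + 2 * ‖U y‖ₑ ^ 2 := by
    have := sq_enorm_sub_le (U x - U y) (-U y)
    simpa using this
  calc _ ≤ (2 * ‖U x - U y‖ₑ ^ 2 + 2 * ‖U y‖ₑ ^ 2)
        * ENNReal.ofReal (x ^ (-2 * α) / (L / 2 * x)) := by gcongr
    _ = 2 * ‖U y‖ₑ ^ 2 * ENNReal.ofReal (x ^ (-2 * α) / (L / 2 * x))
      + 2 * ‖U x - U y‖ₑ ^ 2 * ENNReal.ofReal (x ^ (-2 * α) / (L / 2 * x)) := by ring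
    _ ≤ 2 * ‖U y‖ₑ ^ 2 * ENNReal.ofReal (2 * L ^ (2 * α) * y ^ (-1 - 2 * α))
      + 2 * ‖U x - U y‖ₑ ^ 2 * ENNReal.ofReal (L ^ (1 + 2 * α) * |x - y| ^ (-1 - 2 * α)) := by
        gcongr
    _ = _ := by
        rw [ENNReal.ofReal_mul (by positivity), ENNReal.ofReal_mul (by positivity),
          ENNReal.ofReal_mul (by positivity), ENNReal.ofReal_mul (by positivity),
          ENNReal.ofReal_mul (by positivity),
          show ENNReal.ofReal 2 = 2 by simp, show ENNReal.ofReal 4 = 2 * 2 by norm_num]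
        ring

/-- The squared Gagliardo seminorm of order `α` on `(0,1]`, with values in `[0,∞]`. -/
noncomputable def gagl (α : ℝ) (U : ℝ → ℂ) : ℝ≥0∞ :=
  ∫⁻ x in Ioc 0 1, ∫⁻ y in Ioc 0 1, ‖U x - U y‖ₑ ^ 2 * ENNReal.ofReal (|x - y| ^ (-1 - 2 * α))

/-- Tonelli: for fixed `y`, the admissible `x` form an interval of length `y / L`. -/
lemma lintegral_dyadic_le {δ L : ℝ} (hδ : 0 < δ) (hL : 2 ≤ L) {h : ℝ → ℝ≥0∞}
    (hh : Measurable h) :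
    ∫⁻ x in Ioc δ (1 / L), ∫⁻ y in Ioc (L / 2 * x) (L * x), h y
      ≤ ∫⁻ y in Ioc δ 1, h y * ENNReal.ofReal (y / L) := by
  have hL0 : 0 < L := by linarith
  set S : Set (ℝ × ℝ) := {z | z.2 ∈ Ioc δ 1 ∧ z.1 ∈ Icc (z.2 / L) (2 * (z.2 / L))} with hS
  have mS : MeasurableSet S := by
    refine MeasurableSet.inter (measurable_snd measurableSet_Ioc) (MeasurableSet.inter ?_ ?_)
    · exact measurableSet_le (measurable_snd.div_const L) measurable_fst
    · exact measurableSet_le measurable_fst ((measurable_snd.div_const L).const_mul 2)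
  calc _ ≤ ∫⁻ x, ∫⁻ y, S.indicator (fun z => h z.2) (x, y) := by
        rw [← lintegral_indicator measurableSet_Ioc]
        refine lintegral_mono fun x => ?_
        refine indicator_apply_le' (fun hx => ?_) fun _ => zero_le
        rw [← lintegral_indicator measurableSet_Ioc]
        refine lintegral_mono fun y => ?_
        refine indicator_apply_le' (fun hy => ?_) fun _ => zero_le
        obtain ⟨hx1, hx2⟩ := hx
        obtain ⟨hy1, hy2⟩ := hy
        have hx3 : L * x ≤ 1 := by rwa [le_div_iff₀ hL0, mul_comm] at hx2
        have : (x, y) ∈ S := by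
          refine ⟨⟨by nlinarith, by linarith⟩, ?_, ?_⟩
          · change y / L ≤ x
            rw [div_le_iff₀ hL0]; linarith
          · change x ≤ 2 * (y / L)
            rw [← mul_div_assoc, le_div_iff₀ hL0]; linarith
        rw [indicator_of_mem this]
    _ = ∫⁻ y, ∫⁻ x, S.indicator (fun z => h z.2) (x, y) := by
        rw [lintegral_lintegral_swap]
        exact ((hh.comp measurable_snd).indicator mS).aemeasurable
    _ ≤ _ := by
        rw [← lintegral_indicator measurableSet_Ioc]
        refine lintegral_mono fun y => ?_
        by_cases hy : y ∈ Ioc δ 1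
        · rw [indicator_of_mem hy]
          calc _ ≤ ∫⁻ x, (Icc (y / L) (2 * (y / L))).indicator (fun _ => h y) x := by
                refine lintegral_mono fun x => ?_
                refine indicator_le (f := fun z : ℝ × ℝ => h z.2)
                  (g := fun z : ℝ × ℝ => (Icc (z.2 / L) (2 * (z.2 / L))).indicator
                    (fun _ => h z.2) z.1) (fun z hz => ?_) (x, y)
                rw [indicator_of_mem hz.2]
            _ = _ := by
                rw [lintegral_indicator measurableSet_Icc, setLIntegral_const, Real.volume_Icc]
                congr 2; ring
        · have : ∀ x, S.indicator (fun z => h z.2) (x, y) = 0 := fun x =>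
            indicator_of_notMem (fun h' => hy h'.1) _
          simp [this]

/-- One step of the Hardy inequality: averaging `hardy_pointwise` over `y` moves the mass near `0`
from `x` to `y ≈ L x`, which gains the factor `L^(2α-1)`. The cut-off `δ` keeps the weighted integral
finite, so that it can be absorbed when this factor is small. -/
lemma hardy_step {α δ L : ℝ} (hα : 0 < α) (hδ : 0 < δ) (hL : 2 ≤ L)
    {U : ℝ → ℂ} (hU : Measurable U) :
    ∫⁻ x in Ioc δ 1, ‖U x‖ₑ ^ 2 * ENNReal.ofReal (x ^ (-2 * α))
      ≤ ENNReal.ofReal (4 * L ^ (2 * α - 1))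
          * (∫⁻ x in Ioc δ 1, ‖U x‖ₑ ^ 2 * ENNReal.ofReal (x ^ (-2 * α)))
        + ENNReal.ofReal (2 * L ^ (1 + 2 * α)) * ((∫⁻ x in Ioc 0 1, ‖U x‖ₑ ^ 2) + gagl α U) := by
  have hL0 : 0 < L := by linarith
  set K : ℝ → ℝ → ℝ≥0∞ := fun x y =>
    ‖U x - U y‖ₑ ^ 2 * ENNReal.ofReal (|x - y| ^ (-1 - 2 * α)) with hK
  have mK : Measurable (Function.uncurry K) := by
    simp only [hK, Function.uncurry_def]
    fun_prop
  set h : ℝ → ℝ≥0∞ := fun y => ENNReal.ofReal (4 * L ^ (2 * α))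
      * (‖U y‖ₑ ^ 2 * ENNReal.ofReal (y ^ (-1 - 2 * α))) with hh
  have mh : Measurable h := by fun_prop
  set C2 := ENNReal.ofReal (2 * L ^ (1 + 2 * α)) with hC2
  have far : ∫⁻ x in Ioc (1 / L) 1, ‖U x‖ₑ ^ 2 * ENNReal.ofReal (x ^ (-2 * α))
      ≤ C2 * ∫⁻ x in Ioc 0 1, ‖U x‖ₑ ^ 2 := by
    rw [← lintegral_const_mul _ (by fun_prop)]
    refine (setLIntegral_mono (g := fun x => C2 * ‖U x‖ₑ ^ 2) (by fun_prop) fun x hx => ?_).trans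
      (lintegral_mono_set (Ioc_subset_Ioc_left (by positivity)))
    have hx0 : 0 < x := lt_trans (by positivity) hx.1
    rw [mul_comm C2]
    gcongr
    refine ENNReal.ofReal_le_ofReal ?_
    calc x ^ (-2 * α) ≤ (1 / L) ^ (-2 * α) :=
          Real.rpow_le_rpow_of_nonpos (by positivity) hx.1.le (by linarith)
      _ = L ^ (2 * α) := by
          rw [one_div, Real.inv_rpow hL0.le, ← Real.rpow_neg hL0.le]; ring_nf
      _ ≤ L ^ (1 + 2 * α) := Real.rpow_le_rpow_of_exponent_le (by linarith) (by linarith)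
      _ ≤ _ := by
          have : 0 < L ^ (1 + 2 * α) := by positivity
          linarith
  have near : ∫⁻ x in Ioc δ (1 / L), ‖U x‖ₑ ^ 2 * ENNReal.ofReal (x ^ (-2 * α))
      ≤ (∫⁻ y in Ioc δ 1, h y * ENNReal.ofReal (y / L)) + C2 * gagl α U := by
    have mI : Measurable fun x => ∫⁻ y in Ioc 0 1, C2 * K x y := by
      exact Measurable.lintegral_prod_right' (f := fun z : ℝ × ℝ => C2 * K z.1 z.2)
        (mK.const_mul C2)
    calc _ ≤ ∫⁻ x in Ioc δ (1 / L), ((∫⁻ y in Ioc (L / 2 * x) (L * x), h y)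
            + ∫⁻ y in Ioc 0 1, C2 * K x y) := by
          refine lintegral_mono_ae ((ae_restrict_iff' measurableSet_Ioc).2
            (ae_of_all _ fun x hx => ?_))
          have hx0 : 0 < x := hδ.trans hx.1
          have hx3 : L * x ≤ 1 := by
            have := hx.2
            rwa [le_div_iff₀ hL0, mul_comm] at this
          have e : ‖U x‖ₑ ^ 2 * ENNReal.ofReal (x ^ (-2 * α))
              = ∫⁻ y in Ioc (L / 2 * x) (L * x),
                ‖U x‖ₑ ^ 2 * ENNReal.ofReal (x ^ (-2 * α) / (L / 2 * x)) := by
            rw [setLIntegral_const, Real.volume_Ioc, mul_assoc, ← ENNReal.ofReal_mul (by positivity)]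
            congr 2
            field_simp
            ring
          rw [e]
          calc _ ≤ ∫⁻ y in Ioc (L / 2 * x) (L * x), (h y + C2 * K x y) :=
                setLIntegral_mono (by fun_prop) fun y hy => hardy_pointwise hα hL hx0 hy U
            _ = (∫⁻ y in Ioc (L / 2 * x) (L * x), h y)
                + ∫⁻ y in Ioc (L / 2 * x) (L * x), C2 * K x y := lintegral_add_left mh _
            _ ≤ _ := by
                exact add_le_add le_rfl (lintegral_mono_set (Ioc_subset_Ioc (by positivity) hx3))
      _ = (∫⁻ x in Ioc δ (1 / L), ∫⁻ y in Ioc (L / 2 * x) (L * x), h y)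
            + ∫⁻ x in Ioc δ (1 / L), ∫⁻ y in Ioc 0 1, C2 * K x y := lintegral_add_right _ mI
      _ ≤ _ := by
          refine add_le_add ?_ ?_
          · exact lintegral_dyadic_le hδ hL mh
          · have m2 : Measurable fun x => ∫⁻ y in Ioc 0 1, K x y :=
              Measurable.lintegral_prod_right' (f := fun z : ℝ × ℝ => K z.1 z.2) mK
            calc _ ≤ ∫⁻ x in Ioc 0 1, ∫⁻ y in Ioc 0 1, C2 * K x y := by
                  refine lintegral_mono_set (Ioc_subset_Ioc hδ.le ?_)
                  rw [div_le_one hL0]; linarith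
              _ = _ := by
                  rw [gagl, ← lintegral_const_mul _ m2]
                  congr 1; ext x
                  rw [lintegral_const_mul _ (by fun_prop)]
  have e1 : ∫⁻ y in Ioc δ 1, h y * ENNReal.ofReal (y / L)
      = ENNReal.ofReal (4 * L ^ (2 * α - 1))
        * ∫⁻ x in Ioc δ 1, ‖U x‖ₑ ^ 2 * ENNReal.ofReal (x ^ (-2 * α)) := by
    rw [← lintegral_const_mul _ (by fun_prop)]
    refine setLIntegral_congr_fun measurableSet_Ioc fun y hy => ?_
    have hy0 : 0 < y := hδ.trans hy.1
    simp only [hh]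
    have a1 : y ^ (-2 * α) = y ^ (-1 - 2 * α) * y := by
      rw [← Real.rpow_add_one hy0.ne']; ring_nf
    have a2 : L ^ (2 * α - 1) = L ^ (2 * α) / L := Real.rpow_sub_one hL0.ne' _
    have a3 : ENNReal.ofReal (4 * L ^ (2 * α)) * ENNReal.ofReal (y ^ (-1 - 2 * α))
          * ENNReal.ofReal (y / L)
        = ENNReal.ofReal (4 * L ^ (2 * α - 1)) * ENNReal.ofReal (y ^ (-2 * α)) := by
      rw [← ENNReal.ofReal_mul (by positivity), ← ENNReal.ofReal_mul (by positivity),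
        ← ENNReal.ofReal_mul (by positivity), a1, a2]
      congr 1; ring
    calc _ = ‖U y‖ₑ ^ 2 * (ENNReal.ofReal (4 * L ^ (2 * α)) * ENNReal.ofReal (y ^ (-1 - 2 * α))
          * ENNReal.ofReal (y / L)) := by ring
      _ = _ := by rw [a3]; ring
  rw [e1] at near
  calc _ ≤ ∫⁻ x in Ioc δ (1 / L) ∪ Ioc (1 / L) 1,
        ‖U x‖ₑ ^ 2 * ENNReal.ofReal (x ^ (-2 * α)) :=
        lintegral_mono_set Ioc_subset_Ioc_union_Ioc
    _ ≤ _ := lintegral_union_le _ _ _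
    _ ≤ _ := add_le_add near far
    _ = _ := by ring

/-- Fractional Hardy inequality on `(0,1)`; the only step that needs `α < 1/2`
rather than `α < 1`. -/
lemma exists_hardy {α : ℝ} (hα : 0 < α) (hα1 : α < 1 / 2) :
    ∃ C : ℝ≥0∞, C ≠ ∞ ∧ ∀ U : ℝ → ℂ, Measurable U → ∫⁻ x in Ioc 0 1, ‖U x‖ₑ ^ 2 ≠ ∞ →
      ∫⁻ x in Ioc 0 1, ‖U x‖ₑ ^ 2 * ENNReal.ofReal (x ^ (-2 * α))
        ≤ C * ((∫⁻ x in Ioc 0 1, ‖U x‖ₑ ^ 2) + gagl α U) := by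
  have hβ : 0 < 1 - 2 * α := by linarith
  -- `L` is chosen so that the factor of the absorbed term in `hardy_step` equals `1 / 2`.
  set L : ℝ := 8 ^ (1 / (1 - 2 * α)) with hLdef
  have hL : 2 ≤ L := by
    calc (2:ℝ) ≤ 8 ^ (1:ℝ) := by norm_num
      _ ≤ _ := by
        refine Real.rpow_le_rpow_of_exponent_le (by norm_num) ?_
        rw [le_div_iff₀ hβ]; linarith
  have hL2 : 4 * L ^ (2 * α - 1) = 1 / 2 := by
    rw [hLdef, ← Real.rpow_mul (by norm_num),
      show 1 / (1 - 2 * α) * (2 * α - 1) = -1 by field_simp; ring, Real.rpow_neg_one]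
    norm_num
  set C2 := ENNReal.ofReal (2 * L ^ (1 + 2 * α)) with hC2
  refine ⟨2 * C2, by finiteness, fun U hU hfin => ?_⟩
  set T := (∫⁻ x in Ioc 0 1, ‖U x‖ₑ ^ 2) + gagl α U with hT
  have key : ∀ δ : ℝ, 0 < δ →
      ∫⁻ x in Ioc δ 1, ‖U x‖ₑ ^ 2 * ENNReal.ofReal (x ^ (-2 * α)) ≤ 2 * C2 * T := by
    intro δ hδ
    have st := hardy_step hα hδ hL hU
    rw [hL2, ← hT, ← hC2] at st
    set H := ∫⁻ x in Ioc δ 1, ‖U x‖ₑ ^ 2 * ENNReal.ofReal (x ^ (-2 * α)) with hH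
    have hHfin : H ≠ ∞ := by
      refine ne_top_of_le_ne_top (b := (∫⁻ x in Ioc 0 1, ‖U x‖ₑ ^ 2)
        * ENNReal.ofReal (δ ^ (-2 * α))) (by finiteness) ?_
      rw [← lintegral_mul_const _ (by fun_prop)]
      refine (setLIntegral_mono (g := fun x => ‖U x‖ₑ ^ 2 * ENNReal.ofReal (δ ^ (-2 * α)))
        (by fun_prop) fun x hx => ?_).trans (lintegral_mono_set (Ioc_subset_Ioc_left hδ.le))
      exact mul_le_mul_right (ENNReal.ofReal_le_ofReal
        (Real.rpow_le_rpow_of_nonpos hδ hx.1.le (by linarith))) _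
    have hhalf : ENNReal.ofReal (1 / 2) * 2 = 1 := by
      rw [show (2 : ℝ≥0∞) = ENNReal.ofReal 2 by simp, ← ENNReal.ofReal_mul (by norm_num)]
      norm_num
    have h2 : H + H ≤ H + 2 * C2 * T := by
      calc H + H = H * 2 := by ring
        _ ≤ (ENNReal.ofReal (1 / 2) * H + C2 * T) * 2 := by gcongr
        _ = (ENNReal.ofReal (1 / 2) * 2) * H + 2 * C2 * T := by ring
        _ = _ := by rw [hhalf, one_mul]
    exact (ENNReal.add_le_add_iff_left hHfin).1 h2
  have hun : Ioc (0:ℝ) 1 = ⋃ n : ℕ, Ioc (1 / ((n:ℝ) + 1)) 1 := by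
    ext x
    simp only [mem_iUnion, mem_Ioc]
    constructor
    · rintro ⟨h0, h1⟩
      obtain ⟨n, hn⟩ := exists_nat_one_div_lt h0
      exact ⟨n, hn, h1⟩
    · rintro ⟨n, h0, h1⟩
      exact ⟨lt_trans (by positivity) h0, h1⟩
  have hmono : Monotone fun n : ℕ => Ioc (1 / ((n:ℝ) + 1)) 1 := fun m n hmn =>
    Ioc_subset_Ioc_left (Nat.one_div_le_one_div hmn)
  conv_lhs => rw [hun]
  rw [setLIntegral_iUnion_of_directed _ hmono.directed_le]
  exact iSup_le fun n => key _ (by positivity)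

/-! ### The translation energy is controlled by the Sobolev norm -/

lemma lintegral_Ioi_rpow {α c : ℝ} (hα : 0 < α) (hc : 0 < c) :
    ∫⁻ r in Ioi c, ENNReal.ofReal (r ^ (-1 - 2 * α))
      = ENNReal.ofReal (1 / (2 * α)) * ENNReal.ofReal (c ^ (-2 * α)) := by
  rw [← ofReal_integral_eq_lintegral_ofReal (integrableOn_Ioi_rpow_of_lt (by linarith) hc)
    ((ae_restrict_iff' measurableSet_Ioi).2 (ae_of_all _ fun r hr => by
      have : 0 < r := hc.trans hr
      positivity)), integral_Ioi_rpow_of_lt (by linarith) hc, ← ENNReal.ofReal_mul (by positivity)]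
  congr 1
  rw [show -1 - 2 * α + 1 = -2 * α by ring, show -2 * α = -(2 * α) by ring, neg_div_neg_eq]
  ring

lemma lintegral_reflect (f : ℝ → ℝ≥0∞) :
    ∫⁻ x in Ioc 0 1, f (1 - x) = ∫⁻ x in Ioc 0 1, f x := by
  have h := (Measure.measurePreserving_sub_left (volume : Measure ℝ) 1).setLIntegral_comp_preimage_emb
    (MeasurableEquiv.subLeft (1:ℝ)).measurableEmbedding f (Ioc 0 1)
  rw [preimage_const_sub_Ioc, sub_self, sub_zero] at h
  rw [← h]
  exact setLIntegral_congr Ico_ae_eq_Ioc.symm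

lemma gagl_reflect (α : ℝ) (U : ℝ → ℂ) : gagl α (fun x => U (1 - x)) = gagl α U := by
  unfold gagl
  rw [← lintegral_reflect fun x => ∫⁻ y in Ioc 0 1,
    ‖U x - U y‖ₑ ^ 2 * ENNReal.ofReal (|x - y| ^ (-1 - 2 * α))]
  congr 1; ext x
  rw [← lintegral_reflect fun y =>
    ‖U (1 - x) - U y‖ₑ ^ 2 * ENNReal.ofReal (|1 - x - y| ^ (-1 - 2 * α))]
  congr 1; ext y
  rw [abs_sub_comm x y]
  congr 4; ring

/-- For a pair `x, x + r`, either both points lie in `(0,1]`, or `x + r > 1`, or `x ≤ 0`, or `U`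
vanishes at both. Integrating `r^(-1-2α)` over the shifts leaving `(0,1]` produces the boundary
weights. -/
lemma energy_le {α : ℝ} (hα : 0 < α) {U : ℝ → ℂ} (hU : Measurable U)
    (h0 : ∀ x, x ∉ Ioc (0:ℝ) 1 → U x = 0) :
    energy α U ≤ gagl α U
      + ENNReal.ofReal (1 / (2 * α))
          * (∫⁻ x in Ioc 0 1, ‖U (1 - x)‖ₑ ^ 2 * ENNReal.ofReal (x ^ (-2 * α)))
      + ENNReal.ofReal (1 / (2 * α))
          * ∫⁻ x in Ioc 0 1, ‖U x‖ₑ ^ 2 * ENNReal.ofReal (x ^ (-2 * α)) := by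
  set k : ℝ → ℝ≥0∞ := fun r => ENNReal.ofReal (r ^ (-1 - 2 * α)) with hk
  set I : Set ℝ := Ioc 0 1 with hI
  set S1 : Set (ℝ × ℝ) := {z | z.1 ∈ I ∧ z.1 + z.2 ∈ I} with hS1
  set S2 : Set (ℝ × ℝ) := {z | z.1 ∈ I ∧ 1 - z.1 < z.2} with hS2
  set S3 : Set (ℝ × ℝ) := {z | z.1 ∈ I ∧ z.1 ≤ z.2} with hS3
  have m1 : MeasurableSet S1 := (measurable_fst measurableSet_Ioc).inter
    ((measurable_fst.add measurable_snd) measurableSet_Ioc)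
  have m2 : MeasurableSet S2 := (measurable_fst measurableSet_Ioc).inter
    (measurableSet_lt (measurable_fst.const_sub 1) measurable_snd)
  have m3 : MeasurableSet S3 := (measurable_fst measurableSet_Ioc).inter
    (measurableSet_le measurable_fst measurable_snd)
  set f1 : ℝ × ℝ → ℝ≥0∞ := S1.indicator fun z => ‖U (z.1 + z.2) - U z.1‖ₑ ^ 2 * k z.2 with hf1
  set f2 : ℝ × ℝ → ℝ≥0∞ := S2.indicator fun z => ‖U z.1‖ₑ ^ 2 * k z.2 with hf2
  set f3 : ℝ × ℝ → ℝ≥0∞ := S3.indicator fun z => ‖U z.1‖ₑ ^ 2 * k z.2 with hf3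
  have mf1 : Measurable f1 := by
    refine Measurable.indicator ?_ m1
    fun_prop
  have mf2 : Measurable f2 := by
    refine Measurable.indicator ?_ m2
    fun_prop
  have mf3 : Measurable f3 := by
    refine Measurable.indicator ?_ m3
    fun_prop
  have pw : ∀ x r : ℝ, 0 < r → ‖U (x + r) - U x‖ₑ ^ 2 * k r
      ≤ f1 (x, r) + f2 (x, r) + f3 (x + r, r) := by
    intro x r hr
    by_cases hx : x ∈ I
    · by_cases hy : x + r ∈ I
      · have : (x, r) ∈ S1 := ⟨hx, hy⟩
        rw [hf1, indicator_of_mem this, add_assoc]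
        exact le_self_add
      · have h1 : 1 < x + r := by
          by_contra h
          exact hy ⟨by linarith [hx.1], not_lt.1 h⟩
        have : (x, r) ∈ S2 := ⟨hx, by change 1 - x < r; linarith⟩
        rw [hf2, indicator_of_mem this, h0 _ hy, zero_sub, enorm_neg]
        exact le_add_right le_add_self
    · by_cases hy : x + r ∈ I
      · have h1 : x ≤ 0 := by
          by_contra h
          exact hx ⟨not_le.1 h, by linarith [hy.2]⟩
        have : (x + r, r) ∈ S3 := ⟨hy, by change x + r ≤ r; linarith⟩
        rw [hf3, indicator_of_mem this, h0 _ hx, sub_zero]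
        exact le_add_self
      · simp [h0 _ hx, h0 _ hy]
  have step : ∀ r ∈ Ioi (0:ℝ), transSq U r * k r
      ≤ (∫⁻ x, f1 (x, r)) + (∫⁻ x, f2 (x, r)) + ∫⁻ x, f3 (x, r) := by
    intro r hr
    rw [transSq, ← lintegral_mul_const _ (by fun_prop)]
    refine (lintegral_mono fun x => pw x r hr).trans ?_
    rw [lintegral_add_right _ (by fun_prop), lintegral_add_right _ (by fun_prop),
      lintegral_add_right_eq_self (fun x => f3 (x, r)) r]
  have swap : ∀ f : ℝ × ℝ → ℝ≥0∞, Measurable f →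
      ∫⁻ r in Ioi 0, ∫⁻ x, f (x, r) = ∫⁻ x, ∫⁻ r in Ioi 0, f (x, r) := by
    intro f hf
    rw [lintegral_lintegral_swap]
    exact (hf.comp measurable_swap).aemeasurable
  have b1 : ∫⁻ x, ∫⁻ r in Ioi 0, f1 (x, r) ≤ gagl α U := by
    rw [gagl, ← lintegral_indicator measurableSet_Ioc]
    refine lintegral_mono fun x => ?_
    by_cases hx : x ∈ I
    · rw [indicator_of_mem hx, ← lintegral_indicator measurableSet_Ioi,
        ← lintegral_indicator measurableSet_Ioc, ← lintegral_sub_right_eq_self _ x]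
      refine lintegral_mono fun y => ?_
      refine indicator_apply_le' (fun hr => ?_) fun _ => zero_le
      refine indicator_apply_le' (fun hz => ?_) fun _ => zero_le
      have hr : 0 < y - x := hr
      have hy : y ∈ I := by
        have := hz.2
        simpa using this
      simp only [hk]
      rw [indicator_of_mem hy, add_sub_cancel, enorm_sub_rev, abs_sub_comm, abs_of_pos hr]
    · have : ∀ r, f1 (x, r) = 0 := fun r => indicator_of_notMem (fun h => hx h.1) _
      simp [this]
  have b2 : ∫⁻ x, ∫⁻ r in Ioi 0, f2 (x, r) ≤ ENNReal.ofReal (1 / (2 * α))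
      * (∫⁻ x in I, ‖U (1 - x)‖ₑ ^ 2 * ENNReal.ofReal (x ^ (-2 * α))) := by
    have e := lintegral_reflect fun x => ‖U (1 - x)‖ₑ ^ 2 * ENNReal.ofReal (x ^ (-2 * α))
    simp only [sub_sub_cancel] at e
    rw [← e, ← lintegral_const_mul _ (by fun_prop), ← lintegral_indicator measurableSet_Ioc]
    refine lintegral_mono_ae ?_
    -- At `x = 1` the weight is the junk value `0 ^ (-2 * α) = 0`.
    have hne : ∀ᵐ x : ℝ, x ≠ 1 := by simp [ae_iff]
    filter_upwards [hne] with x hx1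
    by_cases hx : x ∈ I
    · have hc : 0 < 1 - x := by
        have := lt_of_le_of_ne hx.2 hx1
        linarith
      rw [indicator_of_mem hx]
      calc _ ≤ ∫⁻ r in Ioi (1 - x), ‖U x‖ₑ ^ 2 * k r := by
            rw [← lintegral_indicator measurableSet_Ioi, ← lintegral_indicator measurableSet_Ioi]
            refine lintegral_mono fun r => ?_
            refine indicator_apply_le' (fun hr => ?_) fun _ => zero_le
            refine indicator_apply_le' (fun hz => ?_) fun _ => zero_le
            have : r ∈ Ioi (1 - x) := hz.2
            rw [indicator_of_mem this]
        _ = _ := by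
            rw [lintegral_const_mul _ (by fun_prop), lintegral_Ioi_rpow hα hc]
            ring
    · have : ∀ r, f2 (x, r) = 0 := fun r => indicator_of_notMem (fun h => hx h.1) _
      simp [this]
  have b3 : ∫⁻ x, ∫⁻ r in Ioi 0, f3 (x, r) ≤ ENNReal.ofReal (1 / (2 * α))
      * (∫⁻ x in I, ‖U x‖ₑ ^ 2 * ENNReal.ofReal (x ^ (-2 * α))) := by
    rw [← lintegral_const_mul _ (by fun_prop), ← lintegral_indicator measurableSet_Ioc]
    refine lintegral_mono fun x => ?_
    by_cases hx : x ∈ I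
    · have hc : 0 < x := hx.1
      rw [indicator_of_mem hx]
      calc _ ≤ ∫⁻ r in Ici x, ‖U x‖ₑ ^ 2 * k r := by
            rw [← lintegral_indicator measurableSet_Ioi, ← lintegral_indicator measurableSet_Ici]
            refine lintegral_mono fun r => ?_
            refine indicator_apply_le' (fun hr => ?_) fun _ => zero_le
            refine indicator_apply_le' (fun hz => ?_) fun _ => zero_le
            have : r ∈ Ici x := hz.2
            rw [indicator_of_mem this]
        _ = _ := by
            rw [setLIntegral_congr Ioi_ae_eq_Ici.symm, lintegral_const_mul _ (by fun_prop),
              lintegral_Ioi_rpow hα hc]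
            ring
    · have : ∀ r, f3 (x, r) = 0 := fun r => indicator_of_notMem (fun h => hx h.1) _
      simp [this]
  have M : ∀ f : ℝ × ℝ → ℝ≥0∞, Measurable f → Measurable fun r => ∫⁻ x, f (x, r) :=
    fun f hf => hf.lintegral_prod_left'
  calc energy α U ≤ ∫⁻ r in Ioi 0,
        ((∫⁻ x, f1 (x, r)) + (∫⁻ x, f2 (x, r)) + ∫⁻ x, f3 (x, r)) :=
        setLIntegral_mono (((M _ mf1).add (M _ mf2)).add (M _ mf3)) step
    _ = (∫⁻ x, ∫⁻ r in Ioi 0, f1 (x, r)) + (∫⁻ x, ∫⁻ r in Ioi 0, f2 (x, r))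
        + ∫⁻ x, ∫⁻ r in Ioi 0, f3 (x, r) := by
        rw [lintegral_add_right _ (M _ mf3), lintegral_add_right _ (M _ mf2), swap _ mf1,
          swap _ mf2, swap _ mf3]
    _ ≤ _ := add_le_add (add_le_add b1 b2) b3

lemma exists_energy_le {α : ℝ} (hα : 0 < α) (hα1 : α < 1 / 2) :
    ∃ C : ℝ≥0∞, C ≠ ∞ ∧ ∀ U : ℝ → ℂ, Measurable U → (∀ x, x ∉ Ioc (0:ℝ) 1 → U x = 0) →
      ∫⁻ x in Ioc 0 1, ‖U x‖ₑ ^ 2 ≠ ∞ →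
      energy α U ≤ C * ((∫⁻ x in Ioc 0 1, ‖U x‖ₑ ^ 2) + gagl α U) := by
  obtain ⟨C, hC, H⟩ := exists_hardy hα hα1
  set D := ENNReal.ofReal (1 / (2 * α)) with hD
  refine ⟨1 + D * C + D * C, by finiteness, fun U hU h0 hfin => ?_⟩
  set T := (∫⁻ x in Ioc 0 1, ‖U x‖ₑ ^ 2) + gagl α U with hT
  have r1 := H U hU hfin
  have e := lintegral_reflect fun x => ‖U x‖ₑ ^ 2
  have r2 := H (fun x => U (1 - x)) (by fun_prop) (by rwa [e])
  rw [gagl_reflect, e] at r2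
  calc energy α U ≤ _ := energy_le hα hU h0
    _ ≤ T + D * (C * T) + D * (C * T) := by
        gcongr
        exact le_add_self
    _ = _ := by ring

/-! ### The duality estimate -/

lemma corr_eq_zero {G U : ℝ → ℂ} (hG0 : ∀ x, x ∉ Ioc (0:ℝ) 1 → G x = 0)
    (hU0 : ∀ x, x ∉ Ioc (0:ℝ) 1 → U x = 0) {r : ℝ} (hr : 1 < r) : corr G U r = 0 := by
  have : ∀ x, G x * (starRingEnd ℂ) (U (x + r)) = 0 := by
    intro x
    by_cases hx : x ∈ Ioc (0:ℝ) 1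
    · rw [hU0 (x + r) fun h => by linarith [hx.1, h.2]]
      simp
    · simp [hG0 x hx]
  simp [corr, this]

/-- Cauchy–Schwarz, using that the product lives on `(0,1]`. -/
lemma enorm_integral_mul_conj_sq_le {F H : ℝ → ℂ} (hF : Measurable F) (hH : Measurable H)
    (hF0 : ∀ x ≤ 0, F x = 0) (hH0 : ∀ x, 1 < x → H x = 0) :
    ‖∫ x, F x * (starRingEnd ℂ) (H x)‖ₑ ^ 2
      ≤ (∫⁻ x in Ioc 0 1, ‖F x‖ₑ ^ 2) * ∫⁻ x, ‖H x‖ₑ ^ 2 := by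
  have h1 : ‖∫ x, F x * (starRingEnd ℂ) (H x)‖ₑ ≤ ∫⁻ x in Ioc 0 1, ‖F x‖ₑ * ‖H x‖ₑ := by
    refine (enorm_integral_le_lintegral_enorm _).trans ?_
    rw [← lintegral_indicator measurableSet_Ioc]
    refine lintegral_mono fun x => ?_
    rw [enorm_mul, RCLike.enorm_conj]
    by_cases hx : x ∈ Ioc (0:ℝ) 1
    · rw [indicator_of_mem hx]
    · rcases le_or_gt x 0 with h | h
      · simp [hF0 x h]
      · have : 1 < x := by
          by_contra h'
          exact hx ⟨h, not_lt.1 h'⟩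
        simp [hH0 x this]
  have h2 := ENNReal.lintegral_mul_le_Lp_mul_Lq (volume.restrict (Ioc (0:ℝ) 1))
    (Real.HolderConjugate.two_two) hF.enorm.aemeasurable hH.enorm.aemeasurable
  simp only [Pi.mul_apply, ENNReal.rpow_two] at h2
  have hsq : ∀ a : ℝ≥0∞, (a ^ (1 / (2:ℝ))) ^ 2 = a := fun a => by
    rw [← ENNReal.rpow_two, ← ENNReal.rpow_mul]; simp
  calc _ ≤ ((∫⁻ x in Ioc 0 1, ‖F x‖ₑ ^ 2) ^ (1 / (2:ℝ))
        * (∫⁻ x in Ioc 0 1, ‖H x‖ₑ ^ 2) ^ (1 / (2:ℝ))) ^ 2 := by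
        gcongr
        exact h1.trans h2
    _ = (∫⁻ x in Ioc 0 1, ‖F x‖ₑ ^ 2) * ∫⁻ x in Ioc 0 1, ‖H x‖ₑ ^ 2 := by
        rw [mul_pow, hsq, hsq]
    _ ≤ _ := by
        gcongr
        exact Measure.restrict_le_self

lemma measurable_integral_comp {V : ℝ × ℝ → ℂ} (hV : Measurable V) (μ : Measure ℝ) [SFinite μ] :
    Measurable fun x => ∫ s, V (x, s) ∂μ :=
  (hV.stronglyMeasurable.integral_prod_right').measurable

/-- Cauchy–Schwarz for the pairing of `Γ(α) I^α G` with the smoothed derivative of `U`, in the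
limit `ε → 0`. -/
lemma duality_bound {α : ℝ} (hα : 0 < α) (hα1 : α < 1) {G U : ℝ → ℂ} (hG : Measurable G)
    (hU : Measurable U) (hG0 : ∀ x, x ∉ Ioc (0:ℝ) 1 → G x = 0)
    (hU0 : ∀ x, x ∉ Ioc (0:ℝ) 1 → U x = 0)
    (hG2 : ∫⁻ x, ‖G x‖ₑ ^ 2 ≠ ∞) (hU2 : ∫⁻ x, ‖U x‖ₑ ^ 2 ≠ ∞) :
    ‖(∫ r in Ioi 0, kerK α 1 r) • corr G U 0‖ₑ ^ 2
      ≤ (∫⁻ x in Ioc 0 1, ‖∫ s, G (x - s) ∂(singMeasure α)‖ₑ ^ 2)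
        * (ENNReal.ofReal ((1 + α) / (1 - α) + 1 / α) * energy α U) := by
  have := isFiniteMeasure_sing hα
  have hB := norm_corr_le hG hG2 hU2
  have lim := tendsto_integral_kerK hα hα1 (continuous_corr hG hU hG2 hU2) hB
  have lim2 := (ENNReal.continuous_pow 2).tendsto _ |>.comp (lim.enorm)
  refine le_of_tendsto lim2 ?_
  filter_upwards [self_mem_nhdsWithin] with ε hε
  have hε : 0 < ε := hε
  have := isFiniteMeasure_kap hα hε
  simp only [Function.comp_apply]
  rw [← integral_prod_sing_kap hα hε (measurable_corr hG hU) hB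
    (fun r hr => corr_eq_zero hG0 hU0 hr), ← integral_pairing hG hU hG2 hU2]
  refine (enorm_integral_mul_conj_sq_le ?_ ?_ ?_ ?_).trans ?_
  · exact measurable_integral_comp (V := fun z => G (z.1 - z.2)) (by fun_prop) _
  · exact measurable_integral_comp (V := fun z => U z.1 - U (z.1 + z.2)) (by fun_prop) _
  · intro x hx
    rw [integral_singMeasure]
    have : ∀ s, sing α s • G (x - s) = 0 := by
      intro s
      rcases le_or_gt s 0 with h | h
      · rw [sing, indicator_of_notMem (fun h' => absurd h'.1 (not_lt.2 h)), zero_smul]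
      · rw [hG0 _ fun h' => by linarith [h'.1], smul_zero]
    simp [this]
  · intro x hx
    rw [integral_kapMeasure hε]
    have : ∀ s, kap α ε s • (U x - U (x + s)) = 0 := by
      intro s
      rcases le_or_gt s 0 with h | h
      · rw [kap_of_nonpos h, zero_smul]
      · rw [hU0 x fun h' => by linarith [h'.2], hU0 _ fun h' => by linarith [h'.2], sub_zero,
          smul_zero]
    simp [this]
  · gcongr
    exact lintegral_sq_le hα hα1 hε hU hU2

/-- Convolution with a finite measure preserves `L²`. -/
lemma lintegral_conv_sing_ne_top {α : ℝ} (hα : 0 < α) {G : ℝ → ℂ} (hG : Measurable G)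
    (hG2 : ∫⁻ x, ‖G x‖ₑ ^ 2 ≠ ∞) :
    ∫⁻ x in Ioc 0 1, ‖∫ s, G (x - s) ∂(singMeasure α)‖ₑ ^ 2 ≠ ∞ := by
  have := isFiniteMeasure_sing hα
  set ν := singMeasure α
  refine ne_top_of_le_ne_top (b := ν univ * (ν univ * ∫⁻ x, ‖G x‖ₑ ^ 2)) (by finiteness) ?_
  refine (setLIntegral_le_lintegral _ _).trans ?_
  have pw : ∀ x, ‖∫ s, G (x - s) ∂ν‖ₑ ^ 2 ≤ ν univ * ∫⁻ s, ‖G (x - s)‖ₑ ^ 2 ∂ν := by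
    intro x
    have h := le_self_add.trans (variance_le ν (fun s => G (x - s)) (by fun_prop))
    rw [mul_assoc] at h
    exact (ENNReal.mul_le_mul_iff_right (by norm_num) (by norm_num)).1 h
  refine (lintegral_mono pw).trans ?_
  rw [lintegral_const_mul, lintegral_lintegral_swap]
  · simp_rw [lintegral_sub_right_eq_self (fun x => ‖G x‖ₑ ^ 2)]
    rw [lintegral_const, mul_comm (∫⁻ x, ‖G x‖ₑ ^ 2)]
  · apply Measurable.aemeasurable; fun_prop
  · exact Measurable.lintegral_prod_right' (f := fun z : ℝ × ℝ => ‖G (z.1 - z.2)‖ₑ ^ 2)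
      (by fun_prop)

/-- At `p = x` both kernels vanish, since `0 ^ (α - 1) = 0` (the `rpow` convention) for `α ≠ 1`. -/
lemma fracInt_eq {α : ℝ} (hα : 0 < α) (hα1 : α < 1) {g G : ℝ → ℂ}
    (hG0 : ∀ x, x ∉ Ioc (0:ℝ) 1 → G x = 0)
    (hgG : G =ᵐ[volume.restrict (Ioc (0:ℝ) 1)] g) {x : ℝ} (hx : x ∈ Ioc (0:ℝ) 1) :
    fracInt α g x = (Real.Gamma α)⁻¹ • ∫ s, G (x - s) ∂(singMeasure α) := by
  rw [fracInt, if_neg hα.ne']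
  congr 1
  rw [integral_singMeasure, ← integral_sub_left_eq_self _ _ x,
    intervalIntegral.integral_of_le hx.1.le, ← integral_indicator measurableSet_Ioc]
  rw [EventuallyEq, ae_restrict_iff' measurableSet_Ioc] at hgG
  refine integral_congr_ae ?_
  filter_upwards [hgG] with p hp
  rw [sub_sub_cancel]
  by_cases hpx : p ∈ Ioc 0 x
  · have hp1 : p ∈ Ioc (0:ℝ) 1 := ⟨hpx.1, hpx.2.trans hx.2⟩
    rw [indicator_of_mem hpx, hp hp1, ← Complex.real_smul]
    congr 1
    rcases hpx.2.eq_or_lt with h | h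
    · have : (0:ℝ) ∉ Ioc (0:ℝ) 1 := by simp
      rw [h, sub_self, sing, indicator_of_notMem this, Real.zero_rpow (by linarith)]
    · have : x - p ∈ Ioc (0:ℝ) 1 := ⟨by linarith, by linarith [hpx.1, hx.2]⟩
      rw [sing, indicator_of_mem this]
  · rw [indicator_of_notMem hpx]
    rcases le_or_gt p 0 with h | h
    · rw [hG0 p fun h' => absurd h'.1 (not_lt.2 h), smul_zero]
    · have : x < p := by
        by_contra h'
        exact hpx ⟨h, not_lt.1 h'⟩
      rw [sing, indicator_of_notMem (fun h' => by linarith [h'.1]), zero_smul]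

lemma ofReal_L2normSq {f : ℝ → ℂ} (hf : AEStronglyMeasurable f (volume.restrict (Ioc (0:ℝ) 1)))
    (hf2 : ∫⁻ x in Ioc 0 1, ‖f x‖ₑ ^ 2 ≠ ∞) :
    ENNReal.ofReal (L2normSq f) = ∫⁻ x in Ioc 0 1, ‖f x‖ₑ ^ 2 := by
  have hi : IntegrableOn (fun x => ‖f x‖ ^ 2) (Ioc 0 1) := by
    refine ⟨(hf.norm.pow 2), ?_⟩
    rw [HasFiniteIntegral]
    refine lt_of_le_of_lt (lintegral_mono fun x => ?_) (lt_top_iff_ne_top.2 hf2)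
    simp [enorm_pow]
  rw [L2normSq, intervalIntegral.integral_of_le zero_le_one,
    ofReal_integral_eq_lintegral_ofReal hi (ae_of_all _ fun _ => by positivity)]
  simp_rw [sq_enorm_eq]

lemma ofReal_sobSeminormSq {α : ℝ} {v : ℝ → ℂ}
    (hv : IntegrableOn (fun q : ℝ × ℝ => ‖v q.1 - v q.2‖ ^ 2 / |q.1 - q.2| ^ (1 + 2 * α))
        ((Ioc (0:ℝ) 1) ×ˢ (Ioc (0:ℝ) 1))) :
    ENNReal.ofReal (sobSeminormSq α v) = gagl α v := by
  rw [IntegrableOn, Measure.volume_eq_prod, ← Measure.prod_restrict] at hv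
  have e : sobSeminormSq α v = ∫ q, ‖v q.1 - v q.2‖ ^ 2 / |q.1 - q.2| ^ (1 + 2 * α)
      ∂((volume.restrict (Ioc (0:ℝ) 1)).prod (volume.restrict (Ioc (0:ℝ) 1))) := by
    rw [integral_prod _ hv, sobSeminormSq, intervalIntegral.integral_of_le zero_le_one]
    simp_rw [intervalIntegral.integral_of_le (zero_le_one (α := ℝ))]
  rw [e, ofReal_integral_eq_lintegral_ofReal hv (ae_of_all _ fun _ => by positivity),
    lintegral_prod _ hv.aestronglyMeasurable.aemeasurable.ennreal_ofReal, gagl]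
  congr 1; ext x; congr 1; ext y
  rw [sq_enorm_eq, ← ENNReal.ofReal_mul (by positivity), div_eq_mul_inv,
    ← Real.rpow_neg (abs_nonneg _), neg_add, ← sub_eq_add_neg]

lemma L2normSq_nonneg (f : ℝ → ℂ) : 0 ≤ L2normSq f :=
  intervalIntegral.integral_nonneg zero_le_one fun _ _ => by positivity

lemma sobSeminormSq_nonneg (α : ℝ) (v : ℝ → ℂ) : 0 ≤ sobSeminormSq α v :=
  intervalIntegral.integral_nonneg zero_le_one fun _ _ =>
    intervalIntegral.integral_nonneg zero_le_one fun _ _ => by positivity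

lemma gagl_congr {α : ℝ} {v U : ℝ → ℂ} (h : U =ᵐ[volume.restrict (Ioc (0:ℝ) 1)] v) :
    gagl α U = gagl α v := by
  refine lintegral_congr_ae ?_
  filter_upwards [h] with x hx
  refine lintegral_congr_ae ?_
  filter_upwards [h] with y hy
  rw [hx, hy]

/-- A square integrable function on `(0,1)` has a measurable representative on `ℝ` vanishing outside
`(0,1]`. -/
lemma exists_rep {f : ℝ → ℂ} (hf : SqIntOn f) :
    ∃ F : ℝ → ℂ, Measurable F ∧ (∀ x, x ∉ Ioc (0:ℝ) 1 → F x = 0) ∧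
      F =ᵐ[volume.restrict (Ioc (0:ℝ) 1)] f ∧ ∫⁻ x, ‖F x‖ₑ ^ 2 ≠ ∞ ∧
      ∫⁻ x in Ioc 0 1, ‖F x‖ₑ ^ 2 = ENNReal.ofReal (L2normSq f) := by
  obtain ⟨hm, hi⟩ := hf
  set F : ℝ → ℂ := (Ioc (0:ℝ) 1).indicator (hm.mk f) with hF
  have h0 : ∀ x, x ∉ Ioc (0:ℝ) 1 → F x = 0 := fun x hx => indicator_of_notMem hx _
  have hae : F =ᵐ[volume.restrict (Ioc (0:ℝ) 1)] f :=
    (indicator_ae_eq_restrict measurableSet_Ioc).trans hm.ae_eq_mk.symm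
  have hfin : ∫⁻ x in Ioc 0 1, ‖f x‖ₑ ^ 2 ≠ ∞ := by
    have := hi.2
    rw [HasFiniteIntegral] at this
    simpa [enorm_pow] using this.ne
  have e : ∫⁻ x in Ioc 0 1, ‖F x‖ₑ ^ 2 = ∫⁻ x in Ioc 0 1, ‖f x‖ₑ ^ 2 := by
    refine lintegral_congr_ae ?_
    filter_upwards [hae] with x hx
    rw [hx]
  refine ⟨F, hm.stronglyMeasurable_mk.measurable.indicator measurableSet_Ioc, h0, hae, ?_, ?_⟩
  · have : ∫⁻ x, ‖F x‖ₑ ^ 2 = ∫⁻ x in Ioc 0 1, ‖F x‖ₑ ^ 2 := by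
      rw [← lintegral_indicator measurableSet_Ioc]
      congr 1; ext x
      by_cases hx : x ∈ Ioc (0:ℝ) 1
      · rw [indicator_of_mem hx]
      · rw [indicator_of_notMem hx, h0 x hx]
        simp
    rw [this, e]
    exact hfin
  · rw [e, ofReal_L2normSq hm hfin]

/-- The theorem with squared norms, in `[0,∞]`. -/
lemma pairing_sq_le {α : ℝ} (hα : α ∈ Ioo (0:ℝ) (1 / 2)) :
    ∃ C : ℝ≥0∞, C ≠ ∞ ∧ ∀ g v : ℝ → ℂ, SqIntOn g → SqIntOn v →
      IntegrableOn (fun q : ℝ × ℝ => ‖v q.1 - v q.2‖ ^ 2 / |q.1 - q.2| ^ (1 + 2 * α))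
        ((Ioc (0:ℝ) 1) ×ˢ (Ioc (0:ℝ) 1)) →
      ‖∫ x in (0:ℝ)..1, g x * (starRingEnd ℂ) (v x)‖ₑ ^ 2 ≤
        C * ENNReal.ofReal (L2normSq (fracInt α g)) * ENNReal.ofReal (sobNormSq α v) := by
  obtain ⟨h0, hhalf⟩ := hα
  have h1 : α < 1 := by linarith
  have := isFiniteMeasure_sing h0
  obtain ⟨D, hD, HD⟩ := exists_energy_le h0 hhalf
  set K := ∫ r in Ioi 0, kerK α 1 r with hK
  have hKpos : 0 < K := integral_kerK_pos h0 h1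
  have hKe : ‖K‖ₑ ^ 2 ≠ 0 := by simpa using hKpos.ne'
  have hKt : ‖K‖ₑ ^ 2 ≠ ∞ := by finiteness
  set c := ENNReal.ofReal ((1 + α) / (1 - α) + 1 / α) with hc
  set γ := ‖Real.Gamma α‖ₑ ^ 2 with hγ
  refine ⟨(‖K‖ₑ ^ 2)⁻¹ * (γ * (c * D)), ?_, fun g v hg hv hE => ?_⟩
  · have : (‖K‖ₑ ^ 2)⁻¹ ≠ ∞ := ENNReal.inv_ne_top.2 hKe
    finiteness
  obtain ⟨G, mG, G0, hGg, G2, eG⟩ := exists_rep hg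
  obtain ⟨U, mU, U0, hUv, U2, eU⟩ := exists_rep hv
  set F : ℝ → ℂ := fun x => ∫ s, G (x - s) ∂(singMeasure α) with hF
  have mF : Measurable F := measurable_integral_comp (V := fun z => G (z.1 - z.2)) (by fun_prop) _
  have hFfin : ∫⁻ x in Ioc 0 1, ‖F x‖ₑ ^ 2 ≠ ∞ := lintegral_conv_sing_ne_top h0 mG G2
  have hΓ : Real.Gamma α ≠ 0 := (Real.Gamma_pos_of_pos h0).ne'
  have eF : ∀ᵐ x ∂(volume.restrict (Ioc (0:ℝ) 1)), F x = Real.Gamma α • fracInt α g x := by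
    refine (ae_restrict_iff' measurableSet_Ioc).2 (ae_of_all _ fun x hx => ?_)
    rw [fracInt_eq h0 h1 G0 hGg hx, smul_inv_smul₀ hΓ]
  have eF' : fracInt α g =ᵐ[volume.restrict (Ioc (0:ℝ) 1)] fun x => (Real.Gamma α)⁻¹ • F x := by
    filter_upwards [eF] with x hx
    rw [hx, inv_smul_smul₀ hΓ]
  have mf : AEStronglyMeasurable (fracInt α g) (volume.restrict (Ioc (0:ℝ) 1)) :=
    (show Measurable fun x => (Real.Gamma α)⁻¹ • F x from
      by fun_prop).aestronglyMeasurable.congr eF'.symm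
  have nF : ∫⁻ x in Ioc 0 1, ‖F x‖ₑ ^ 2 = γ * ∫⁻ x in Ioc 0 1, ‖fracInt α g x‖ₑ ^ 2 := by
    rw [← lintegral_const_mul' _ _ (by finiteness)]
    refine lintegral_congr_ae ?_
    filter_upwards [eF] with x hx
    rw [hx, enorm_smul, mul_pow]
  have hγ0 : γ ≠ 0 := by simpa [hγ] using hΓ
  have nf : ∫⁻ x in Ioc 0 1, ‖fracInt α g x‖ₑ ^ 2 ≠ ∞ := by
    intro h
    rw [nF, h, ENNReal.mul_top hγ0] at hFfin
    exact hFfin rfl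
  rw [← ofReal_L2normSq mf nf] at nF
  have ecorr : corr G U 0 = ∫ x in (0:ℝ)..1, g x * (starRingEnd ℂ) (v x) := by
    rw [corr, intervalIntegral.integral_of_le zero_le_one, ← setIntegral_eq_integral_of_forall_compl_eq_zero
      (s := Ioc (0:ℝ) 1) fun x hx => by rw [G0 x hx, zero_mul]]
    refine integral_congr_ae ?_
    filter_upwards [hGg, hUv] with x hx1 hx2
    rw [hx1, add_zero, hx2]
  have main := duality_bound h0 h1 mG mU G0 U0 G2 U2
  have en := HD U mU U0 (by rw [eU]; finiteness)
  rw [eU, gagl_congr hUv, ← ofReal_sobSeminormSq hE,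
    ← ENNReal.ofReal_add (L2normSq_nonneg v) (sobSeminormSq_nonneg α v)] at en
  change energy α U ≤ D * ENNReal.ofReal (sobNormSq α v) at en
  rw [ecorr, enorm_smul, mul_pow, nF] at main
  have m2 := main.trans (mul_le_mul_right (mul_le_mul_right en c) _)
  rw [mul_comm, ← ENNReal.le_div_iff_mul_le (Or.inl hKe) (Or.inl hKt)] at m2
  refine m2.trans (le_of_eq ?_)
  rw [div_eq_mul_inv]
  ring

/-- for a in (0,1/2), the Riemann-Liouville derivative extends to a bounded
operator from L2(0,1) to H^{-a}(0,1): the pairing of g = d^a(I^a g) with any v in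
H^a(0,1) is controlled by the L2 norm of I^a g times the H^a norm of v. -/
theorem statement_17 (α : ℝ) (hα : α ∈ Set.Ioo (0:ℝ) (1 / 2)) :
    ∃ C > (0:ℝ), ∀ g v : ℝ → ℂ, SqIntOn g → SqIntOn v →
      MeasureTheory.IntegrableOn
        (fun q : ℝ × ℝ => ‖v q.1 - v q.2‖ ^ 2 / |q.1 - q.2| ^ (1 + 2 * α))
        ((Set.Ioc (0:ℝ) 1) ×ˢ (Set.Ioc (0:ℝ) 1)) →
      ‖∫ x in (0:ℝ)..1, g x * (starRingEnd ℂ) (v x)‖ ≤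
        C * Real.sqrt (L2normSq (fracInt α g)) * Real.sqrt (sobNormSq α v) := by
  obtain ⟨C, hC, H⟩ := pairing_sq_le hα
  -- Adding `1` makes the constant positive without inspecting `C`.
  refine ⟨Real.sqrt (C.toReal) + 1, by positivity, fun g v hg hv hE => ?_⟩
  have h := H g v hg hv hE
  have p1 := L2normSq_nonneg (fracInt α g)
  have h2 := ENNReal.toReal_mono (by finiteness) h
  rw [ENNReal.toReal_pow, toReal_enorm, ENNReal.toReal_mul, ENNReal.toReal_mul,
    ENNReal.toReal_ofReal p1, ENNReal.toReal_ofReal] at h2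
  · have h3 := Real.le_sqrt_of_sq_le h2
    rw [Real.sqrt_mul (by positivity), Real.sqrt_mul (by positivity)] at h3
    refine h3.trans ?_
    gcongr
    linarith
  · exact add_nonneg (L2normSq_nonneg v) (sobSeminormSq_nonneg α v)
end

section
/- Let α ∈ (0,1/2). There exists a constant C_α > 0 such that for every u ∈ L²(0,1) one has ‖I^α u‖_{L²(0,1)} ≤ C_α · sup{ |∫₀¹ u(x) · conj(φ(x)) dx| : φ ∈ L²(0,1), N_α(φ) ≤ 1 }. (This says that the fractional integral I^α extends to a bounded linear operator from the dual space H^{−α}(0,1) to L²(0,1).) -/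
/-!
Put `b = 1 - 2α ∈ (0,1)` and test the functional `u` against its own Riesz potential
`φ(x) = ∫₀¹ |x - p|⁻ᵇ u(p) dp`. Everything is measured by the quadratic form
`A = ∫₀¹∫₀¹ |p - q|⁻ᵇ u(p) conj(u(q)) dp dq`:

* the pairing `∫₀¹ u conj(φ)` equals `A` (`rieszForm_eq_left`);
* `∫_ℝ |∫₀¹ (z - p)₊^(α-1) u(p) dp|² dz = c A` with `c > 0` (`rieszForm_self`), so `A ≥ 0` and the
  squared `L²(0,1)` norm of `I^α u` is at most a multiple of `A`;
* the Gagliardo energy of `φ` over all of `ℝ²` is a multiple of `A` (`gagliardo_energy`);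
* `‖φ‖²` in `L²(0,1)` is at most a multiple of `A`, by positivity of the form at `u - t φ` and
  Young's inequality (`rieszPot_sq_le`).

Hence `N_α(φ)² ≤ D A`, and the test function `φ / √(D A)` gives `√A ≤ √D · M`, which bounds
`‖I^α u‖`.

The two exact identities are instances of `energy_identity`: expanding the square and using
Fubini, the energy is the quadratic form of `u` whose kernel is the Gram kernel
`∫ K(z,p) K(z,q) dz`. By translation and scaling this Gram kernel is a constant times `|p - q|⁻ᵇ`.
For the Riemann–Liouville kernel the constant is a beta integral. For the Gagliardo
energy it is the integral of `gagliardoCore`, and the point is its absolute convergence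
(`integrable_gagliardoCore`), obtained by interpolating between the trivial bound and the mean value
bound for `|x|⁻ᵇ - |y|⁻ᵇ`.
-/

open MeasureTheory Set Filter

/-! ### Integrability of power singularities -/

lemma integrable_near {a ρ : ℝ} (ha : a < 1) :
    Integrable ({t : ℝ | |t| ≤ ρ}.indicator fun t => |t| ^ (-a)) := by
  have h := (integrable_fun_norm_addHaar (volume : Measure ℝ)
    (f := (Iic ρ).indicator fun t : ℝ => t ^ (-a))).2 ?_
  · refine h.congr (Eventually.of_forall fun t => ?_)
    simp only [indicator, Real.norm_eq_abs, mem_Iic, Set.mem_ofPred_eq]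
  · simp only [Module.finrank_self, Nat.sub_self, pow_zero, one_smul]
    rcases le_or_gt ρ 0 with h0 | h0
    · refine (integrableOn_zero (s := Ioi (0 : ℝ))).congr_fun (fun t ht => ?_) measurableSet_Ioi
      have : ¬ t ≤ ρ := by have : 0 < t := ht; linarith
      simp [indicator, this]
    · have := (intervalIntegral.intervalIntegrable_rpow' (a := 0) (b := ρ)
        (by linarith : -1 < -a))
      rw [intervalIntegrable_iff_integrableOn_Ioc_of_le h0.le] at this
      rw [IntegrableOn, integrable_indicator_iff measurableSet_Iic, IntegrableOn,
        Measure.restrict_restrict measurableSet_Iic, inter_comm, Ioi_inter_Iic]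
      exact this

lemma integrable_far {a ρ : ℝ} (ha : 1 < a) (hρ : 0 < ρ) :
    Integrable ({t : ℝ | ρ < |t|}.indicator fun t => |t| ^ (-a)) := by
  have h := (integrable_fun_norm_addHaar (volume : Measure ℝ)
    (f := (Ioi ρ).indicator fun t : ℝ => t ^ (-a))).2 ?_
  · refine h.congr (Eventually.of_forall fun t => ?_)
    simp only [indicator, Real.norm_eq_abs, mem_Ioi, Set.mem_ofPred_eq]
  · simp only [Module.finrank_self, Nat.sub_self, pow_zero, one_smul]
    have := integrableOn_Ioi_rpow_of_lt (by linarith : -a < -1) hρ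
    rw [IntegrableOn, integrable_indicator_iff measurableSet_Ioi, IntegrableOn,
      Measure.restrict_restrict measurableSet_Ioi, Ioi_inter_Ioi, max_eq_left hρ.le]
    exact this

/-- A product of two power singularities is integrable as soon as each of them is locally
integrable and their product decays fast enough at infinity. -/
lemma integrable_two_powers {a b : ℝ} (ha0 : 0 < a) (ha : a < 1) (hb0 : 0 < b) (hb : b < 1)
    (hab : 1 < a + b) :
    Integrable fun x : ℝ => |x| ^ (-a) * |x - 1| ^ (-b) := by
  have h1 := (integrable_near (ρ := 1 / 2) ha).const_mul 2
  have h2 := ((integrable_near (ρ := 1 / 2) hb).comp_sub_right 1).const_mul 2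
  have h3 := (integrable_far (ρ := 1 / 2) hab (by norm_num)).const_mul 3
  refine ((h1.add h2).add h3).mono' (by fun_prop) (Eventually.of_forall fun x => ?_)
  have e1 : 0 ≤ |x| ^ (-a) := by positivity
  have e2 : 0 ≤ |x - 1| ^ (-b) := by positivity
  have e3 : 0 ≤ |x| ^ (-(a + b)) := by positivity
  rw [Real.norm_of_nonneg (by positivity)]
  -- a power with exponent in `[-1, 0]` is at most `c` times larger at a point `c ≥ 1` times smaller
  have key : ∀ {c s t y : ℝ}, 1 ≤ c → 0 < t → t < 1 → 0 < s → s ≤ c * y →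
      y ^ (-t) ≤ c * s ^ (-t) := by
    intro c s t y hc ht0 ht hs hsy
    have hy : s / c ≤ y := by rw [div_le_iff₀ (by linarith)]; linarith
    calc y ^ (-t) ≤ (s / c) ^ (-t) :=
          Real.rpow_le_rpow_of_nonpos (by positivity) hy (by linarith)
      _ = c ^ t * s ^ (-t) := by
          rw [Real.div_rpow hs.le (by linarith), Real.rpow_neg (by linarith : (0:ℝ) ≤ c)]
          field_simp
      _ ≤ c * s ^ (-t) := by
          gcongr
          calc c ^ t ≤ c ^ (1:ℝ) := Real.rpow_le_rpow_of_exponent_le hc ht.le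
            _ = c := Real.rpow_one c
  have i1 : 0 ≤ ({t : ℝ | |t| ≤ 1/2}.indicator fun t => |t| ^ (-a)) x :=
    indicator_nonneg (fun _ _ => by positivity) _
  have i2 : 0 ≤ ({t : ℝ | |t| ≤ 1/2}.indicator fun t => |t| ^ (-b)) (x - 1) :=
    indicator_nonneg (fun _ _ => by positivity) _
  have i3 : 0 ≤ ({t : ℝ | 1/2 < |t|}.indicator fun t => |t| ^ (-(a+b))) x :=
    indicator_nonneg (fun _ _ => by positivity) _
  simp only [Pi.add_apply]
  by_cases c1 : |x| ≤ 1 / 2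
  · rw [indicator_of_mem (show x ∈ {t : ℝ | |t| ≤ 1/2} from c1)]
    have : |x - 1| ^ (-b) ≤ 2 * (1:ℝ) ^ (-b) := by
      apply key <;> try linarith
      have := abs_sub_abs_le_abs_sub 1 x
      rw [abs_one, abs_sub_comm] at this
      linarith
    rw [Real.one_rpow] at this
    nlinarith
  · by_cases c2 : |x - 1| ≤ 1 / 2
    · rw [indicator_of_mem (show x - 1 ∈ {t : ℝ | |t| ≤ 1/2} from c2)]
      have : |x| ^ (-a) ≤ 2 * (1:ℝ) ^ (-a) := by
        apply key <;> linarith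
      rw [Real.one_rpow] at this
      nlinarith
    · push Not at c1 c2
      rw [indicator_of_mem (show x ∈ {t : ℝ | 1/2 < |t|} from c1)]
      have hx : 0 < |x| := by linarith
      have : |x - 1| ^ (-b) ≤ 3 * |x| ^ (-b) := by
        apply key <;> try linarith
        have := abs_sub_abs_le_abs_sub x 1
        rw [abs_one] at this
        linarith
      have h4 : |x| ^ (-(a + b)) = |x| ^ (-a) * |x| ^ (-b) := by
        rw [← Real.rpow_add hx]; ring_nf
      rw [h4]
      nlinarith

/-- Change of variables for a function that is a translated and rescaled copy of `F`. -/
lemma integrable_integral_affine {E : Type*} [NormedAddCommGroup E] [NormedSpace ℝ E]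
    [MeasurableSpace E] [BorelSpace E] [FiniteDimensional ℝ E] (μ : Measure E)
    [μ.IsAddHaarMeasure] {F f : E → ℝ} (hF : Integrable F μ) {l k : ℝ} (hl : l ≠ 0) (z₀ : E)
    (h : ∀ z, f z = k * F (l⁻¹ • (z - z₀))) :
    Integrable f μ ∧ ∫ z, f z ∂μ = k * (|l ^ Module.finrank ℝ E| * ∫ z, F z ∂μ) := by
  have hf : f = fun z => k * F (l⁻¹ • (z - z₀)) := funext h
  constructor
  · rw [hf]
    exact ((hF.comp_smul (inv_ne_zero hl)).comp_sub_right z₀).const_mul k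
  · rw [hf, integral_const_mul, integral_sub_right_eq_self (fun z => F (l⁻¹ • z)) z₀,
      Measure.integral_comp_inv_smul, smul_eq_mul]

lemma two_powers_scaled {a b : ℝ} (ha0 : 0 < a) (ha : a < 1) (hb0 : 0 < b) (hb : b < 1)
    (hab : 1 < a + b) {t : ℝ} (ht : t ≠ 0) :
    Integrable (fun x : ℝ => |x| ^ (-a) * |x - t| ^ (-b)) ∧
    ∫ x : ℝ, |x| ^ (-a) * |x - t| ^ (-b) =
      |t| ^ (1 - a - b) * ∫ x : ℝ, |x| ^ (-a) * |x - 1| ^ (-b) := by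
  have ht' : 0 < |t| := abs_pos.2 ht
  have := integrable_integral_affine volume (integrable_two_powers ha0 ha hb0 hb hab) ht 0
    (f := fun x : ℝ => |x| ^ (-a) * |x - t| ^ (-b)) (k := |t| ^ (-a - b)) ?_
  · refine ⟨this.1, this.2.trans ?_⟩
    rw [← mul_assoc, Module.finrank_self, pow_one]
    congr 1
    nth_rewrite 2 [← Real.rpow_one |t|]
    rw [← Real.rpow_add ht']
    ring_nf
  · intro x
    have e : t⁻¹ * x - 1 = t⁻¹ * (x - t) := by field_simp
    simp only [sub_zero, smul_eq_mul]
    rw [e, abs_mul, abs_mul, Real.mul_rpow (by positivity) (by positivity),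
      Real.mul_rpow (by positivity) (by positivity), abs_inv, Real.inv_rpow (by positivity),
      Real.inv_rpow (by positivity), Real.rpow_sub ht', Real.rpow_neg ht'.le, Real.rpow_neg ht'.le]
    field_simp

/-- Integrability in the plane of a product of three power singularities, located on the lines
`x = 0`, `y = 1` and `x = y`. -/
lemma integrable_cross {a b : ℝ} (ha0 : 0 < a) (ha : a < 1) (hb0 : 0 < b) (hb : b < 1)
    (hab : 2 < 2 * a + b) :
    Integrable fun z : ℝ × ℝ => |z.1| ^ (-a) * |z.2 - 1| ^ (-a) * |z.1 - z.2| ^ (-b) := by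
  have hab' : 1 < a + b := by linarith
  rw [Measure.volume_eq_prod, integrable_prod_iff' (by fun_prop)]
  have hne : ∀ᵐ y : ℝ, y ≠ 0 := by simp [ae_iff]
  constructor
  · filter_upwards [hne] with y hy
    refine ((two_powers_scaled ha0 ha hb0 hb hab' hy).1.const_mul (|y - 1| ^ (-a))).congr
      (Eventually.of_forall fun x => ?_)
    ring
  · refine ((integrable_two_powers (a := a + b - 1) (b := a) (by linarith) (by linarith) ha0 ha
      (by linarith)).const_mul (∫ x : ℝ, |x| ^ (-a) * |x - 1| ^ (-b))).congr ?_
    filter_upwards [hne] with y hy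
    have h := (two_powers_scaled ha0 ha hb0 hb hab' hy).2
    have e : ∀ x : ℝ, ‖|x| ^ (-a) * |y - 1| ^ (-a) * |x - y| ^ (-b)‖ =
        |y - 1| ^ (-a) * (|x| ^ (-a) * |x - y| ^ (-b)) := by
      intro x
      rw [Real.norm_of_nonneg (by positivity)]
      ring
    simp only [e]
    rw [integral_const_mul, h, show -(a + b - 1) = 1 - a - b by ring]
    ring

/-- Interpolation between the trivial bound and the mean value bound for `|x|⁻ᵇ - |y|⁻ᵇ`. -/
lemma abs_rpow_sub_le {b θ : ℝ} (hb0 : 0 < b) (hb : b ≤ 1) (hθ0 : 0 < θ) (hθ : θ ≤ 1)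
    (x y : ℝ) :
    |(|x| ^ (-b) - |y| ^ (-b))| ≤ (|x| ^ (-(b + θ)) + |y| ^ (-(b + θ))) * |x - y| ^ θ := by
  have pos : ∀ s t : ℝ, 0 < s → s ≤ t → |s ^ (-b) - t ^ (-b)| ≤ s ^ (-(b + θ)) * (t - s) ^ θ := by
    intro s t hs hst
    have ht : 0 < t := hs.trans_le hst
    have hmono : t ^ (-b) ≤ s ^ (-b) := Real.rpow_le_rpow_of_nonpos hs hst (by linarith)
    rw [abs_of_nonneg (by linarith)]
    have h1 : 1 - (s / t) ^ b ≤ ((t - s) / s) ^ θ := by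
      have hst1 : s / t ≤ 1 := (div_le_one ht).2 hst
      have h2 : s / t ≤ (s / t) ^ b := by
        calc s / t = (s / t) ^ (1:ℝ) := (Real.rpow_one _).symm
          _ ≤ _ := Real.rpow_le_rpow_of_exponent_ge (by positivity) hst1 hb
      have hw : 0 ≤ (t - s) / s := div_nonneg (by linarith) hs.le
      rcases le_or_gt ((t - s) / s) 1 with h3 | h3
      · have h4 : (t - s) / s ≤ ((t - s) / s) ^ θ := by
          rcases hw.eq_or_lt with h0 | h0
          · rw [← h0, Real.zero_rpow hθ0.ne']
          calc (t - s) / s = ((t - s) / s) ^ (1:ℝ) := (Real.rpow_one _).symm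
            _ ≤ _ := Real.rpow_le_rpow_of_exponent_ge h0 h3 hθ
        have h5 : 1 - s / t ≤ (t - s) / s := by
          rw [one_sub_div ht.ne']
          exact div_le_div_of_nonneg_left (by linarith) hs hst
        linarith
      · have h4 := Real.one_le_rpow h3.le hθ0.le
        have : 0 ≤ (s / t) ^ b := by positivity
        linarith
    have e1 : s ^ (-b) - t ^ (-b) = s ^ (-b) * (1 - (s / t) ^ b) := by
      rw [Real.div_rpow hs.le ht.le, Real.rpow_neg hs.le, Real.rpow_neg ht.le]
      field_simp
    have e2 : s ^ (-(b + θ)) * (t - s) ^ θ = s ^ (-b) * ((t - s) / s) ^ θ := by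
      rw [Real.div_rpow (by linarith) hs.le, neg_add, Real.rpow_add hs, Real.rpow_neg hs.le θ]
      field_simp
    rw [e1, e2]
    gcongr
  have zero : ∀ y : ℝ, |(0:ℝ) ^ (-b) - |y| ^ (-b)| ≤
      ((0:ℝ) ^ (-(b + θ)) + |y| ^ (-(b + θ))) * |y| ^ θ := by
    intro y
    rw [Real.zero_rpow (by linarith), Real.zero_rpow (by linarith), zero_sub, abs_neg, zero_add,
      abs_of_nonneg (by positivity)]
    rcases eq_or_ne y 0 with rfl | hy
    · simp [Real.zero_rpow (show -b ≠ 0 by linarith), Real.zero_rpow hθ0.ne']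
    · rw [← Real.rpow_add (abs_pos.2 hy)]
      ring_nf
      exact le_rfl
  have main : ∀ x y : ℝ, |x| ≤ |y| →
      |(|x| ^ (-b) - |y| ^ (-b))| ≤ (|x| ^ (-(b + θ)) + |y| ^ (-(b + θ))) * |x - y| ^ θ := by
    intro x y hxy
    rcases eq_or_ne x 0 with rfl | hx
    · simpa using zero y
    · refine (pos _ _ (abs_pos.2 hx) hxy).trans ?_
      have h1 : (|y| - |x|) ^ θ ≤ |x - y| ^ θ := by
        apply Real.rpow_le_rpow (by linarith) _ hθ0.le
        rw [abs_sub_comm]; exact abs_sub_abs_le_abs_sub y x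
      gcongr
      have : 0 ≤ |y| ^ (-(b + θ)) := by positivity
      linarith
  rcases le_total |x| |y| with h | h
  · exact main x y h
  · rw [abs_sub_comm (|x| ^ (-b)), add_comm (|x| ^ (-(b + θ))), abs_sub_comm x]
    exact main y x h

/-! ### Absolute convergence of the Gagliardo integral -/

/-- The integrand whose integral is the Gagliardo energy of the translates of `|x|⁻ᵇ` by `0` and
`1`, polarised. -/
noncomputable def gagliardoCore (b : ℝ) (z : ℝ × ℝ) : ℝ :=
  (|z.1| ^ (-b) - |z.2| ^ (-b)) * (|z.1 - 1| ^ (-b) - |z.2 - 1| ^ (-b)) * |z.1 - z.2| ^ (b - 2)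

lemma integrable_fst_mul_sub {f g : ℝ → ℝ} (hf : Integrable f) (hg : Integrable g) :
    Integrable (fun z : ℝ × ℝ => f z.2 * g (z.1 - z.2)) ∧
    Integrable (fun z : ℝ × ℝ => f z.1 * g (z.1 - z.2)) := by
  rw [Measure.volume_eq_prod]
  constructor
  · simpa using Integrable.convolution_integrand (μ := volume) (ν := volume)
      (ContinuousLinearMap.mul ℝ ℝ) hf hg
  · have := (Integrable.convolution_integrand (μ := volume) (ν := volume)
      (ContinuousLinearMap.mul ℝ ℝ) hf hg.comp_neg).swap
    simpa [Function.comp_def] using this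

/-- The pointwise bound behind the integrability of `gagliardoCore`, for one interpolation
exponent `θ = a - b`. -/
lemma gagliardoCore_le {a b : ℝ} (hb0 : 0 < b) (hb : b ≤ 1) (h0 : b < a) (h1 : a ≤ b + 1)
    (x y : ℝ) :
    |gagliardoCore b (x, y)| ≤
      ((|x| ^ (-a) * |x - 1| ^ (-a)) + (|y| ^ (-a) * |y - 1| ^ (-a)) +
        |x| ^ (-a) * |y - 1| ^ (-a) + |y| ^ (-a) * |x - 1| ^ (-a)) *
        |x - y| ^ (-(2 + b - 2 * a)) := by
  rcases eq_or_ne x y with rfl | hxy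
  · simp only [gagliardoCore, sub_self, zero_mul, abs_zero]
    positivity
  have hd : 0 < |x - y| := abs_pos.2 (sub_ne_zero.2 hxy)
  have b1 := abs_rpow_sub_le hb0 hb (θ := a - b) (by linarith) (by linarith) x y
  have b2 := abs_rpow_sub_le hb0 hb (θ := a - b) (by linarith) (by linarith) (x - 1) (y - 1)
  rw [show b + (a - b) = a by ring] at b1 b2
  rw [show x - 1 - (y - 1) = x - y by ring] at b2
  have e : |x - y| ^ (-(2 + b - 2 * a)) =
      |x - y| ^ (a - b) * |x - y| ^ (a - b) * |x - y| ^ (b - 2) := by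
    rw [← Real.rpow_add hd, ← Real.rpow_add hd]
    ring_nf
  rw [e, gagliardoCore, abs_mul, abs_mul, abs_of_nonneg (a := |x - y| ^ (b - 2)) (by positivity)]
  calc _ ≤ ((|x| ^ (-a) + |y| ^ (-a)) * |x - y| ^ (a - b)) *
        ((|x - 1| ^ (-a) + |y - 1| ^ (-a)) * |x - y| ^ (a - b)) * |x - y| ^ (b - 2) := by
        gcongr
    _ = _ := by ring

/-- The near-diagonal part is handled with `a = (3 + b) / 4`, the part far from the diagonal with
`a = (1 + b²) / 2`: no single interpolation exponent gives a bound integrable in both regimes. -/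
lemma integrable_gagliardoCore {b : ℝ} (hb0 : 0 < b) (hb : b < 1) :
    Integrable (gagliardoCore b) := by
  set a₁ := (3 + b) / 4 with ha₁
  set a₂ := (1 + b ^ 2) / 2 with ha₂
  have hbb : 0 < b ^ 2 := by positivity
  have hbb1 : b ^ 2 < b := by nlinarith
  have hbb2 : b < a₂ := by nlinarith [mul_pos (sub_pos.2 hb) (sub_pos.2 hb)]
  have n1 := integrable_near (a := 2 + b - 2 * a₁) (ρ := 1) (by linarith)
  have n2 := integrable_far (a := 2 + b - 2 * a₂) (ρ := 1) (by linarith) one_pos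
  have s1 := integrable_two_powers (a := a₁) (b := a₁) (by linarith) (by linarith) (by linarith)
    (by linarith) (by linarith)
  have s2 := integrable_two_powers (a := a₂) (b := a₂) (by linarith) (by linarith) (by linarith)
    (by linarith) (by linarith)
  have c1 := integrable_cross (a := a₁) (b := 2 + b - 2 * a₁) (by linarith) (by linarith)
    (by linarith) (by linarith) (by linarith)
  have c2 := integrable_cross (a := a₂) (b := 1 - b ^ 2 / 2) (by linarith) (by linarith)
    (by linarith) (by linarith) (by linarith)
  obtain ⟨t1, t1'⟩ := integrable_fst_mul_sub s1 n1
  obtain ⟨t2, t2'⟩ := integrable_fst_mul_sub s2 n2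
  have hmeas : AEStronglyMeasurable (gagliardoCore b) := by
    unfold gagliardoCore
    fun_prop
  refine ((((t1.add t1').add (c1.add c1.swap))).add ((t2.add t2').add (c2.add c2.swap))).mono'
    hmeas (Eventually.of_forall fun z => ?_)
  obtain ⟨x, y⟩ := z
  have j1 : 0 ≤ ({t : ℝ | |t| ≤ 1}.indicator fun t => |t| ^ (-(2 + b - 2 * a₁))) (x - y) :=
    indicator_nonneg (fun _ _ => by positivity) _
  have j2 : 0 ≤ ({t : ℝ | 1 < |t|}.indicator fun t => |t| ^ (-(2 + b - 2 * a₂))) (x - y) :=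
    indicator_nonneg (fun _ _ => by positivity) _
  simp only [Pi.add_apply, Function.comp_apply, Prod.swap_prod_mk, Real.norm_eq_abs]
  rw [abs_sub_comm y x]
  by_cases h : |x - y| ≤ 1
  · have := gagliardoCore_le (a := a₁) hb0 hb.le (by linarith) (by linarith) x y
    rw [indicator_of_mem (show x - y ∈ {t : ℝ | |t| ≤ 1} from h)]
    refine this.trans ?_
    have k1 : 0 ≤ |x| ^ (-a₂) * |y - 1| ^ (-a₂) * |x - y| ^ (-(1 - b ^ 2 / 2)) := by positivity
    have k2 : 0 ≤ |y| ^ (-a₂) * |x - 1| ^ (-a₂) * |x - y| ^ (-(1 - b ^ 2 / 2)) := by positivity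
    have k3 : 0 ≤ |x| ^ (-a₂) * |x - 1| ^ (-a₂) := by positivity
    have k4 : 0 ≤ |y| ^ (-a₂) * |y - 1| ^ (-a₂) := by positivity
    have k5 := mul_nonneg k3 j2
    have k6 := mul_nonneg k4 j2
    linarith
  · have := gagliardoCore_le (a := a₂) hb0 hb.le (by linarith) (by linarith) x y
    push Not at h
    rw [indicator_of_mem (show x - y ∈ {t : ℝ | 1 < |t|} from h)]
    refine this.trans ?_
    have k1 : 0 ≤ |x| ^ (-a₁) * |y - 1| ^ (-a₁) * |x - y| ^ (-(2 + b - 2 * a₁)) := by positivity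
    have k2 : 0 ≤ |y| ^ (-a₁) * |x - 1| ^ (-a₁) * |x - y| ^ (-(2 + b - 2 * a₁)) := by positivity
    have k3 : 0 ≤ |x| ^ (-a₁) * |x - 1| ^ (-a₁) := by positivity
    have k4 : 0 ≤ |y| ^ (-a₁) * |y - 1| ^ (-a₁) := by positivity
    have k5 := mul_nonneg k3 j1
    have k6 := mul_nonneg k4 j1
    have k7 : |x - y| ^ (-(2 + b - 2 * a₂)) ≤ |x - y| ^ (-(1 - b ^ 2 / 2)) :=
      Real.rpow_le_rpow_of_exponent_le h.le (by linarith)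
    have k8 : 0 ≤ |x| ^ (-a₂) * |y - 1| ^ (-a₂) := by positivity
    have k9 : 0 ≤ |y| ^ (-a₂) * |x - 1| ^ (-a₂) := by positivity
    have k10 := mul_le_mul_of_nonneg_left k7 k8
    have k11 := mul_le_mul_of_nonneg_left k7 k9
    linarith

/-! ### Energies and Gram kernels -/

/-- **Energy identity.** If the Gram kernel `∫ K(z,p) K(z,q) dμ(z)` is (absolutely convergent and)
equal to `c * r p q` off the diagonal, then the energy of `U(z) = ∫ K(z,p) u(p) dν(p)` is
`c` times the quadratic form of `u` with kernel `r`. -/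
lemma energy_identity {Z : Type*} [MeasurableSpace Z] {μ : Measure Z} [SFinite μ] {ν : Measure ℝ}
    [SFinite ν] {K : Z → ℝ → ℝ} (hK : Measurable (Function.uncurry K)) {u : ℝ → ℂ}
    (hu : AEStronglyMeasurable u ν) {r : ℝ → ℝ → ℝ} {c c' : ℝ}
    (hne : ∀ᵐ w : ℝ × ℝ ∂(ν.prod ν), w.1 ≠ w.2)
    (hI : ∀ p q, p ≠ q → Integrable (fun z => K z p * K z q) μ)
    (h1 : ∀ p q, p ≠ q → ∫ z, |K z p * K z q| ∂μ = c' * r p q)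
    (h2 : ∀ p q, p ≠ q → ∫ z, K z p * K z q ∂μ = c * r p q)
    (hA : Integrable (fun w : ℝ × ℝ => (r w.1 w.2 : ℂ) * (u w.1 * starRingEnd ℂ (u w.2)))
      (ν.prod ν)) :
    Integrable (fun z => ‖∫ p, (K z p : ℂ) * u p ∂ν‖ ^ 2) μ ∧
    ((∫ z, ‖∫ p, (K z p : ℂ) * u p ∂ν‖ ^ 2 ∂μ : ℝ) : ℂ) =
      c * ∫ w : ℝ × ℝ, (r w.1 w.2 : ℂ) * (u w.1 * starRingEnd ℂ (u w.2)) ∂(ν.prod ν) := by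
  set F : Z × (ℝ × ℝ) → ℂ := fun m =>
    ((K m.1 m.2.1 * K m.1 m.2.2 : ℝ) : ℂ) * (u m.2.1 * starRingEnd ℂ (u m.2.2)) with hF
  have hFm : AEStronglyMeasurable F (μ.prod (ν.prod ν)) := by
    have k1 : Measurable fun m : Z × (ℝ × ℝ) => ((K m.1 m.2.1 * K m.1 m.2.2 : ℝ) : ℂ) := by
      have m1 : Measurable fun m : Z × (ℝ × ℝ) => K m.1 m.2.1 :=
        hK.comp (by fun_prop : Measurable fun m : Z × (ℝ × ℝ) => (m.1, m.2.1))
      have m2 : Measurable fun m : Z × (ℝ × ℝ) => K m.1 m.2.2 :=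
        hK.comp (by fun_prop : Measurable fun m : Z × (ℝ × ℝ) => (m.1, m.2.2))
      exact Complex.measurable_ofReal.comp (m1.mul m2)
    have m3 : AEStronglyMeasurable (fun w : ℝ × ℝ => u w.1) (ν.prod ν) := hu.comp_fst
    have m4 : AEStronglyMeasurable (fun w : ℝ × ℝ => u w.2) (ν.prod ν) := hu.comp_snd
    have m5 : AEStronglyMeasurable (fun w : ℝ × ℝ => starRingEnd ℂ (u w.2)) (ν.prod ν) :=
      Complex.continuous_conj.comp_aestronglyMeasurable m4
    have k2 : AEStronglyMeasurable (fun w : ℝ × ℝ => u w.1 * starRingEnd ℂ (u w.2)) (ν.prod ν) :=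
      m3.mul m5
    have k3 : AEStronglyMeasurable (fun m : Z × (ℝ × ℝ) => u m.2.1 * starRingEnd ℂ (u m.2.2))
        (μ.prod (ν.prod ν)) := k2.comp_snd
    exact k1.aestronglyMeasurable.mul k3
  have hFi : Integrable F (μ.prod (ν.prod ν)) := by
    rw [integrable_prod_iff' hFm]
    constructor
    · filter_upwards [hne] with w hw
      have h3 : Integrable (fun z => ((K z w.1 * K z w.2 : ℝ) : ℂ)) μ := (hI _ _ hw).ofReal
      exact h3.mul_const (u w.1 * starRingEnd ℂ (u w.2))
    · refine (hA.norm.const_mul (|c'|)).congr ?_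
      filter_upwards [hne] with w hw
      have e : ∀ z, ‖F (z, w)‖ = |K z w.1 * K z w.2| * ‖u w.1 * starRingEnd ℂ (u w.2)‖ := by
        intro z
        simp only [hF, norm_mul, Complex.norm_real, Real.norm_eq_abs, abs_mul]
      simp only [e]
      rw [integral_mul_const, norm_mul, ← mul_assoc, Complex.norm_real, Real.norm_eq_abs,
        ← abs_mul, ← h1 _ _ hw, abs_of_nonneg (integral_nonneg fun _ => abs_nonneg _)]
  have inner : ∀ z, ∫ w, F (z, w) ∂(ν.prod ν) =
      ((‖∫ p, (K z p : ℂ) * u p ∂ν‖ ^ 2 : ℝ) : ℂ) := by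
    intro z
    have e : ∀ w : ℝ × ℝ, F (z, w) =
        ((K z w.1 : ℂ) * u w.1) * starRingEnd ℂ ((K z w.2 : ℂ) * u w.2) := by
      intro w
      simp only [hF, map_mul, Complex.conj_ofReal, Complex.ofReal_mul]
      ring
    simp only [e]
    rw [integral_prod_mul (fun p => (K z p : ℂ) * u p)
      (fun q => starRingEnd ℂ ((K z q : ℂ) * u q)), integral_conj, Complex.mul_conj,
      Complex.normSq_eq_norm_sq]
  constructor
  · have := hFi.integral_prod_left.re
    refine this.congr (Eventually.of_forall fun z => ?_)
    simp only [inner z]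
    exact Complex.ofReal_re _
  · rw [← integral_complex_ofReal]
    simp only [← inner]
    rw [integral_integral_swap (f := fun z w => F (z, w)) hFi, ← integral_const_mul]
    refine integral_congr_ae ?_
    filter_upwards [hne] with w hw
    simp only [hF]
    rw [integral_mul_const, integral_complex_ofReal, h2 _ _ hw]
    push_cast
    ring

/-! ### The Riesz potential and its quadratic form on the unit interval -/

/-- Lebesgue measure on the unit interval. -/
noncomputable abbrev unitVol : Measure ℝ := volume.restrict (Ioc (0 : ℝ) 1)

/-- The Riesz potential `∫₀¹ |x - p|⁻ᵇ u(p) dp`, up to normalisation, as a function on `ℝ`. -/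
noncomputable def rieszPot (b : ℝ) (u : ℝ → ℂ) (x : ℝ) : ℂ :=
  ∫ p, ((|x - p| ^ (-b) : ℝ) : ℂ) * u p ∂unitVol

/-- The sesquilinear form `∫₀¹∫₀¹ |p - q|⁻ᵇ f(p) conj(g(q)) dp dq`. -/
noncomputable def rieszForm (b : ℝ) (f g : ℝ → ℂ) : ℂ :=
  ∫ w : ℝ × ℝ, ((|w.1 - w.2| ^ (-b) : ℝ) : ℂ) * (f w.1 * starRingEnd ℂ (g w.2))
    ∂(unitVol.prod unitVol)

/-- The mass of `|t|⁻ᵇ` on `[-1, 1]`, which is the constant in Young's inequality below. -/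
noncomputable def rieszMass (b : ℝ) : ℝ := ∫ t, {t : ℝ | |t| ≤ 1}.indicator (fun t => |t| ^ (-b)) t

lemma SqIntOn.sub_const_mul {f g : ℝ → ℂ} (hf : SqIntOn f) (hg : SqIntOn g) (c : ℂ) :
    SqIntOn fun x => f x - c * g x := by
  have hm : AEStronglyMeasurable (fun x => f x - c * g x) unitVol := hf.1.sub (hg.1.const_mul c)
  refine ⟨hm, ?_⟩
  refine ((hf.2.const_mul 2).add (hg.2.const_mul (2 * ‖c‖ ^ 2))).mono' (hm.norm.pow 2)
    (Eventually.of_forall fun x => ?_)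
  rw [Real.norm_of_nonneg (by positivity)]
  have h := norm_sub_le (f x) (c * g x)
  rw [norm_mul] at h
  simp only [Pi.add_apply]
  calc ‖f x - c * g x‖ ^ 2 ≤ (‖f x‖ + ‖c‖ * ‖g x‖) ^ 2 := by gcongr
    _ ≤ _ := by nlinarith [sq_nonneg (‖f x‖ - ‖c‖ * ‖g x‖)]

lemma ae_ne_unitVol : ∀ᵐ w : ℝ × ℝ ∂(unitVol.prod unitVol), w.1 ≠ w.2 := by
  have hm : MeasurableSet {w : ℝ × ℝ | w.1 = w.2} := measurableSet_eq_fun measurable_fst measurable_snd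
  have : (unitVol.prod unitVol) {w : ℝ × ℝ | w.1 = w.2} = 0 := by
    rw [Measure.measure_prod_null hm]
    refine Eventually.of_forall fun x => ?_
    have : Prod.mk x ⁻¹' {w : ℝ × ℝ | w.1 = w.2} = {x} := by
      ext y; simp [eq_comm]
    show unitVol (Prod.mk x ⁻¹' {w : ℝ × ℝ | w.1 = w.2}) = 0
    rw [this]
    simp
  rw [ae_iff]
  simpa using this

lemma ae_unitVol_prod : ∀ᵐ w : ℝ × ℝ ∂(unitVol.prod unitVol),
    w.1 ∈ Ioc (0:ℝ) 1 ∧ w.2 ∈ Ioc (0:ℝ) 1 := by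
  rw [Measure.prod_restrict]
  exact ae_restrict_mem (measurableSet_Ioc.prod measurableSet_Ioc)

lemma indicator_sub_eq {b x y : ℝ} (hx : x ∈ Ioc (0:ℝ) 1) (hy : y ∈ Ioc (0:ℝ) 1) :
    {t : ℝ | |t| ≤ 1}.indicator (fun t => |t| ^ (-b)) (x - y) = |x - y| ^ (-b) := by
  apply indicator_of_mem
  show |x - y| ≤ 1
  rw [abs_le]
  constructor <;> linarith [hx.1, hx.2, hy.1, hy.2]

lemma rieszMass_bound {b : ℝ} (hb : b < 1) {x : ℝ} (hx : x ∈ Ioc (0:ℝ) 1) :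
    Integrable (fun p => |x - p| ^ (-b)) unitVol ∧ ∫ p, |x - p| ^ (-b) ∂unitVol ≤ rieszMass b := by
  have h := (integrable_near (ρ := 1) hb).comp_sub_left x
  have e : (fun p => {t : ℝ | |t| ≤ 1}.indicator (fun t => |t| ^ (-b)) (x - p)) =ᵐ[unitVol]
      fun p => |x - p| ^ (-b) := by
    filter_upwards [ae_restrict_mem measurableSet_Ioc] with p hp
    exact indicator_sub_eq hx hp
  refine ⟨h.restrict.congr e, ?_⟩
  rw [← integral_congr_ae e, rieszMass,
    ← integral_sub_left_eq_self ({t : ℝ | |t| ≤ 1}.indicator fun t => |t| ^ (-b)) volume x]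
  exact setIntegral_le_integral h
    (Eventually.of_forall fun p => indicator_nonneg (fun _ _ => by positivity) _)

lemma rieszMass_nonneg (b : ℝ) : 0 ≤ rieszMass b :=
  integral_nonneg fun _ => indicator_nonneg (fun _ _ => by positivity) _

lemma integrable_riesz_snd {b : ℝ} (hb : b < 1) {F : ℝ → ℝ} (hF : Integrable F unitVol) :
    Integrable (fun w : ℝ × ℝ => |w.1 - w.2| ^ (-b) * F w.2) (unitVol.prod unitVol) := by
  have h : Integrable (fun w : ℝ × ℝ => F w.2 *
      {t : ℝ | |t| ≤ 1}.indicator (fun t => |t| ^ (-b)) (w.1 - w.2)) (volume.prod unitVol) := by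
    simpa using Integrable.convolution_integrand (μ := volume) (ν := unitVol)
      (ContinuousLinearMap.mul ℝ ℝ) hF (integrable_near (ρ := 1) hb)
  have e : unitVol.prod unitVol = (volume.prod unitVol).restrict (Ioc (0:ℝ) 1 ×ˢ univ) := by
    rw [← Measure.prod_restrict, Measure.restrict_univ]
  have h2 : Integrable _ (unitVol.prod unitVol) := e ▸ h.restrict
  refine h2.congr ?_
  filter_upwards [ae_unitVol_prod] with w hw
  rw [indicator_sub_eq hw.1 hw.2, mul_comm]

lemma integrable_riesz_fst {b : ℝ} (hb : b < 1) {F : ℝ → ℝ} (hF : Integrable F unitVol) :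
    Integrable (fun w : ℝ × ℝ => |w.1 - w.2| ^ (-b) * F w.1) (unitVol.prod unitVol) := by
  refine (integrable_riesz_snd hb hF).swap.congr (Eventually.of_forall fun w => ?_)
  simp only [Function.comp_apply, Prod.fst_swap, Prod.snd_swap, abs_sub_comm]

lemma integral_riesz_fst_le {b : ℝ} (hb : b < 1) {F : ℝ → ℝ} (hF : Integrable F unitVol)
    (h0 : ∀ x, 0 ≤ F x) :
    ∫ w : ℝ × ℝ, |w.1 - w.2| ^ (-b) * F w.1 ∂(unitVol.prod unitVol) ≤
      rieszMass b * ∫ x, F x ∂unitVol := by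
  have hi := integrable_riesz_fst hb hF
  rw [integral_prod _ hi, ← integral_const_mul]
  refine integral_mono_ae hi.integral_prod_left (hF.const_mul _) ?_
  filter_upwards [ae_restrict_mem measurableSet_Ioc] with x hx
  rw [integral_mul_const]
  exact mul_le_mul_of_nonneg_right (rieszMass_bound hb hx).2 (h0 x)

lemma integral_riesz_snd_le {b : ℝ} (hb : b < 1) {F : ℝ → ℝ} (hF : Integrable F unitVol)
    (h0 : ∀ x, 0 ≤ F x) :
    ∫ w : ℝ × ℝ, |w.1 - w.2| ^ (-b) * F w.2 ∂(unitVol.prod unitVol) ≤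
      rieszMass b * ∫ x, F x ∂unitVol := by
  refine le_of_eq_of_le ?_ (integral_riesz_fst_le hb hF h0)
  rw [← integral_prod_swap]
  simp only [Prod.fst_swap, Prod.snd_swap, abs_sub_comm]

lemma norm_riesz_integrand_le (b : ℝ) (f g : ℝ → ℂ) (w : ℝ × ℝ) :
    ‖((|w.1 - w.2| ^ (-b) : ℝ) : ℂ) * (f w.1 * starRingEnd ℂ (g w.2))‖ ≤
      2⁻¹ * (|w.1 - w.2| ^ (-b) * ‖f w.1‖ ^ 2 + |w.1 - w.2| ^ (-b) * ‖g w.2‖ ^ 2) := by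
  rw [norm_mul, norm_mul, Complex.norm_real, RCLike.norm_conj,
    Real.norm_of_nonneg (by positivity)]
  have h0 : 0 ≤ |w.1 - w.2| ^ (-b) := by positivity
  nlinarith [mul_nonneg h0 (sq_nonneg (‖f w.1‖ - ‖g w.2‖))]

lemma integrable_rieszForm {b : ℝ} (hb : b < 1) {f g : ℝ → ℂ} (hf : SqIntOn f) (hg : SqIntOn g) :
    Integrable (fun w : ℝ × ℝ => ((|w.1 - w.2| ^ (-b) : ℝ) : ℂ) *
      (f w.1 * starRingEnd ℂ (g w.2))) (unitVol.prod unitVol) := by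
  have m3 : AEStronglyMeasurable (fun w : ℝ × ℝ => f w.1) (unitVol.prod unitVol) :=
    hf.1.comp_fst
  have m4 : AEStronglyMeasurable (fun w : ℝ × ℝ => g w.2) (unitVol.prod unitVol) :=
    hg.1.comp_snd
  have k2 : AEStronglyMeasurable (fun w : ℝ × ℝ => f w.1 * starRingEnd ℂ (g w.2))
      (unitVol.prod unitVol) :=
    m3.mul (Complex.continuous_conj.comp_aestronglyMeasurable m4)
  have k1 : Measurable fun w : ℝ × ℝ => ((|w.1 - w.2| ^ (-b) : ℝ) : ℂ) := by fun_prop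
  exact (((integrable_riesz_fst hb hf.2).add (integrable_riesz_snd hb hg.2)).const_mul 2⁻¹).mono'
    (k1.aestronglyMeasurable.mul k2) (Eventually.of_forall fun w => norm_riesz_integrand_le b f g w)

lemma norm_rieszForm_le {b : ℝ} (hb : b < 1) {g : ℝ → ℂ} (hg : SqIntOn g) :
    ‖rieszForm b g g‖ ≤ rieszMass b * ∫ x, ‖g x‖ ^ 2 ∂unitVol := by
  have i1 := integrable_riesz_fst hb hg.2
  have i2 := integrable_riesz_snd hb hg.2
  have h1 := integral_riesz_fst_le hb hg.2 fun x => by positivity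
  have h2 := integral_riesz_snd_le hb hg.2 fun x => by positivity
  calc ‖rieszForm b g g‖ ≤ ∫ w : ℝ × ℝ, 2⁻¹ * (|w.1 - w.2| ^ (-b) * ‖g w.1‖ ^ 2 +
        |w.1 - w.2| ^ (-b) * ‖g w.2‖ ^ 2) ∂(unitVol.prod unitVol) :=
        norm_integral_le_of_norm_le ((i1.add i2).const_mul _)
          (Eventually.of_forall fun w => norm_riesz_integrand_le b g g w)
    _ ≤ _ := by
        rw [integral_const_mul, integral_add i1 i2]
        linarith

lemma ae_integrable_rieszPot {b : ℝ} (hb : b < 1) {u : ℝ → ℂ} (hu : SqIntOn u) :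
    ∀ᵐ x ∂unitVol, Integrable (fun p => ((|x - p| ^ (-b) : ℝ) : ℂ) * u p) unitVol := by
  have one : SqIntOn fun _ => (1:ℂ) := ⟨by fun_prop, by simp⟩
  filter_upwards [(integrable_rieszForm hb one hu).prod_right_ae] with x hx
  have := (Complex.conjLIE.toLinearIsometry.toContinuousLinearMap).integrable_comp hx
  refine this.congr (Eventually.of_forall fun p => ?_)
  simp

/-- Young's inequality (with exponents `1` and `2`) for the truncated Riesz kernel. -/
lemma sqIntOn_rieszPot {b : ℝ} (hb : b < 1) {u : ℝ → ℂ} (hu : SqIntOn u) :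
    SqIntOn (rieszPot b u) := by
  have one : SqIntOn fun _ => (1:ℂ) := ⟨by fun_prop, by simp⟩
  have hm : AEStronglyMeasurable (rieszPot b u) unitVol := by
    have := (integrable_rieszForm hb hu one).swap.integral_prod_left.1
    refine this.congr (Eventually.of_forall fun x => ?_)
    simp only [rieszPot, Function.comp_apply, Prod.fst_swap, Prod.snd_swap, map_one, mul_one,
      abs_sub_comm]
  refine ⟨hm, ?_⟩
  have hW := integrable_riesz_snd hb hu.2
  refine (hW.integral_prod_left.const_mul (rieszMass b + 1)).mono' (hm.norm.pow 2) ?_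
  filter_upwards [ae_restrict_mem measurableSet_Ioc, hW.prod_right_ae,
    ae_integrable_rieszPot hb hu] with x hx hWx hux
  obtain ⟨hr, hr1⟩ := rieszMass_bound hb hx
  set k := rieszMass b + 1 with hk
  have hk0 : 0 < k := by have := rieszMass_nonneg b; linarith
  set W := ∫ p, |x - p| ^ (-b) * ‖u p‖ ^ 2 ∂unitVol with hWdef
  have hun : Integrable (fun p => |x - p| ^ (-b) * ‖u p‖) unitVol := by
    refine hux.norm.congr (Eventually.of_forall fun p => ?_)
    simp only
    rw [norm_mul, Complex.norm_real, Real.norm_of_nonneg (by positivity)]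
  set S := ∫ p, |x - p| ^ (-b) * ‖u p‖ ∂unitVol with hS
  have hS0 : 0 ≤ S := integral_nonneg fun p => by positivity
  have h1 : ‖rieszPot b u x‖ ≤ S := by
    refine (norm_integral_le_integral_norm _).trans (le_of_eq ?_)
    refine integral_congr_ae (Eventually.of_forall fun p => ?_)
    simp only
    rw [norm_mul, Complex.norm_real, Real.norm_of_nonneg (by positivity)]
  have h2 : ∀ s : ℝ, 2 * s * S ≤ s ^ 2 * k + W := by
    intro s
    have : ∫ p, 2 * s * (|x - p| ^ (-b) * ‖u p‖) ∂unitVol ≤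
        ∫ p, (s ^ 2 * |x - p| ^ (-b) + |x - p| ^ (-b) * ‖u p‖ ^ 2) ∂unitVol := by
      refine integral_mono (hun.const_mul _) ((hr.const_mul _).add hWx) fun p => ?_
      have h0 : 0 ≤ |x - p| ^ (-b) := by positivity
      simp only
      nlinarith [mul_nonneg h0 (sq_nonneg (s - ‖u p‖))]
    rw [integral_const_mul, integral_add (hr.const_mul _) hWx, integral_const_mul] at this
    nlinarith [sq_nonneg s]
  have h3 := h2 (S / k)
  have h4 : S ^ 2 ≤ k * W := by
    have e1 : 2 * (S / k) * S = 2 * (S ^ 2 / k) := by ring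
    have e2 : (S / k) ^ 2 * k = S ^ 2 / k := by field_simp
    rw [e1, e2] at h3
    have h5 : S ^ 2 / k ≤ W := by linarith
    rw [div_le_iff₀ hk0] at h5
    linarith
  rw [Real.norm_of_nonneg (by positivity)]
  calc ‖rieszPot b u x‖ ^ 2 ≤ S ^ 2 := by gcongr
    _ ≤ k * W := h4

lemma rieszForm_eq_left {b : ℝ} (hb : b < 1) {f g : ℝ → ℂ} (hf : SqIntOn f) (hg : SqIntOn g) :
    rieszForm b f g = ∫ p, f p * starRingEnd ℂ (rieszPot b g p) ∂unitVol := by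
  rw [rieszForm, integral_prod _ (integrable_rieszForm hb hf hg)]
  refine integral_congr_ae (Eventually.of_forall fun p => ?_)
  simp only [rieszPot]
  rw [← integral_conj, ← integral_const_mul]
  refine integral_congr_ae (Eventually.of_forall fun q => ?_)
  simp only [map_mul, Complex.conj_ofReal]
  ring

lemma rieszForm_eq_right {b : ℝ} (hb : b < 1) {f g : ℝ → ℂ} (hf : SqIntOn f) (hg : SqIntOn g) :
    rieszForm b f g = ∫ q, rieszPot b f q * starRingEnd ℂ (g q) ∂unitVol := by
  rw [rieszForm, integral_prod_symm _ (integrable_rieszForm hb hf hg)]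
  refine integral_congr_ae (Eventually.of_forall fun q => ?_)
  simp only [rieszPot]
  rw [← integral_mul_const]
  refine integral_congr_ae (Eventually.of_forall fun p => ?_)
  simp only [abs_sub_comm p q]
  ring

lemma integral_sub_sub_add {X : Type*} [MeasurableSpace X] {μ : Measure X} {A B C D : X → ℂ}
    (hA : Integrable A μ) (hB : Integrable B μ) (hC : Integrable C μ) (hD : Integrable D μ) :
    ∫ x, (A x - B x - C x + D x) ∂μ =
      ∫ x, A x ∂μ - ∫ x, B x ∂μ - ∫ x, C x ∂μ + ∫ x, D x ∂μ := by
  have h1 : Integrable (fun x => A x - B x) μ := hA.sub hB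
  have h2 : Integrable (fun x => A x - B x - C x) μ := h1.sub hC
  rw [integral_add h2 hD, integral_sub h1 hC, integral_sub hA hB]

lemma rieszForm_sub {b : ℝ} (hb : b < 1) {f g : ℝ → ℂ} (hf : SqIntOn f) (hg : SqIntOn g) (t : ℝ) :
    rieszForm b (fun x => f x - t * g x) (fun x => f x - t * g x) =
      rieszForm b f f - t * rieszForm b f g - t * rieszForm b g f + t ^ 2 * rieszForm b g g := by
  have i1 := integrable_rieszForm hb hf hf
  have i2 := (integrable_rieszForm hb hf hg).const_mul (t : ℂ)
  have i3 := (integrable_rieszForm hb hg hf).const_mul (t : ℂ)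
  have i4 := (integrable_rieszForm hb hg hg).const_mul ((t : ℂ) ^ 2)
  simp only [rieszForm]
  rw [← integral_const_mul, ← integral_const_mul, ← integral_const_mul]
  refine Eq.trans ?_ (integral_sub_sub_add i1 i2 i3 i4)
  refine integral_congr_ae (Eventually.of_forall fun w => ?_)
  simp only [map_sub, map_mul, Complex.conj_ofReal]
  ring

/-! ### The Riemann–Liouville energy -/

/-- The Riemann–Liouville kernel `t₊^(α-1)`. -/
noncomputable def rlKernel (α t : ℝ) : ℝ := if 0 < t then t ^ (α - 1) else 0

lemma rlKernel_nonneg (α t : ℝ) : 0 ≤ rlKernel α t := by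
  unfold rlKernel
  split_ifs <;> positivity

lemma measurable_rlKernel (α : ℝ) : Measurable (rlKernel α) :=
  Measurable.ite measurableSet_Ioi (by fun_prop) measurable_const

lemma rlKernel_le (α t : ℝ) : rlKernel α t ≤ |t| ^ (-(1 - α)) := by
  unfold rlKernel
  split_ifs with h
  · rw [abs_of_pos h, neg_sub]
  · positivity

lemma rlKernel_inv_mul (α : ℝ) {l : ℝ} (hl : 0 < l) (t : ℝ) :
    rlKernel α (l⁻¹ * t) = l ^ (1 - α) * rlKernel α t := by
  unfold rlKernel
  have hl' : 0 < l⁻¹ := inv_pos.2 hl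
  by_cases h : 0 < t
  · rw [if_pos h, if_pos (mul_pos hl' h), Real.mul_rpow hl'.le h.le, Real.inv_rpow hl.le,
      ← Real.rpow_neg hl.le, neg_sub]
  · rw [if_neg h, if_neg (fun h' => h ((mul_pos_iff_of_pos_left hl').1 h')), mul_zero]

/-- The beta integral that relates the Riemann–Liouville kernel to the Riesz kernel. -/
noncomputable def rlConst (α : ℝ) : ℝ := ∫ t, rlKernel α t * rlKernel α (t - 1)

lemma integrable_rlKernel {α : ℝ} (h0 : 0 < α) (h1 : α < 1 / 2) :
    Integrable fun t => rlKernel α t * rlKernel α (t - 1) := by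
  have hm := measurable_rlKernel α
  refine (integrable_two_powers (a := 1 - α) (b := 1 - α) (by linarith) (by linarith) (by linarith)
    (by linarith) (by linarith)).mono'
    (hm.mul (hm.comp (measurable_id.sub_const 1))).aestronglyMeasurable
    (Eventually.of_forall fun t => ?_)
  rw [Real.norm_of_nonneg (mul_nonneg (rlKernel_nonneg _ _) (rlKernel_nonneg _ _))]
  exact mul_le_mul (rlKernel_le _ _) (rlKernel_le _ _) (rlKernel_nonneg _ _) (by positivity)

lemma rlConst_pos {α : ℝ} (h0 : 0 < α) (h1 : α < 1 / 2) : 0 < rlConst α := by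
  rw [rlConst, integral_pos_iff_support_of_nonneg
    (fun t => mul_nonneg (rlKernel_nonneg _ _) (rlKernel_nonneg _ _)) (integrable_rlKernel h0 h1)]
  have hs : Ioi (1:ℝ) ⊆ Function.support fun t => rlKernel α t * rlKernel α (t - 1) := by
    intro t ht
    have ht : 1 < t := ht
    have h2 : 0 < t := by linarith
    have h3 : 0 < t - 1 := by linarith
    simp only [Function.mem_support, rlKernel, if_pos h2, if_pos h3]
    positivity
  refine lt_of_lt_of_le ?_ (measure_mono hs)
  simp

/-- The Gram kernel of the Riemann–Liouville kernel is a multiple of the Riesz kernel, by scaling. -/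
lemma rl_gram {α : ℝ} (h0 : 0 < α) (h1 : α < 1 / 2) {p q : ℝ} (hpq : p ≠ q) :
    Integrable (fun z => rlKernel α (z - p) * rlKernel α (z - q)) ∧
    ∫ z, rlKernel α (z - p) * rlKernel α (z - q) = rlConst α * |p - q| ^ (-(1 - 2 * α)) := by
  have main : ∀ p q : ℝ, p < q →
      Integrable (fun z => rlKernel α (z - p) * rlKernel α (z - q)) ∧
      ∫ z, rlKernel α (z - p) * rlKernel α (z - q) = rlConst α * |p - q| ^ (-(1 - 2 * α)) := by
    intro p q hpq
    have hl : 0 < q - p := sub_pos.2 hpq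
    have h := integrable_integral_affine volume (integrable_rlKernel h0 h1) hl.ne' p
      (f := fun z => rlKernel α (z - p) * rlKernel α (z - q))
      (k := (q - p) ^ (α - 1) * (q - p) ^ (α - 1)) ?_
    · refine ⟨h.1, h.2.trans ?_⟩
      rw [← rlConst, Module.finrank_self, pow_one, abs_of_pos hl, abs_sub_comm, abs_of_pos hl,
        ← mul_assoc, mul_comm]
      congr 1
      nth_rewrite 3 [← Real.rpow_one (q - p)]
      rw [← Real.rpow_add hl, ← Real.rpow_add hl]
      ring_nf
    · intro z
      have e : (q - p)⁻¹ * (z - p) - 1 = (q - p)⁻¹ * (z - q) := by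
        field_simp
        ring
      simp only [smul_eq_mul]
      rw [e, rlKernel_inv_mul α hl, rlKernel_inv_mul α hl]
      have e2 : (q - p) ^ (α - 1) * (q - p) ^ (1 - α) = 1 := by
        rw [← Real.rpow_add hl]
        simp
      calc rlKernel α (z - p) * rlKernel α (z - q) = ((q - p) ^ (α - 1) * (q - p) ^ (1 - α)) *
          ((q - p) ^ (α - 1) * (q - p) ^ (1 - α)) *
            (rlKernel α (z - p) * rlKernel α (z - q)) := by rw [e2]; ring
        _ = _ := by ring
  rcases hpq.lt_or_gt with h | h
  · exact main p q h
  · have := main q p h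
    simp only [mul_comm (rlKernel α (_ - q))] at this
    rwa [abs_sub_comm] at this

/-- `∫₀¹ (z - p)₊^(α-1) u(p) dp`, the unnormalised fractional integral on all of `ℝ`. -/
noncomputable def rlPot (α : ℝ) (u : ℝ → ℂ) (z : ℝ) : ℂ :=
  ∫ p, (rlKernel α (z - p) : ℂ) * u p ∂unitVol

lemma rl_energy {α : ℝ} (h0 : 0 < α) (h1 : α < 1 / 2) {u : ℝ → ℂ} (hu : SqIntOn u) :
    Integrable (fun z => ‖rlPot α u z‖ ^ 2) ∧
    ((∫ z, ‖rlPot α u z‖ ^ 2 : ℝ) : ℂ) = rlConst α * rieszForm (1 - 2 * α) u u := by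
  refine energy_identity (μ := volume) (ν := unitVol) (K := fun z p => rlKernel α (z - p))
    (r := fun p q => |p - q| ^ (-(1 - 2 * α))) (c' := rlConst α) ?_ hu.1 ae_ne_unitVol
    (fun p q h => (rl_gram h0 h1 h).1) ?_ (fun p q h => (rl_gram h0 h1 h).2)
    (integrable_rieszForm (by linarith) hu hu)
  · exact (measurable_rlKernel α).comp (measurable_fst.sub measurable_snd)
  · intro p q h
    rw [← (rl_gram h0 h1 h).2]
    congr 1
    ext z
    exact abs_of_nonneg (mul_nonneg (rlKernel_nonneg _ _) (rlKernel_nonneg _ _))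

/-- The Riesz form is positive, being a positive multiple of a squared `L²(ℝ)` norm. -/
lemma rieszForm_self {α : ℝ} (h0 : 0 < α) (h1 : α < 1 / 2) {u : ℝ → ℂ} (hu : SqIntOn u) :
    rieszForm (1 - 2 * α) u u = ((rieszForm (1 - 2 * α) u u).re : ℂ) ∧
      0 ≤ (rieszForm (1 - 2 * α) u u).re ∧
      ∫ z, ‖rlPot α u z‖ ^ 2 = rlConst α * (rieszForm (1 - 2 * α) u u).re := by
  have hc := rlConst_pos h0 h1
  have h := (rl_energy h0 h1 hu).2
  set E := ∫ z, ‖rlPot α u z‖ ^ 2 with hE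
  have hE0 : 0 ≤ E := integral_nonneg fun z => by positivity
  have h2 : rieszForm (1 - 2 * α) u u = ((E / rlConst α : ℝ) : ℂ) := by
    rw [Complex.ofReal_div, h, mul_div_cancel_left₀]
    exact_mod_cast hc.ne'
  rw [h2, Complex.ofReal_re]
  refine ⟨rfl, by positivity, ?_⟩
  field_simp

/-! ### The Gagliardo energy of the Riesz potential -/

/-- The kernel whose associated energy is the Gagliardo seminorm of the Riesz potential. -/
noncomputable def gagliardoKernel (b : ℝ) (z : ℝ × ℝ) (p : ℝ) : ℝ :=
  (|z.1 - p| ^ (-b) - |z.2 - p| ^ (-b)) * |z.1 - z.2| ^ ((b - 2) / 2)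

lemma gagliardoKernel_mul (b : ℝ) {p q : ℝ} (hpq : p ≠ q) (z : ℝ × ℝ) :
    gagliardoKernel b z p * gagliardoKernel b z q =
      |q - p| ^ (-b - 2) * gagliardoCore b ((q - p)⁻¹ • (z - (p, p))) := by
  obtain ⟨x, y⟩ := z
  have hl : q - p ≠ 0 := sub_ne_zero.2 hpq.symm
  have hl' : 0 < |q - p| := abs_pos.2 hl
  have hx : (q - p)⁻¹ * (x - p) - 1 = (q - p)⁻¹ * (x - q) := by field_simp; ring
  have hy : (q - p)⁻¹ * (y - p) - 1 = (q - p)⁻¹ * (y - q) := by field_simp; ring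
  have hxy : (q - p)⁻¹ * (x - p) - (q - p)⁻¹ * (y - p) = (q - p)⁻¹ * (x - y) := by ring
  have sc : ∀ t e : ℝ, |(q - p)⁻¹ * t| ^ e = |q - p| ^ (-e) * |t| ^ e := by
    intro t e
    rw [abs_mul, Real.mul_rpow (by positivity) (by positivity), abs_inv, Real.inv_rpow hl'.le,
      Real.rpow_neg hl'.le]
  have hsq : |x - y| ^ ((b - 2) / 2) * |x - y| ^ ((b - 2) / 2) = |x - y| ^ (b - 2) := by
    rw [← sq, ← Real.rpow_natCast, ← Real.rpow_mul (abs_nonneg _)]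
    congr 1
    push_cast
    ring
  have hll : |q - p| ^ (-b - 2) * (|q - p| ^ b * |q - p| ^ b * |q - p| ^ (2 - b)) = 1 := by
    rw [← Real.rpow_add hl', ← Real.rpow_add hl', ← Real.rpow_add hl',
      show -b - 2 + (b + b + (2 - b)) = 0 by ring, Real.rpow_zero]
  simp only [gagliardoKernel, gagliardoCore, Prod.mk_sub_mk, Prod.smul_mk, smul_eq_mul, hx, hy, hxy,
    sc, neg_neg, neg_sub]
  calc _ = (|x - p| ^ (-b) - |y - p| ^ (-b)) * (|x - q| ^ (-b) - |y - q| ^ (-b)) *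
        (|x - y| ^ ((b - 2) / 2) * |x - y| ^ ((b - 2) / 2)) := by ring
    _ = (|q - p| ^ (-b - 2) * (|q - p| ^ b * |q - p| ^ b * |q - p| ^ (2 - b))) *
        ((|x - p| ^ (-b) - |y - p| ^ (-b)) * (|x - q| ^ (-b) - |y - q| ^ (-b)) *
        |x - y| ^ (b - 2)) := by rw [hsq, hll, one_mul]
    _ = _ := by ring

/-- Integrating the scaling relation `gagliardoKernel_mul` over the plane: the Jacobian `(q - p)²`
turns the factor `|q - p|^(-b-2)` into the Riesz kernel. -/
lemma gagliardo_gram {b : ℝ} {F G : ℝ × ℝ → ℝ} (hF : Integrable F) {p q : ℝ} (hpq : p ≠ q)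
    (h : ∀ z, G z = |q - p| ^ (-b - 2) * F ((q - p)⁻¹ • (z - (p, p)))) :
    Integrable G ∧ ∫ z, G z = (∫ z, F z) * |p - q| ^ (-b) := by
  have hl : q - p ≠ 0 := sub_ne_zero.2 hpq.symm
  have hl' : 0 < |q - p| := abs_pos.2 hl
  obtain ⟨i1, i2⟩ := integrable_integral_affine volume hF hl (p, p) h
  refine ⟨i1, i2.trans ?_⟩
  rw [Module.finrank_prod, Module.finrank_self, ← mul_assoc, mul_comm]
  congr 1
  rw [abs_pow, abs_sub_comm p q, ← Real.rpow_natCast, ← Real.rpow_add hl']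
  congr 1
  push_cast
  ring

lemma gagliardo_energy {b : ℝ} (hb0 : 0 < b) (hb : b < 1) {u : ℝ → ℂ} (hu : SqIntOn u) :
    Integrable (fun z => ‖∫ p, (gagliardoKernel b z p : ℂ) * u p ∂unitVol‖ ^ 2) ∧
    ((∫ z, ‖∫ p, (gagliardoKernel b z p : ℂ) * u p ∂unitVol‖ ^ 2 : ℝ) : ℂ) =
      ((∫ z, gagliardoCore b z : ℝ) : ℂ) * rieszForm b u u := by
  have hcore := integrable_gagliardoCore hb0 hb
  refine energy_identity (μ := volume) (ν := unitVol) (K := gagliardoKernel b)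
    (r := fun p q => |p - q| ^ (-b)) (c' := ∫ z, |gagliardoCore b z|) ?_ hu.1 ae_ne_unitVol
    (fun p q h => (gagliardo_gram hcore h (gagliardoKernel_mul b h)).1) ?_
    (fun p q h => (gagliardo_gram hcore h (gagliardoKernel_mul b h)).2)
    (integrable_rieszForm hb hu hu)
  · unfold gagliardoKernel Function.uncurry
    fun_prop
  · intro p q h
    refine (gagliardo_gram hcore.abs h fun z => ?_).2
    rw [gagliardoKernel_mul b h, abs_mul, abs_of_nonneg (by positivity)]

/-- The Riesz potential is bounded in `L²(0,1)` by the form: expand the positive quantity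
`⟪u - t φ, R (u - t φ)⟫` with `φ = R u` and choose `t`. -/
lemma rieszPot_sq_le {α : ℝ} (h0 : 0 < α) (h1 : α < 1 / 2) {u : ℝ → ℂ} (hu : SqIntOn u) :
    ∫ x, ‖rieszPot (1 - 2 * α) u x‖ ^ 2 ∂unitVol ≤
      (rieszMass (1 - 2 * α) + 1) * (rieszForm (1 - 2 * α) u u).re := by
  set b := 1 - 2 * α with hbdef
  have hb : b < 1 := by linarith
  have hφ := sqIntOn_rieszPot hb hu
  set N := ∫ x, ‖rieszPot b u x‖ ^ 2 ∂unitVol with hN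
  have hN0 : 0 ≤ N := integral_nonneg fun x => by positivity
  set k := rieszMass b + 1 with hk
  have hk0 : 0 < k := by have := rieszMass_nonneg b; linarith
  have hNC : ∫ x, rieszPot b u x * starRingEnd ℂ (rieszPot b u x) ∂unitVol = (N : ℂ) := by
    rw [hN, ← integral_complex_ofReal]
    refine integral_congr_ae (Eventually.of_forall fun x => ?_)
    simp only
    rw [Complex.mul_conj, Complex.normSq_eq_norm_sq]
  have c1 : rieszForm b u (rieszPot b u) = N := (rieszForm_eq_right hb hu hφ).trans hNC
  have c2 : rieszForm b (rieszPot b u) u = N := (rieszForm_eq_left hb hφ hu).trans hNC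
  have c3 : (rieszForm b (rieszPot b u) (rieszPot b u)).re ≤ k * N := by
    refine (Complex.re_le_norm _).trans ((norm_rieszForm_le hb hφ).trans ?_)
    rw [← hN]
    nlinarith
  have hpos := (rieszForm_self h0 h1 (hu.sub_const_mul hφ ((k⁻¹ : ℝ) : ℂ))).2.1
  rw [← hbdef, rieszForm_sub hb hu hφ, c1, c2] at hpos
  have e : (rieszForm b u u - ((k⁻¹ : ℝ) : ℂ) * N - ((k⁻¹ : ℝ) : ℂ) * N + ((k⁻¹ : ℝ) : ℂ) ^ 2 *
      rieszForm b (rieszPot b u) (rieszPot b u)).re = (rieszForm b u u).re - 2 * k⁻¹ * N +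
      (k⁻¹) ^ 2 * (rieszForm b (rieszPot b u) (rieszPot b u)).re := by
    rw [← Complex.ofReal_pow, Complex.add_re, Complex.sub_re, Complex.sub_re,
      Complex.re_ofReal_mul, Complex.re_ofReal_mul, Complex.ofReal_re]
    ring
  rw [e] at hpos
  have h3 : (k⁻¹) ^ 2 * (rieszForm b (rieszPot b u) (rieszPot b u)).re ≤ k⁻¹ * N := by
    calc _ ≤ (k⁻¹) ^ 2 * (k * N) := by gcongr
      _ = k⁻¹ * N := by field_simp
  have h4 : k⁻¹ * N ≤ (rieszForm b u u).re := by linarith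
  rwa [inv_mul_le_iff₀ hk0] at h4

/-! ### Duality with the fractional Sobolev norm -/

/-- The potential of `u` with the Gagliardo kernel has square equal to the Gagliardo quotient of the
Riesz potential, wherever the latter is given by convergent integrals. -/
lemma integral_gagliardoKernel {b α : ℝ} (hbα : b = 1 - 2 * α) {u : ℝ → ℂ} {x y : ℝ}
    (hx : Integrable (fun p => ((|x - p| ^ (-b) : ℝ) : ℂ) * u p) unitVol)
    (hy : Integrable (fun p => ((|y - p| ^ (-b) : ℝ) : ℂ) * u p) unitVol) :
    ‖∫ p, (gagliardoKernel b (x, y) p : ℂ) * u p ∂unitVol‖ ^ 2 =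
      ‖rieszPot b u x - rieszPot b u y‖ ^ 2 / |x - y| ^ (1 + 2 * α) := by
  have e : ∫ p, (gagliardoKernel b (x, y) p : ℂ) * u p ∂unitVol =
      ((|x - y| ^ ((b - 2) / 2) : ℝ) : ℂ) * (rieszPot b u x - rieszPot b u y) := by
    rw [rieszPot, rieszPot, ← integral_sub hx hy, ← integral_const_mul]
    refine integral_congr_ae (Eventually.of_forall fun p => ?_)
    simp only [gagliardoKernel]
    push_cast
    ring
  have hsq : (|x - y| ^ ((b - 2) / 2)) ^ 2 = (|x - y| ^ (1 + 2 * α))⁻¹ := by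
    rw [← Real.rpow_neg (abs_nonneg _), ← Real.rpow_natCast, ← Real.rpow_mul (abs_nonneg _)]
    congr 1
    rw [hbα]
    push_cast
    ring
  rw [e, norm_mul, mul_pow, Complex.norm_real, Real.norm_of_nonneg (by positivity), hsq]
  ring

/-- The Riesz potential lies in `H^α(0,1)`, with seminorm controlled by the form: the Gagliardo
energy on the unit square is at most the one on `ℝ²`, which is a multiple of the form. -/
lemma sobSeminormSq_rieszPot_le {α : ℝ} (h0 : 0 < α) (h1 : α < 1 / 2) {u : ℝ → ℂ}
    (hu : SqIntOn u) :
    IntegrableOn (fun q : ℝ × ℝ => ‖rieszPot (1 - 2 * α) u q.1 - rieszPot (1 - 2 * α) u q.2‖ ^ 2 /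
      |q.1 - q.2| ^ (1 + 2 * α)) (Ioc (0:ℝ) 1 ×ˢ Ioc (0:ℝ) 1) ∧
    sobSeminormSq α (rieszPot (1 - 2 * α) u) ≤
      |∫ z, gagliardoCore (1 - 2 * α) z| * (rieszForm (1 - 2 * α) u u).re := by
  set b := 1 - 2 * α with hbα
  have hb0 : 0 < b := by linarith
  have hb : b < 1 := by linarith
  obtain ⟨i1, i2⟩ := gagliardo_energy hb0 hb hu
  obtain ⟨f1, f2, -⟩ := rieszForm_self h0 h1 hu
  rw [← hbα] at f1 f2
  have hprod : (volume : Measure (ℝ × ℝ)).restrict (Ioc (0:ℝ) 1 ×ˢ Ioc (0:ℝ) 1) =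
      unitVol.prod unitVol := by
    rw [Measure.prod_restrict, Measure.volume_eq_prod]
  have hae := ae_integrable_rieszPot hb hu
  have hA : (fun z : ℝ × ℝ => ‖∫ p, (gagliardoKernel b z p : ℂ) * u p ∂unitVol‖ ^ 2)
      =ᵐ[unitVol.prod unitVol] fun q => ‖rieszPot b u q.1 - rieszPot b u q.2‖ ^ 2 /
        |q.1 - q.2| ^ (1 + 2 * α) := by
    filter_upwards [Measure.quasiMeasurePreserving_fst.ae hae,
      Measure.quasiMeasurePreserving_snd.ae hae] with w hw1 hw2
    exact integral_gagliardoKernel hbα hw1 hw2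
  have i3 := (hprod ▸ i1.restrict (s := Ioc (0:ℝ) 1 ×ˢ Ioc (0:ℝ) 1) :
    Integrable _ (unitVol.prod unitVol)).congr hA
  refine ⟨?_, ?_⟩
  · rw [IntegrableOn, hprod]
    exact i3
  · have e1 : sobSeminormSq α (rieszPot b u) = ∫ q : ℝ × ℝ,
        ‖rieszPot b u q.1 - rieszPot b u q.2‖ ^ 2 / |q.1 - q.2| ^ (1 + 2 * α)
        ∂(unitVol.prod unitVol) := by
      rw [integral_prod _ i3]
      simp only [sobSeminormSq, intervalIntegral.integral_of_le zero_le_one]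
    rw [e1, ← integral_congr_ae hA, ← hprod]
    refine (setIntegral_le_integral i1 (Eventually.of_forall fun z => by positivity)).trans ?_
    have i4 : ∫ z, ‖∫ p, (gagliardoKernel b z p : ℂ) * u p ∂unitVol‖ ^ 2 =
        (∫ z, gagliardoCore b z) * (rieszForm b u u).re := by
      rw [f1, ← Complex.ofReal_mul] at i2
      exact_mod_cast i2
    rw [i4]
    exact mul_le_mul_of_nonneg_right (le_abs_self _) f2

lemma fracInt_eq_rlPot {α : ℝ} (h0 : 0 < α) (h1 : α < 1 / 2) (u : ℝ → ℂ) {x : ℝ}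
    (hx : x ∈ Ioc (0:ℝ) 1) :
    fracInt α u x = ((Real.Gamma α)⁻¹ : ℝ) • rlPot α u x := by
  rw [fracInt, if_neg h0.ne', rlPot, intervalIntegral.integral_of_le hx.1.le]
  congr 1
  have e : Ioc (0:ℝ) x = Ioc 0 1 ∩ Ioc 0 x := by
    rw [inter_eq_right.2 (Ioc_subset_Ioc_right hx.2)]
  rw [e, ← setIntegral_indicator measurableSet_Ioc]
  refine setIntegral_congr_fun measurableSet_Ioc fun p hp => ?_
  simp only [rlKernel]
  rcases lt_trichotomy p x with h | h | h
  · rw [indicator_of_mem (show p ∈ Ioc (0:ℝ) x from ⟨hp.1, h.le⟩), if_pos (sub_pos.2 h)]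
  · -- at the endpoint both kernels vanish, because `0 ^ (α - 1) = 0`
    subst h
    rw [indicator_of_mem (show p ∈ Ioc (0:ℝ) p from ⟨hp.1, le_rfl⟩), sub_self, if_neg (lt_irrefl _),
      Real.zero_rpow (by linarith)]
  · rw [indicator_of_notMem (fun hm : p ∈ Ioc (0:ℝ) x => absurd hm.2 (not_le.2 h)),
      if_neg (by linarith)]
    simp

lemma L2normSq_eq (f : ℝ → ℂ) : L2normSq f = ∫ x, ‖f x‖ ^ 2 ∂unitVol :=
  intervalIntegral.integral_of_le zero_le_one

lemma L2normSq_fracInt_le {α : ℝ} (h0 : 0 < α) (h1 : α < 1 / 2) {u : ℝ → ℂ} (hu : SqIntOn u) :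
    L2normSq (fracInt α u) ≤
      ((Real.Gamma α)⁻¹) ^ 2 * (rlConst α * (rieszForm (1 - 2 * α) u u).re) := by
  have e : L2normSq (fracInt α u) =
      ∫ x, ((Real.Gamma α)⁻¹) ^ 2 * ‖rlPot α u x‖ ^ 2 ∂unitVol := by
    rw [L2normSq_eq]
    refine setIntegral_congr_fun measurableSet_Ioc fun x hx => ?_
    rw [fracInt_eq_rlPot h0 h1 u hx, norm_smul, mul_pow, Real.norm_eq_abs, sq_abs]
  rw [e, integral_const_mul, ← (rieszForm_self h0 h1 hu).2.2]
  exact mul_le_mul_of_nonneg_left (setIntegral_le_integral (rl_energy h0 h1 hu).1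
    (Eventually.of_forall fun z => by positivity)) (sq_nonneg _)

lemma SqIntOn.const_mul {f : ℝ → ℂ} (hf : SqIntOn f) (c : ℂ) : SqIntOn fun x => c * f x := by
  refine ⟨hf.1.const_mul c, ?_⟩
  simp only [norm_mul, mul_pow]
  exact hf.2.const_mul (‖c‖ ^ 2)

lemma gagliardo_const_mul (s : ℝ) (f : ℝ → ℂ) (c : ℂ) (x y : ℝ) :
    ‖c * f x - c * f y‖ ^ 2 / |x - y| ^ (1 + 2 * s) =
      ‖c‖ ^ 2 * (‖f x - f y‖ ^ 2 / |x - y| ^ (1 + 2 * s)) := by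
  rw [← mul_sub, norm_mul, mul_pow, mul_div_assoc]

lemma sobNormSq_const_mul (s : ℝ) (f : ℝ → ℂ) (c : ℂ) :
    sobNormSq s (fun x => c * f x) = ‖c‖ ^ 2 * sobNormSq s f := by
  simp only [sobNormSq, L2normSq, sobSeminormSq, gagliardo_const_mul, norm_mul, mul_pow,
    intervalIntegral.integral_const_mul, mul_add]

/-- for a in (0,1/2), the fractional integral I^a extends to a bounded
operator from H^{-a}(0,1) to L2(0,1): the L2 norm of I^a u is controlled by (a constant
times) any upper bound M for the pairings of u against test functions phi in the unit
ball of H^a(0,1). -/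
theorem statement_18 (α : ℝ) (hα : α ∈ Set.Ioo (0:ℝ) (1 / 2)) :
    ∃ C > (0:ℝ), ∀ u : ℝ → ℂ, SqIntOn u → ∀ M : ℝ,
      (∀ φ : ℝ → ℂ, SqIntOn φ →
        MeasureTheory.IntegrableOn
          (fun q : ℝ × ℝ => ‖φ q.1 - φ q.2‖ ^ 2 / |q.1 - q.2| ^ (1 + 2 * α))
          ((Set.Ioc (0:ℝ) 1) ×ˢ (Set.Ioc (0:ℝ) 1)) →
        Real.sqrt (sobNormSq α φ) ≤ 1 →
        ‖∫ x in (0:ℝ)..1, u x * (starRingEnd ℂ) (φ x)‖ ≤ M) →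
      Real.sqrt (L2normSq (fracInt α u)) ≤ C * M := by
  obtain ⟨h0, h1⟩ := hα
  have hb : 1 - 2 * α < 1 := by linarith
  have hΓ : 0 < (Real.Gamma α)⁻¹ := inv_pos.2 (Real.Gamma_pos_of_pos h0)
  have hc := rlConst_pos h0 h1
  set D : ℝ := rieszMass (1 - 2 * α) + 1 + |∫ z, gagliardoCore (1 - 2 * α) z| with hD
  have hD0 : 0 < D := by
    have := rieszMass_nonneg (1 - 2 * α)
    positivity
  refine ⟨(Real.Gamma α)⁻¹ * √(rlConst α) * √D, by positivity, fun u hu M hM => ?_⟩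
  set φ := rieszPot (1 - 2 * α) u with hφ
  set A := (rieszForm (1 - 2 * α) u u).re with hA
  obtain ⟨hA1, hA0, -⟩ := rieszForm_self h0 h1 hu
  rw [← hA] at hA1 hA0
  obtain ⟨hG, hGle⟩ := sobSeminormSq_rieszPot_le h0 h1 hu
  have hφ2 := sqIntOn_rieszPot hb hu
  have hN : sobNormSq α φ ≤ D * A := by
    have h2 := rieszPot_sq_le h0 h1 hu
    rw [← L2normSq_eq] at h2
    rw [sobNormSq, hD, add_mul]
    exact add_le_add h2 hGle
  have hpair : ∫ x in (0:ℝ)..1, u x * starRingEnd ℂ (φ x) = A := by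
    rw [intervalIntegral.integral_of_le zero_le_one, ← hA1, rieszForm_eq_left hb hu hu]
  -- testing with `φ / √(D A)`, of norm at most one (for `A = 0` this is the zero function)
  have hAM : √A ≤ √D * M := by
    set c : ℝ := (√(D * A))⁻¹ with hcdef
    have hc2 : c ^ 2 = (D * A)⁻¹ := by
      rw [hcdef, inv_pow, Real.sq_sqrt (by positivity)]
    have hcC : ‖(c : ℂ)‖ ^ 2 = (D * A)⁻¹ := by rw [Complex.norm_real, Real.norm_eq_abs, sq_abs, hc2]
    have h := hM (fun x => (c : ℂ) * φ x) (hφ2.const_mul _) ?_ ?_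
    · have e : ∫ x in (0:ℝ)..1, u x * starRingEnd ℂ ((c : ℂ) * φ x) = ((c * A : ℝ) : ℂ) := by
        rw [Complex.ofReal_mul, ← hpair, ← intervalIntegral.integral_const_mul]
        congr 1
        ext x
        rw [map_mul, Complex.conj_ofReal]
        ring
      rw [e, Complex.norm_real, Real.norm_of_nonneg (by positivity), hcdef,
        Real.sqrt_mul hD0.le] at h
      have e2 : √A = √D * ((√D * √A)⁻¹ * A) := by
        have hs : √D ≠ 0 := (Real.sqrt_pos.2 hD0).ne'
        rcases hA0.eq_or_lt with hz | hp
        · simp [← hz]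
        · have hs' : √A ≠ 0 := (Real.sqrt_pos.2 hp).ne'
          field_simp
          exact Real.sq_sqrt hA0
      rw [e2]
      gcongr
    · simp only [gagliardo_const_mul]
      exact hG.const_mul _
    · rw [Real.sqrt_le_iff, one_pow, sobNormSq_const_mul, hcC]
      refine ⟨zero_le_one, ?_⟩
      calc (D * A)⁻¹ * sobNormSq α φ ≤ (D * A)⁻¹ * (D * A) := by gcongr
        _ ≤ 1 := inv_mul_le_one
  calc √(L2normSq (fracInt α u)) ≤ √((Real.Gamma α)⁻¹ ^ 2 * (rlConst α * A)) :=
        Real.sqrt_le_sqrt (L2normSq_fracInt_le h0 h1 hu)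
    _ = (Real.Gamma α)⁻¹ * √(rlConst α) * √A := by
        rw [Real.sqrt_mul (by positivity), Real.sqrt_sq hΓ.le, Real.sqrt_mul hc.le, mul_assoc]
    _ ≤ (Real.Gamma α)⁻¹ * √(rlConst α) * (√D * M) := by gcongr
    _ = _ := by ring
end
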